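/- For all integers n ≥ 2 and d ≥ 1 there exists a real constant C > 0, depending only on n and d, with the following property. Let p be a prime, k ≥ 1, K = GaloisField p k, q = p^k, and let f ∈ MvPolynomial (Fin n) K have total degree d and be such that the image of f in MvPolynomial (Fin n) (AlgebraicClosure K) under the algebra map is irreducible (f is absolutely irreducible). Then the number N of points x ∈ K^n with f(x) = 0 satisfies |N − q^{n−1}| ≤ C·q^{n−1}/√q. -/

import Mathlib

/-!
For a plane curve `F(X, Y) = 0` of degree `d` over a field with `q` elements, this is the method of
Stepanov, in the form of Bombieri and Schmidt: a polynomial `b(X, Y, X ^ q, Y ^ q)` that does not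
vanish identically on the curve can be made to vanish to high order at all points with `x` rational
at which `y ^ q` is a root of a fixed monic polynomial of degree `e < d` whose coefficients are
polynomials in `x` and `y` of bounded degree, so that there are at most about `e q` of them. For
`e = 1` this bounds the number of points with `y ^ q = y`, and for `e = d - 1` the number of points
with `y ^ q ≠ y`. As there are about `d q` points in total, both bounds are sharp up to `O(√q)`.

A hypersurface that is monic and separable in `Y` is cut with the planes spanned by the `Y`-axis and
a line `t ↦ a + t b`. If the fiber over `a` is separable, the `d` branches over `a` are power
series, and a proper factor of the section is a proper partial product of them. Irreducibility of
the hypersurface prevents such a product from becoming a polynomial of small degree along the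
generic line through `a`, hence along most lines. So most sections are absolutely irreducible plane
curves, and averaging over all `(a, b)` gives the bound for the hypersurface.

In general, a linear change of coordinates makes the polynomial monic and separable when `q` is
large in terms of `d`; for small `q` the trivial bound `q ^ n` suffices.
-/

open Polynomial
open scoped PowerSeries

namespace LangWeil

/-! ### Filtered rings -/

/-- An increasing, multiplicative, `ℤ`-indexed filtration of a commutative ring by additive
subgroups. It records degree bounds: `x ∈ 𝒮 a` means that `x` has degree at most `a`. -/
structure RingFiltration (R : Type*) [CommRing R] where
  level : ℤ → AddSubgroup R
  one_mem' : 1 ∈ level 0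
  mul_mem' : ∀ {a b : ℤ} {x y : R}, x ∈ level a → y ∈ level b → x * y ∈ level (a + b)
  mono' : ∀ {a b : ℤ}, a ≤ b → level a ≤ level b

namespace RingFiltration

variable {R : Type*} [CommRing R]

instance : CoeFun (RingFiltration R) fun _ => ℤ → AddSubgroup R := ⟨level⟩

variable (𝒮 : RingFiltration R)

lemma one_mem : 1 ∈ 𝒮 0 := 𝒮.one_mem'

variable {𝒮}

lemma mul_mem {a b : ℤ} {x y : R} (hx : x ∈ 𝒮 a) (hy : y ∈ 𝒮 b) : x * y ∈ 𝒮 (a + b) :=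
  𝒮.mul_mem' hx hy

lemma mono {a b : ℤ} {x : R} (hx : x ∈ 𝒮 a) (hab : a ≤ b) : x ∈ 𝒮 b :=
  𝒮.mono' hab hx

lemma prod_mem {ι : Type*} {s : Finset ι} {f : ι → R} {w : ι → ℤ}
    (h : ∀ i ∈ s, f i ∈ 𝒮 (w i)) : ∏ i ∈ s, f i ∈ 𝒮 (∑ i ∈ s, w i) := by
  classical
  induction s using Finset.induction with
  | empty => simpa using 𝒮.one_mem
  | insert a s ha ih =>
    rw [Finset.prod_insert ha, Finset.sum_insert ha]
    exact mul_mem (h a (by simp)) (ih fun i hi => h i (by simp [hi]))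

lemma pow_mem {a : ℤ} {x : R} (hx : x ∈ 𝒮 a) (n : ℕ) : x ^ n ∈ 𝒮 (n * a) := by
  simpa using prod_mem (s := Finset.range n) fun _ _ => hx

lemma det_mem {ι : Type*} [Fintype ι] [DecidableEq ι] {M : Matrix ι ι R} {w : ι → ℤ}
    (h : ∀ i j, M i j ∈ 𝒮 (w j)) : M.det ∈ 𝒮 (∑ j, w j) := by
  rw [Matrix.det_apply']
  refine sum_mem fun σ _ => ?_
  rw [← zsmul_eq_mul]
  exact zsmul_mem (prod_mem fun i _ => h (σ i) i) _

lemma resultant_mem {f g : R[X]} {a b : ℤ} (hf : ∀ i, f.coeff i ∈ 𝒮 a)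
    (hg : ∀ i, g.coeff i ∈ 𝒮 b) (m n : ℕ) : resultant f g m n ∈ 𝒮 (m * b + n * a) := by
  have hdet : (sylvester f g m n).det ∈
      𝒮 (∑ j : Fin (m + n), j.addCases (fun _ => b) fun _ => a) := by
    refine det_mem fun i j => ?_
    induction j using Fin.addCases <;>
      simp only [sylvester, Matrix.of_apply, Fin.addCases_left, Fin.addCases_right] <;>
      split_ifs <;> first | exact hf _ | exact hg _ | exact zero_mem _
  simpa [resultant, Fin.sum_univ_add] using hdet

section Constructions

/-- The pullback of a filtration along a ring homomorphism. -/
def comap {A : Type*} [CommRing A] (φ : A →+* R) (𝒮 : RingFiltration R) : RingFiltration A where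
  level a := (𝒮 a).comap φ.toAddMonoidHom
  one_mem' := by simpa using 𝒮.one_mem
  mul_mem' hx hy := by simpa using mul_mem hx hy
  mono' hab _ hx := mono (𝒮 := 𝒮) hx hab

variable (R) in
/-- The filtration for which every nonzero element has degree `0`. -/
def const : RingFiltration R where
  level a := if 0 ≤ a then ⊤ else ⊥
  one_mem' := by simp
  mul_mem' {a b x y} hx hy := by
    by_cases ha : 0 ≤ a <;> by_cases hb : 0 ≤ b <;> simp_all [add_nonneg]
  mono' {a b} hab := by
    by_cases ha : 0 ≤ a
    · simp [ha, ha.trans hab]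
    · simp [ha]

lemma mem_const {a : ℤ} {x : R} : x ∈ const R a ↔ x = 0 ∨ 0 ≤ a := by
  by_cases h : 0 ≤ a <;> simp [const, h]

/-- The filtration of `R⟦X⟧` induced by a filtration of `R`, with the variable of weight `w`. -/
noncomputable def powerSeries (𝒮 : RingFiltration R) (w : ℤ) : RingFiltration R⟦X⟧ where
  level a :=
    { carrier := {φ | ∀ j : ℕ, PowerSeries.coeff j φ ∈ 𝒮 (a - w * j)}
      add_mem' := fun hx hy j => by simpa using add_mem (hx j) (hy j)
      zero_mem' := fun j => by simp
      neg_mem' := fun hx j => by simpa using hx j }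
  one_mem' j := by
    rw [PowerSeries.coeff_one]
    split_ifs with h
    · simpa [h] using 𝒮.one_mem
    · exact zero_mem _
  mul_mem' {a b x y} hx hy j := by
    rw [PowerSeries.coeff_mul]
    refine sum_mem fun ij hij => ?_
    obtain rfl := Finset.HasAntidiagonal.mem_antidiagonal.1 hij
    convert mul_mem (hx ij.1) (hy ij.2) using 2
    push_cast
    ring
  mono' {a b} hab φ hφ j := mono (hφ j) (by omega)

/-- The filtration of `R[X]` induced by a filtration of `R`, with the variable of weight `w`. -/
noncomputable def polynomial (𝒮 : RingFiltration R) (w : ℤ) : RingFiltration R[X] :=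
  (𝒮.powerSeries w).comap coeToPowerSeries.ringHom

variable {w a : ℤ}

lemma mem_powerSeries {φ : R⟦X⟧} :
    φ ∈ 𝒮.powerSeries w a ↔ ∀ j : ℕ, PowerSeries.coeff j φ ∈ 𝒮 (a - w * j) := Iff.rfl

lemma mem_polynomial {p : R[X]} :
    p ∈ 𝒮.polynomial w a ↔ ∀ j : ℕ, p.coeff j ∈ 𝒮 (a - w * j) := by
  simp only [← coeff_coe]
  rfl

lemma powerSeries_C_mem {x : R} (hx : x ∈ 𝒮 a) : PowerSeries.C x ∈ 𝒮.powerSeries w a := by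
  intro j
  rw [PowerSeries.coeff_C]
  split_ifs with h
  · simpa [h] using hx
  · exact zero_mem _

lemma powerSeries_X_mem : (PowerSeries.X : R⟦X⟧) ∈ 𝒮.powerSeries w w := by
  intro j
  rw [PowerSeries.coeff_X]
  split_ifs with h
  · simpa [h] using 𝒮.one_mem
  · exact zero_mem _

lemma polynomial_C_mem {x : R} (hx : x ∈ 𝒮 a) : C x ∈ 𝒮.polynomial w a := by
  simpa [polynomial, comap] using powerSeries_C_mem hx

lemma polynomial_X_mem : (X : R[X]) ∈ 𝒮.polynomial w w := by
  simpa [polynomial, comap] using powerSeries_X_mem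

lemma divX_mem {p : R[X]} (hp : p ∈ 𝒮.polynomial w a) : p.divX ∈ 𝒮.polynomial w (a - w) := by
  rw [mem_polynomial] at hp ⊢
  intro j
  rw [coeff_divX]
  convert hp (j + 1) using 2
  push_cast
  ring

lemma eval₂_mem {A : Type*} [CommRing A] {𝒜 : RingFiltration A} {φ : A →+* R} {p : A[X]} {x : R}
    (hφ : ∀ b, ∀ y ∈ 𝒜 b, φ y ∈ 𝒮 b) (hp : p ∈ 𝒜.polynomial w a) (hx : x ∈ 𝒮 w) :
    p.eval₂ φ x ∈ 𝒮 a := by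
  rw [eval₂_eq_sum_range]
  refine sum_mem fun i _ => ?_
  convert mul_mem (hφ _ _ (mem_polynomial.1 hp i)) (pow_mem hx i) using 2
  ring

end Constructions

section ModByMonic

variable {w a : ℤ} {F p : R[X]}

lemma X_pow_modByMonic_mem (hF : F.Monic) (hFmem : F ∈ 𝒮.polynomial w (w * F.natDegree)) (i : ℕ) :
    X ^ i %ₘ F ∈ 𝒮.polynomial w (w * i) := by
  nontriviality R
  induction i with
  | zero =>
    obtain rfl | hF1 := eq_or_ne F 1
    · simp
    · have hdeg : (1 : R[X]).degree < F.degree := by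
        rw [degree_one, degree_eq_natDegree hF.ne_zero]
        exact_mod_cast (hF.natDegree_pos_of_not_isUnit fun h => hF1 (hF.isUnit_iff.1 h))
      simpa [(modByMonic_eq_self_iff hF).2 hdeg] using (𝒮.polynomial w).one_mem
  | succ i ih =>
    set r := X ^ i %ₘ F
    have hr : ∀ m, F.natDegree ≤ m → r.coeff m = 0 := fun m hm =>
      coeff_eq_zero_of_degree_lt ((degree_modByMonic_lt _ hF).trans_le
        (degree_le_natDegree.trans (by exact_mod_cast hm)))
    have hdeg : (X * r - C ((X * r).coeff F.natDegree) * F).degree < F.degree := by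
      rw [degree_eq_natDegree hF.ne_zero, degree_lt_iff_coeff_zero]
      intro m hm
      obtain rfl | hlt := hm.eq_or_lt
      · simp [hF.coeff_natDegree]
      · obtain ⟨m, rfl⟩ := Nat.exists_eq_succ_of_ne_zero (Nat.ne_zero_of_lt hlt)
        simp [coeff_X_mul, hr m (by omega), coeff_eq_zero_of_natDegree_lt hlt]
    have hmod : X ^ (i + 1) %ₘ F = X * r - C ((X * r).coeff F.natDegree) * F := by
      rw [← (modByMonic_eq_self_iff hF).2 hdeg]
      refine modByMonic_eq_of_dvd_sub hF ?_
      have hdvd : F ∣ X * (r - X ^ i) := dvd_mul_of_dvd_right (dvd_modByMonic_sub _ _) _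
      convert (dvd_mul_left F (C ((X * r).coeff F.natDegree))).sub hdvd using 1
      ring
    have hXr : X * r ∈ 𝒮.polynomial w (w * (i + 1 : ℕ)) := by
      convert mul_mem polynomial_X_mem ih using 2
      push_cast
      ring
    rw [hmod]
    refine sub_mem hXr ?_
    convert mul_mem (polynomial_C_mem (mem_polynomial.1 hXr F.natDegree)) hFmem using 2
    ring

lemma modByMonic_mem (hF : F.Monic) (hFmem : F ∈ 𝒮.polynomial w (w * F.natDegree))
    (hp : p ∈ 𝒮.polynomial w a) : p %ₘ F ∈ 𝒮.polynomial w a := by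
  have hsum : p %ₘ F = ∑ i ∈ Finset.range (p.natDegree + 1), C (p.coeff i) * (X ^ i %ₘ F) := by
    conv_lhs => rw [p.as_sum_range_C_mul_X_pow]
    simp only [← modByMonicHom_apply, map_sum, ← smul_eq_C_mul, map_smul]
  rw [hsum]
  refine sum_mem fun i _ => ?_
  have hcoeff : C (p.coeff i) ∈ 𝒮.polynomial w (a - w * i) :=
    polynomial_C_mem (mem_polynomial.1 hp i)
  simpa using mul_mem hcoeff (X_pow_modByMonic_mem hF hFmem i)

end ModByMonic

end RingFiltration

/-! ### Power series roots -/

section Hensel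

variable {R : Type*} [CommRing R]

lemma constantCoeff_eval (f : R⟦X⟧[X]) (φ : R⟦X⟧) :
    PowerSeries.constantCoeff (f.eval φ) =
      (f.map PowerSeries.constantCoeff).eval (PowerSeries.constantCoeff φ) := by
  rw [eval_map, ← eval₂_hom]

/-- One step of Newton's iteration for the equation `f(φ) = 0`, with the constant `u` in place of
the inverse of the derivative. -/
noncomputable def newtonStep (f : R⟦X⟧[X]) (u : R) (φ : R⟦X⟧) : R⟦X⟧ :=
  φ - PowerSeries.C u * f.eval φ

variable {f : R⟦X⟧[X]} {u a : R} {φ ψ : R⟦X⟧}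

lemma constantCoeff_newtonStep (ha : (f.map PowerSeries.constantCoeff).eval a = 0)
    (hφ : PowerSeries.constantCoeff φ = a) :
    PowerSeries.constantCoeff (newtonStep f u φ) = a := by
  simp [newtonStep, constantCoeff_eval, hφ, ha]

lemma X_pow_succ_dvd_newtonStep_sub
    (hu : u * (f.map PowerSeries.constantCoeff).derivative.eval a = 1)
    (hφ : PowerSeries.constantCoeff φ = a) (hψ : PowerSeries.constantCoeff ψ = a) {n : ℕ}
    (h : PowerSeries.X ^ n ∣ φ - ψ) :
    PowerSeries.X ^ (n + 1) ∣ newtonStep f u φ - newtonStep f u ψ := by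
  obtain ⟨z, hz⟩ := f.binomExpansion ψ (φ - ψ)
  rw [add_sub_cancel] at hz
  have hfactor : newtonStep f u φ - newtonStep f u ψ =
      (φ - ψ) * (1 - PowerSeries.C u * (f.derivative.eval ψ + z * (φ - ψ))) := by
    rw [newtonStep, newtonStep, hz]
    ring
  rw [hfactor, pow_succ]
  refine mul_dvd_mul h (PowerSeries.X_dvd_iff.2 ?_)
  simp [constantCoeff_eval, hφ, hψ, ← derivative_map, hu]

lemma X_pow_succ_dvd_sub_newtonStep_iterate (hφ : f.eval φ = 0)
    (hφa : PowerSeries.constantCoeff φ = a)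
    (hu : u * (f.map PowerSeries.constantCoeff).derivative.eval a = 1) (n : ℕ) :
    PowerSeries.X ^ (n + 1) ∣ φ - (newtonStep f u)^[n] (PowerSeries.C a) := by
  have ha : (f.map PowerSeries.constantCoeff).eval a = 0 := by
    rw [← hφa, ← constantCoeff_eval, hφ, map_zero]
  have hconst : ∀ n, PowerSeries.constantCoeff ((newtonStep f u)^[n] (PowerSeries.C a)) = a := by
    intro n
    induction n with
    | zero => simp
    | succ n ih => rw [Function.iterate_succ_apply', constantCoeff_newtonStep ha ih]
  have hfix : newtonStep f u φ = φ := by simp [newtonStep, hφ]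
  induction n with
  | zero => simp [PowerSeries.X_dvd_iff, hφa]
  | succ n ih =>
    rw [Function.iterate_succ_apply']
    nth_rewrite 1 [← hfix]
    exact X_pow_succ_dvd_newtonStep_sub hu hφa (hconst n) ih

lemma eq_of_eval_eq_zero_of_constantCoeff_eq (hφ : f.eval φ = 0) (hψ : f.eval ψ = 0)
    (h : PowerSeries.constantCoeff φ = PowerSeries.constantCoeff ψ)
    (hunit : IsUnit ((f.map PowerSeries.constantCoeff).derivative.eval
      (PowerSeries.constantCoeff φ))) : φ = ψ := by
  obtain ⟨u, hu⟩ := hunit.exists_left_inv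
  ext n
  have hdvd := (X_pow_succ_dvd_sub_newtonStep_iterate hφ rfl hu n).sub
    (X_pow_succ_dvd_sub_newtonStep_iterate hψ h.symm hu n)
  rw [sub_sub_sub_cancel_right, PowerSeries.X_pow_dvd_iff] at hdvd
  simpa [sub_eq_zero] using hdvd n (by omega)

lemma exists_eval_eq_zero_of_simple_root (ha : (f.map PowerSeries.constantCoeff).eval a = 0)
    (hunit : IsUnit ((f.map PowerSeries.constantCoeff).derivative.eval a)) :
    ∃ φ : R⟦X⟧, f.eval φ = 0 ∧ PowerSeries.constantCoeff φ = a := by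
  obtain ⟨u, hu⟩ := hunit.exists_left_inv
  set s : ℕ → R⟦X⟧ := fun n => (newtonStep f u)^[n] (PowerSeries.C a)
  have hsucc : ∀ n, s (n + 1) = newtonStep f u (s n) := fun n =>
    Function.iterate_succ_apply' ..
  have hconst : ∀ n, PowerSeries.constantCoeff (s n) = a := by
    intro n
    induction n with
    | zero => simp [s]
    | succ n ih => rw [hsucc, constantCoeff_newtonStep ha ih]
  have hcauchy : ∀ n k, PowerSeries.X ^ (n + 1) ∣ s (n + k) - s n := by
    intro n
    induction n with
    | zero => simp [PowerSeries.X_dvd_iff, hconst]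
    | succ n ih =>
      intro k
      rw [show n + 1 + k = (n + k) + 1 by omega, hsucc, hsucc]
      exact X_pow_succ_dvd_newtonStep_sub hu (hconst _) (hconst _) (ih k)
  set φ : R⟦X⟧ := PowerSeries.mk fun n => PowerSeries.coeff n (s n)
  have hlim : ∀ n, PowerSeries.X ^ (n + 1) ∣ φ - s n := by
    intro n
    rw [PowerSeries.X_pow_dvd_iff]
    intro m hm
    obtain ⟨k, rfl⟩ := Nat.exists_eq_add_of_le (Nat.lt_succ_iff.1 hm)
    have hcoeff := PowerSeries.X_pow_dvd_iff.1 (hcauchy m k) m (by omega)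
    rw [map_sub, sub_eq_zero] at hcoeff
    rw [map_sub, PowerSeries.coeff_mk, hcoeff, sub_self]
  have hφa : PowerSeries.constantCoeff φ = a := by
    simpa [PowerSeries.X_dvd_iff, hconst, sub_eq_zero] using hlim 0
  have hfix : newtonStep f u φ = φ := by
    ext n
    have hdvd := (X_pow_succ_dvd_newtonStep_sub hu hφa (hconst n) (hlim n)).sub (hlim (n + 1))
    rw [← hsucc, sub_sub_sub_cancel_right, PowerSeries.X_pow_dvd_iff] at hdvd
    simpa [sub_eq_zero] using hdvd n (by omega)
  have hu0 : IsUnit (PowerSeries.C u : R⟦X⟧) := (IsUnit.of_mul_eq_one _ hu).map PowerSeries.C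
  exact ⟨φ, hu0.mul_right_eq_zero.1 (by simpa [newtonStep] using hfix), hφa⟩

lemma mem_powerSeries_of_eval_eq_zero {𝒮 : RingFiltration R} {w t : ℤ} (hφ : f.eval φ = 0)
    (hφa : PowerSeries.constantCoeff φ = a)
    (hu : u * (f.map PowerSeries.constantCoeff).derivative.eval a = 1)
    (ha : a ∈ 𝒮 t)
    (hf : ∀ ψ ∈ 𝒮.powerSeries w t, PowerSeries.C u * f.eval ψ ∈ 𝒮.powerSeries w t) :
    φ ∈ 𝒮.powerSeries w t := by
  have hiter : ∀ n, (newtonStep f u)^[n] (PowerSeries.C a) ∈ 𝒮.powerSeries w t := by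
    intro n
    induction n with
    | zero => exact RingFiltration.powerSeries_C_mem ha
    | succ n ih =>
      rw [Function.iterate_succ_apply']
      exact sub_mem ih (hf _ ih)
  intro n
  have hcoeff := PowerSeries.X_pow_dvd_iff.1
    (X_pow_succ_dvd_sub_newtonStep_iterate hφ hφa hu n) n n.lt_succ_self
  rw [map_sub, sub_eq_zero] at hcoeff
  exact hcoeff ▸ hiter n n

lemma exists_prod_X_sub_C_of_simple_roots [IsDomain R] (hf : f.Monic) {s : Finset R}
    (hs : f.natDegree = s.card) (h0 : ∀ a ∈ s, (f.map PowerSeries.constantCoeff).eval a = 0)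
    (hunit : ∀ a ∈ s, IsUnit ((f.map PowerSeries.constantCoeff).derivative.eval a)) :
    ∃ Φ : R → R⟦X⟧, (∀ a ∈ s, f.eval (Φ a) = 0 ∧ PowerSeries.constantCoeff (Φ a) = a) ∧
      f = ∏ a ∈ s, (X - C (Φ a)) := by
  classical
  choose! Φ hΦ using fun a (ha : a ∈ s) =>
    exists_eval_eq_zero_of_simple_root (h0 a ha) (hunit a ha)
  refine ⟨Φ, hΦ, ?_⟩
  have hinj : Set.InjOn Φ s := fun a ha b hb hab => by
    rw [← (hΦ a ha).2, ← (hΦ b hb).2, hab]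
  have hdvd : ∏ r ∈ s.image Φ, (X - C r) ∣ f := by
    refine (Multiset.prod_X_sub_C_dvd_iff_le_roots hf.ne_zero (s.image Φ).val).2
      (Finset.val_le_iff_val_subset.2 fun r hr => ?_)
    obtain ⟨a, ha, rfl⟩ := Finset.mem_image.1 hr
    exact (mem_roots hf.ne_zero).2 (hΦ a ha).1
  rw [Finset.prod_image hinj] at hdvd
  refine (eq_of_monic_of_dvd_of_natDegree_le (monic_prod_X_sub_C _ _) hf hdvd ?_)
  rw [hs, natDegree_finsetProd_X_sub_C_eq_card]

end Hensel

section Resultant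

variable {R : Type*} [CommRing R] [IsDomain R]

lemma resultant_ne_zero_of_irreducible [IsIntegrallyClosed R] {F g : R[X]} (hF : F.Monic)
    (hirr : Irreducible F) (hg : ¬ F ∣ g) {n : ℕ} (hn : g.natDegree ≤ n) :
    resultant F g F.natDegree n ≠ 0 := by
  obtain ⟨k, rfl⟩ := Nat.exists_eq_add_of_le hn
  rw [resultant_add_right_deg _ _ _ _ _ le_rfl, hF.coeff_natDegree, one_pow, one_mul]
  intro h
  have hinj := IsFractionRing.injective R (FractionRing R)
  have hmap : resultant (F.map (algebraMap R (FractionRing R)))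
      (g.map (algebraMap R (FractionRing R))) = 0 := by
    rw [natDegree_map_eq_of_injective hinj, natDegree_map_eq_of_injective hinj,
      resultant_map_map, h, map_zero]
  refine (resultant_eq_zero_iff.1 hmap).2 ?_
  rwa [((hF.irreducible_iff_irreducible_map_fraction_map).1 hirr).coprime_iff_not_dvd,
    map_dvd_map _ hinj hF]

lemma resultant_eq_prod_eval_of_eq_prod {ι : Type*} {f : R[X]} (g : R[X]) {s : Finset ι}
    {Φ : ι → R} (hf : f = ∏ i ∈ s, (X - C (Φ i))) {m : ℕ} (hm : g.natDegree ≤ m) :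
    resultant f g f.natDegree m = ∏ i ∈ s, g.eval (Φ i) := by
  have hroots : f.roots = s.val.map Φ := by
    rw [hf, ← roots_multiset_prod_X_sub_C (s.val.map Φ), Multiset.map_map]
    rfl
  have hmonic : f.Monic := hf ▸ monic_prod_of_monic _ _ fun i _ => monic_X_sub_C _
  rw [resultant_eq_prod_eval f g m hm (hf ▸ Splits.prod fun i _ => Splits.X_sub_C _),
    hmonic.leadingCoeff, one_pow, one_mul, hroots, Multiset.map_map]
  rfl

end Resultant

/-! ### Bivariate polynomials and Frobenius -/

section Bivariate

variable {R A B : Type*} [CommRing R] [CommRing A] [Algebra R A] [CommRing B] [Algebra R B]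

lemma aevalAeval_eq_eval_map (u v : A) (p : R[X][X]) :
    aevalAeval u v p = (p.map (aeval u : R[X] →ₐ[R] A)).eval v := by
  have h : (aevalAeval u v : R[X][X] →ₐ[R] A).toRingHom =
      (evalRingHom v).comp (mapRingHom (aeval u : R[X] →ₐ[R] A)) :=
    ringHom_ext' (ringHom_ext' (by ext; simp) (by simp)) (by simp)
  exact DFunLike.congr_fun h p

lemma map_aevalAeval (ψ : A →ₐ[R] B) (u v : A) (p : R[X][X]) :
    ψ (aevalAeval u v p) = aevalAeval (ψ u) (ψ v) p :=
  DFunLike.congr_fun (show ψ.comp (aevalAeval u v) = aevalAeval (ψ u) (ψ v) from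
    algHom_ext' (by ext; simp) (by simp)) p

lemma aevalAeval_C_X_X (p : R[X][X]) : aevalAeval (C X : R[X][X]) X p = p :=
  DFunLike.congr_fun (show aevalAeval (C X : R[X][X]) X = AlgHom.id R _ from
    algHom_ext' (by ext; simp) (by simp)) p

lemma aevalAeval_map_mapRingHom [Algebra A B] [IsScalarTower R A B] (u v : B) (p : R[X][X]) :
    aevalAeval u v (p.map (mapRingHom (algebraMap R A))) = aevalAeval u v p :=
  DFunLike.congr_fun (show ((aevalAeval u v : A[X][X] →ₐ[A] B).restrictScalars R).comp
      (mapAlgHom (mapAlgHom (Algebra.ofId R A))) = aevalAeval u v from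
    algHom_ext' (by ext; simp) (by simp)) p

/-- The filtration of `R[X][Y]` by total degree. -/
noncomputable abbrev totalDegreeFiltration (R : Type*) [CommRing R] : RingFiltration R[X][X] :=
  ((RingFiltration.const R).polynomial 1).polynomial 1

lemma mem_totalDegreeFiltration {p : R[X][X]} {T : ℤ} :
    p ∈ totalDegreeFiltration R T ↔ ∀ i j : ℕ, (p.coeff j).coeff i ≠ 0 → (i + j : ℤ) ≤ T := by
  simp only [RingFiltration.mem_polynomial, RingFiltration.mem_const, or_iff_not_imp_left]
  rw [forall_comm]
  exact forall₃_congr fun i j _ => by omega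

lemma mem_polynomial_const_iff_natDegree_le {p : R[X]} {n : ℕ} :
    p ∈ (RingFiltration.const R).polynomial 1 n ↔ p.natDegree ≤ n := by
  simp only [RingFiltration.mem_polynomial, RingFiltration.mem_const,
    natDegree_le_iff_coeff_eq_zero, or_iff_not_imp_right]
  exact forall_congr' fun j => by rw [show ¬(0 ≤ (n : ℤ) - 1 * j) ↔ n < j by omega]

lemma C_C_mem_totalDegreeFiltration (a : R) : C (C a) ∈ totalDegreeFiltration R 0 :=
  RingFiltration.polynomial_C_mem
    (RingFiltration.polynomial_C_mem (RingFiltration.mem_const.2 (Or.inr le_rfl)))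

lemma C_X_mem_totalDegreeFiltration : C X ∈ totalDegreeFiltration R 1 :=
  RingFiltration.polynomial_C_mem RingFiltration.polynomial_X_mem

lemma X_mem_totalDegreeFiltration : X ∈ totalDegreeFiltration R 1 :=
  RingFiltration.polynomial_X_mem

lemma aevalAeval_mem {𝒜 : RingFiltration A} (ha : ∀ a : R, algebraMap R A a ∈ 𝒜 0) {u v : A}
    (hu : u ∈ 𝒜 1) (hv : v ∈ 𝒜 1) {p : R[X][X]} {T : ℤ} (hp : p ∈ totalDegreeFiltration R T) :
    aevalAeval u v p ∈ 𝒜 T := by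
  rw [aevalAeval_eq_eval_map, eval_map]
  refine RingFiltration.eval₂_mem (fun b y hy => RingFiltration.eval₂_mem ?_ hy hu) hp hv
  rintro b y hy
  obtain rfl | hb := RingFiltration.mem_const.1 hy
  · simp
  · exact RingFiltration.mono (ha y) hb

lemma derivative_mem_totalDegreeFiltration {p : R[X][X]} {T : ℤ}
    (hp : p ∈ totalDegreeFiltration R T) : derivative p ∈ totalDegreeFiltration R (T - 1) := by
  rw [mem_totalDegreeFiltration] at hp ⊢
  intro i j hne
  rw [coeff_derivative, ← Nat.cast_succ, ← C_eq_natCast, coeff_mul_C] at hne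
  have := hp i (j + 1) (left_ne_zero_of_mul hne)
  push_cast at this
  omega

end Bivariate

section Frobenius

variable {K A : Type*} [Field K] [Finite K] [CommRing A] [Algebra K A]

lemma aevalAeval_pow_natCard (u v : A) (p : K[X][X]) :
    aevalAeval u v p ^ Nat.card K = aevalAeval (u ^ Nat.card K) (v ^ Nat.card K) p := by
  cases nonempty_fintype K
  rw [Nat.card_eq_fintype_card]
  exact map_aevalAeval (FiniteField.frobeniusAlgHom K A) u v p

lemma sub_pow_natCard (u v : A) : (u - v) ^ Nat.card K = u ^ Nat.card K - v ^ Nat.card K := by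
  cases nonempty_fintype K
  rw [Nat.card_eq_fintype_card]
  exact map_sub (FiniteField.frobeniusAlgHom K A) u v

lemma X_pow_natCard_dvd_sub (φ : A⟦X⟧) :
    PowerSeries.X ^ Nat.card K ∣
      φ ^ Nat.card K - PowerSeries.C (PowerSeries.constantCoeff φ ^ Nat.card K) := by
  rw [map_pow, ← sub_pow_natCard]
  exact pow_dvd_pow_of_dvd (PowerSeries.X_dvd_iff.2 (by simp)) _

end Frobenius

/-! ### Hasse derivatives along a plane curve -/

section UniversalRoot

variable {A : Type*} [CommRing A]

/-- For `G(t, w)` with linear coefficient `δ = G_w(0, 0)`, the equation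
`G(δ² t, δ w) = G(0, 0)` divided by `δ²`. Its linear coefficient in `w` at `t = 0` is `1`, so that
it is solvable without inverting `δ`. -/
noncomputable def rescaledEquation (G : A[X][X]) : A⟦X⟧[X] :=
  let δ := PowerSeries.C ((G.coeff 1).coeff 0)
  let τ := δ ^ 2 * PowerSeries.X
  C (PowerSeries.X * aeval τ (G.coeff 0).divX) +
    X * (1 + C (δ * PowerSeries.X * aeval τ (G.coeff 1).divX)) +
    X ^ 2 * ((G.divX.divX).map (aeval τ : A[X] →ₐ[A] A⟦X⟧)).comp (C δ * X)

variable (G : A[X][X])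

lemma sq_mul_eval_rescaledEquation (w : A⟦X⟧) :
    PowerSeries.C ((G.coeff 1).coeff 0) ^ 2 * (rescaledEquation G).eval w =
      aevalAeval (PowerSeries.C ((G.coeff 1).coeff 0) ^ 2 * PowerSeries.X)
        (PowerSeries.C ((G.coeff 1).coeff 0) * w) G - PowerSeries.C ((G.coeff 0).coeff 0) := by
  set δ := PowerSeries.C ((G.coeff 1).coeff 0) with hδ
  have hG : ∀ u v : A⟦X⟧, aevalAeval u v G =
      ((G.divX.divX).map (aeval u : A[X] →ₐ[A] A⟦X⟧)).eval v * v ^ 2 +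
        (aeval u (G.coeff 1).divX * u + δ) * v +
        (aeval u (G.coeff 0).divX * u + PowerSeries.C ((G.coeff 0).coeff 0)) := by
    intro u v
    rw [aevalAeval_eq_eval_map]
    nth_rewrite 1 [← divX_mul_X_add G, ← divX_mul_X_add G.divX, coeff_divX,
      ← divX_mul_X_add (G.coeff 1), ← divX_mul_X_add (G.coeff 0)]
    simp [← hδ]
    ring
  simp only [hG, rescaledEquation, ← hδ]
  simp [eval_comp]
  ring

lemma X_sq_dvd_map_rescaledEquation_sub :
    X ^ 2 ∣ (rescaledEquation G).map PowerSeries.constantCoeff - X := by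
  simp [rescaledEquation]

lemma eval_rescaledEquation_mem {𝒜 : RingFiltration A} {d : ℤ}
    (hG : G ∈ (𝒜.polynomial 1).polynomial 1 d) {w : A⟦X⟧} (hw : w ∈ 𝒜.powerSeries (-2 * d) (-d)) :
    (rescaledEquation G).eval w ∈ 𝒜.powerSeries (-2 * d) (-d) := by
  set ℬ := 𝒜.powerSeries (-2 * d)
  have hcoeff : ∀ j : ℕ, G.coeff j ∈ 𝒜.polynomial 1 (d - 1 * j) :=
    RingFiltration.mem_polynomial.1 hG
  have hδ : PowerSeries.C ((G.coeff 1).coeff 0) ∈ ℬ (d - 1) :=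
    RingFiltration.powerSeries_C_mem
      (by simpa using RingFiltration.mem_polynomial.1 (hcoeff 1) 0)
  have hX : (PowerSeries.X : A⟦X⟧) ∈ ℬ (-2 * d) := RingFiltration.powerSeries_X_mem
  have hτ : PowerSeries.C ((G.coeff 1).coeff 0) ^ 2 * PowerSeries.X ∈ ℬ 1 :=
    RingFiltration.mono (RingFiltration.mul_mem (RingFiltration.pow_mem hδ 2) hX)
      (by push_cast; omega)
  set τ := PowerSeries.C ((G.coeff 1).coeff 0) ^ 2 * PowerSeries.X
  have haeval : ∀ b, ∀ p ∈ 𝒜.polynomial 1 b, aeval τ p ∈ ℬ b := fun b p hp =>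
    RingFiltration.eval₂_mem (fun _ _ hy => RingFiltration.powerSeries_C_mem hy) hp hτ
  have h0 := haeval _ _ (RingFiltration.divX_mem (hcoeff 0))
  have h1 := haeval _ _ (RingFiltration.divX_mem (hcoeff 1))
  have h2 : ((G.divX.divX).map (aeval τ : A[X] →ₐ[A] A⟦X⟧)).eval
      (PowerSeries.C ((G.coeff 1).coeff 0) * w) ∈ ℬ (d - 1 - 1) := by
    rw [eval_map]
    exact RingFiltration.eval₂_mem haeval (RingFiltration.divX_mem (RingFiltration.divX_mem hG))
      (RingFiltration.mono (RingFiltration.mul_mem hδ hw) (by omega))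
  have heval : (rescaledEquation G).eval w =
      PowerSeries.X * aeval τ (G.coeff 0).divX +
        (w + w * (PowerSeries.C ((G.coeff 1).coeff 0) * PowerSeries.X *
          aeval τ (G.coeff 1).divX)) +
        w ^ 2 * ((G.divX.divX).map (aeval τ : A[X] →ₐ[A] A⟦X⟧)).eval
          (PowerSeries.C ((G.coeff 1).coeff 0) * w) := by
    simp [rescaledEquation, eval_comp, τ, mul_add]
  rw [heval]
  refine add_mem (add_mem ?_ (add_mem hw ?_)) ?_
  · exact RingFiltration.mono (RingFiltration.mul_mem hX h0) (by push_cast; omega)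
  · exact RingFiltration.mono (RingFiltration.mul_mem hw
      (RingFiltration.mul_mem (RingFiltration.mul_mem hδ hX) h1)) (by push_cast; omega)
  · exact RingFiltration.mono (RingFiltration.mul_mem (RingFiltration.pow_mem hw 2) h2)
      (by push_cast; omega)

lemma exists_aevalAeval_eq_C {𝒜 : RingFiltration A} {d : ℤ}
    (hG : G ∈ (𝒜.polynomial 1).polynomial 1 d) :
    ∃ w ∈ 𝒜.powerSeries (-2 * d) (-d), PowerSeries.constantCoeff w = 0 ∧
      aevalAeval (PowerSeries.C ((G.coeff 1).coeff 0) ^ 2 * PowerSeries.X)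
        (PowerSeries.C ((G.coeff 1).coeff 0) * w) G = PowerSeries.C ((G.coeff 0).coeff 0) := by
  obtain ⟨Q, hQ⟩ := X_sq_dvd_map_rescaledEquation_sub G
  rw [sub_eq_iff_eq_add] at hQ
  have hroot : ((rescaledEquation G).map PowerSeries.constantCoeff).eval 0 = 0 := by simp [hQ]
  have hderiv : ((rescaledEquation G).map PowerSeries.constantCoeff).derivative.eval 0 = 1 := by
    simp [hQ]
  obtain ⟨w, hw, hw0⟩ := exists_eval_eq_zero_of_simple_root hroot (hderiv ▸ isUnit_one)
  refine ⟨w, mem_powerSeries_of_eval_eq_zero (u := 1) hw hw0 (by rw [hderiv, one_mul])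
    (zero_mem _) ?_, hw0, ?_⟩
  · simpa using fun ψ hψ => eval_rescaledEquation_mem G hG hψ
  · rw [← sub_eq_zero, ← sq_mul_eval_rescaledEquation, hw, mul_zero]

end UniversalRoot

section TaylorShift

variable {R A : Type*} [CommRing R] [CommRing A] [Algebra R A]

/-- The Taylor expansion `F(x₀ + t, y₀ + w)` of `F(x, y)`, as a polynomial in `t` and `w`. -/
noncomputable def taylorShift (x₀ y₀ : A) (F : R[X][X]) : A[X][X] :=
  aevalAeval (C (C x₀) + C X) (C (C y₀) + X) F

variable (x₀ y₀ : A) (F : R[X][X])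

lemma aevalAeval_taylorShift {B : Type*} [CommRing B] [Algebra R B] [Algebra A B]
    [IsScalarTower R A B] (u v : B) :
    aevalAeval u v (taylorShift x₀ y₀ F) =
      aevalAeval (algebraMap A B x₀ + u) (algebraMap A B y₀ + v) F := by
  have := map_aevalAeval ((aevalAeval u v : A[X][X] →ₐ[A] B).restrictScalars R)
    (C (C x₀) + C X) (C (C y₀) + X) F
  simpa [taylorShift] using this

lemma coeff_coeff_zero_taylorShift (j : ℕ) : ((taylorShift x₀ y₀ F).coeff j).coeff 0 =
    (taylor y₀ (F.map (aeval x₀ : R[X] →ₐ[R] A).toRingHom)).coeff j := by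
  have hring : ((mapRingHom (evalRingHom 0)).comp (aevalAeval (C (C x₀) + C X)
      (C (C y₀) + X) : R[X][X] →ₐ[R] A[X][X]).toRingHom) =
      (taylorAlgHom y₀).toRingHom.comp (mapRingHom (aeval x₀ : R[X] →ₐ[R] A).toRingHom) :=
    ringHom_ext' (ringHom_ext' (by ext; simp [Polynomial.algebraMap_apply]) (by simp))
      (by simp [add_comm])
  have := congr(coeff ($hring F) j)
  simpa [taylorShift, coeff_zero_eq_eval_zero] using this

lemma coeff_zero_coeff_zero_taylorShift :
    ((taylorShift x₀ y₀ F).coeff 0).coeff 0 = aevalAeval x₀ y₀ F := by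
  rw [coeff_coeff_zero_taylorShift, taylor_coeff_zero, aevalAeval_eq_eval_map]
  rfl

lemma coeff_one_coeff_zero_taylorShift :
    ((taylorShift x₀ y₀ F).coeff 1).coeff 0 = aevalAeval x₀ y₀ (derivative F) := by
  rw [coeff_coeff_zero_taylorShift, taylor_coeff_one, derivative_map, aevalAeval_eq_eval_map]
  rfl

variable {x₀ y₀ F}

lemma taylorShift_mem {𝒜 : RingFiltration A} {d : ℤ} (ha : ∀ a : R, algebraMap R A a ∈ 𝒜 0)
    (hx : x₀ ∈ 𝒜 1) (hy : y₀ ∈ 𝒜 1) (hF : F ∈ totalDegreeFiltration R d) :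
    taylorShift x₀ y₀ F ∈ (𝒜.polynomial 1).polynomial 1 d :=
  aevalAeval_mem
    (fun a => RingFiltration.polynomial_C_mem (RingFiltration.polynomial_C_mem (ha a)))
    (add_mem (RingFiltration.polynomial_C_mem (RingFiltration.polynomial_C_mem hx))
      (RingFiltration.polynomial_C_mem RingFiltration.polynomial_X_mem))
    (add_mem (RingFiltration.polynomial_C_mem (RingFiltration.polynomial_C_mem hy))
      RingFiltration.polynomial_X_mem) hF

end TaylorShift

section HasseDerivative

variable {R : Type*} [CommRing R] {F : R[X][X]} {d : ℤ}

variable (F) in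
/-- The first coordinate `X + F_Y(X, Y)² t` of the formal arc through the generic point `(X, Y)`
of the plane, with parameter `t`, along which `F` is constant. -/
noncomputable def genericAbscissa : R[X][X]⟦X⟧ :=
  PowerSeries.C (C X) + PowerSeries.C (derivative F) ^ 2 * PowerSeries.X

lemma genericAbscissa_mem (hF : F ∈ totalDegreeFiltration R d) :
    genericAbscissa F ∈ (totalDegreeFiltration R).powerSeries (-2 * d) 1 :=
  add_mem (RingFiltration.powerSeries_C_mem C_X_mem_totalDegreeFiltration)
    (RingFiltration.mono (RingFiltration.mul_mem (RingFiltration.pow_mem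
      (RingFiltration.powerSeries_C_mem (derivative_mem_totalDegreeFiltration hF)) 2)
      RingFiltration.powerSeries_X_mem) (by push_cast; omega))

lemma exists_genericOrdinate (hF : F ∈ totalDegreeFiltration R d) :
    ∃ V ∈ (totalDegreeFiltration R).powerSeries (-2 * d) 1, PowerSeries.constantCoeff V = X ∧
      aevalAeval (genericAbscissa F) V F = PowerSeries.C F := by
  have hG := taylorShift_mem C_C_mem_totalDegreeFiltration C_X_mem_totalDegreeFiltration
    X_mem_totalDegreeFiltration hF
  obtain ⟨w, hw, hw0, hroot⟩ := exists_aevalAeval_eq_C _ hG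
  rw [coeff_zero_coeff_zero_taylorShift, coeff_one_coeff_zero_taylorShift, aevalAeval_C_X_X,
    aevalAeval_C_X_X, aevalAeval_taylorShift] at hroot
  refine ⟨PowerSeries.C X + PowerSeries.C (derivative F) * w, ?_, by simp [hw0], hroot⟩
  exact add_mem (RingFiltration.powerSeries_C_mem X_mem_totalDegreeFiltration)
    (RingFiltration.mono (RingFiltration.mul_mem (RingFiltration.powerSeries_C_mem
      (derivative_mem_totalDegreeFiltration hF)) hw) (by omega))

lemma constantCoeff_aevalAeval (u v : R⟦X⟧) (p : R[X][X]) :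
    PowerSeries.constantCoeff (aevalAeval u v p) =
      p.evalEval (PowerSeries.constantCoeff u) (PowerSeries.constantCoeff v) :=
  DFunLike.congr_fun (show PowerSeries.constantCoeff.comp (aevalAeval u v).toRingHom =
      evalEvalRingHom (PowerSeries.constantCoeff u) (PowerSeries.constantCoeff v) from
    ringHom_ext' (ringHom_ext' (by ext; simp) (by simp)) (by simp)) p

lemma eq_of_aevalAeval_eq_zero {u φ ψ : R⟦X⟧} (hφ : aevalAeval u φ F = 0)
    (hψ : aevalAeval u ψ F = 0) (h : PowerSeries.constantCoeff φ = PowerSeries.constantCoeff ψ)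
    (hunit : IsUnit ((derivative F).evalEval (PowerSeries.constantCoeff u)
      (PowerSeries.constantCoeff φ))) : φ = ψ := by
  rw [aevalAeval_eq_eval_map] at hφ hψ
  refine eq_of_eval_eq_zero_of_constantCoeff_eq hφ hψ h ?_
  rwa [derivative_map, derivative_map, ← constantCoeff_eval, ← aevalAeval_eq_eval_map,
    constantCoeff_aevalAeval]

lemma rescale_C (a r : R) : PowerSeries.rescale a (PowerSeries.C r) = PowerSeries.C r := by
  rw [← PowerSeries.coe_rescaleAlgHom]
  exact (PowerSeries.rescaleAlgHom a).commutes r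

lemma constantCoeff_rescale (a : R) (φ : R⟦X⟧) :
    PowerSeries.constantCoeff (PowerSeries.rescale a φ) = PowerSeries.constantCoeff φ := by
  rw [← PowerSeries.coeff_zero_eq_constantCoeff_apply, PowerSeries.coeff_rescale, pow_zero,
    one_mul, PowerSeries.coeff_zero_eq_constantCoeff_apply]

lemma map_evalEvalRingHom_genericAbscissa (x y : R) :
    PowerSeries.map (evalEvalRingHom x y) (genericAbscissa F) =
      PowerSeries.rescale ((derivative F).evalEval x y ^ 2)
        (PowerSeries.C x + PowerSeries.X) := by
  simp [genericAbscissa, PowerSeries.rescale_X, rescale_C]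

lemma map_evalEvalRingHom_genericOrdinate {V : R[X][X]⟦X⟧}
    (hV0 : PowerSeries.constantCoeff V = X)
    (hV : aevalAeval (genericAbscissa F) V F = PowerSeries.C F) {x : R} {φ : R⟦X⟧}
    (hφ : aevalAeval (PowerSeries.C x + PowerSeries.X) φ F = 0)
    (hunit : IsUnit ((derivative F).evalEval x (PowerSeries.constantCoeff φ))) :
    PowerSeries.map (evalEvalRingHom x (PowerSeries.constantCoeff φ)) V =
      PowerSeries.rescale ((derivative F).evalEval x (PowerSeries.constantCoeff φ) ^ 2) φ := by
  set y := PowerSeries.constantCoeff φ with hy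
  set ψ : R[X][X]⟦X⟧ →ₐ[R] R⟦X⟧ := PowerSeries.mapAlgHom (aevalAeval x y)
  have hψ : ∀ W, PowerSeries.map (evalEvalRingHom x y) W = ψ W := fun W => by
    ext n
    rw [PowerSeries.mapAlgHom_apply, PowerSeries.coeff_map, PowerSeries.coeff_map,
      coe_evalEvalRingHom, ← coe_aevalAeval_eq_evalEval]
    rfl
  have hF0 : F.evalEval x y = 0 := by
    simpa only [constantCoeff_aevalAeval, map_add, map_zero, PowerSeries.constantCoeff_C,
      PowerSeries.constantCoeff_X, add_zero] using congr(PowerSeries.constantCoeff $hφ)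
  have hV0' : PowerSeries.constantCoeff (PowerSeries.map (evalEvalRingHom x y) V) = y := by
    rw [← PowerSeries.coeff_zero_eq_constantCoeff_apply, PowerSeries.coeff_map,
      PowerSeries.coeff_zero_eq_constantCoeff_apply, hV0, coe_evalEvalRingHom, evalEval_X]
  have hV0φ := hV0'.trans (hy.trans (constantCoeff_rescale
    ((derivative F).evalEval x y ^ 2) φ).symm)
  refine eq_of_aevalAeval_eq_zero (F := F)
    (u := PowerSeries.map (evalEvalRingHom x y) (genericAbscissa F)) ?_ ?_ hV0φ ?_
  · rw [hψ, hψ, ← map_aevalAeval, hV, ← hψ]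
    simp [hF0]
  · rw [map_evalEvalRingHom_genericAbscissa, ← PowerSeries.coe_rescaleAlgHom]
    simp only [RingHom.coe_coe]
    rw [← map_aevalAeval, hφ, map_zero]
  · rw [hV0', map_evalEvalRingHom_genericAbscissa, constantCoeff_rescale]
    simpa using hunit

-- `P l i j (x, y) / F_Y(x, y) ^ (2 * l)` is the `l`-th Hasse derivative of `X ^ i * Y ^ j` with
-- respect to the first coordinate along the curve `F = 0`.
lemma exists_hasse_numerator (hF : F ∈ totalDegreeFiltration R d) :
    ∃ P : ℕ → ℕ → ℕ → R[X][X],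
      (∀ l i j : ℕ, P l i j ∈ totalDegreeFiltration R (i + j + 2 * d * l)) ∧
      ∀ (x : R) (φ : R⟦X⟧), aevalAeval (PowerSeries.C x + PowerSeries.X) φ F = 0 →
        IsUnit ((derivative F).evalEval x (PowerSeries.constantCoeff φ)) → ∀ l i j,
        PowerSeries.coeff l ((PowerSeries.C x + PowerSeries.X) ^ i * φ ^ j) *
          (derivative F).evalEval x (PowerSeries.constantCoeff φ) ^ (2 * l) =
        (P l i j).evalEval x (PowerSeries.constantCoeff φ) := by
  obtain ⟨V, hV, hV0, hroot⟩ := exists_genericOrdinate hF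
  refine ⟨fun l i j => PowerSeries.coeff l (genericAbscissa F ^ i * V ^ j), fun l i j => ?_,
    fun x φ hφ hunit l i j => ?_⟩
  · have := RingFiltration.mem_powerSeries.1 (RingFiltration.mul_mem
      (RingFiltration.pow_mem (genericAbscissa_mem hF) i) (RingFiltration.pow_mem hV j)) l
    exact RingFiltration.mono this (by linarith)
  · set ρ := PowerSeries.rescale
      ((derivative F).evalEval x (PowerSeries.constantCoeff φ) ^ 2)
    calc _ = PowerSeries.coeff l (ρ ((PowerSeries.C x + PowerSeries.X) ^ i * φ ^ j)) := by
          rw [PowerSeries.coeff_rescale, pow_mul, mul_comm]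
      _ = PowerSeries.coeff l (PowerSeries.map (evalEvalRingHom x (PowerSeries.constantCoeff φ))
            (genericAbscissa F ^ i * V ^ j)) := by
          simp only [map_mul, map_pow, map_evalEvalRingHom_genericAbscissa,
            map_evalEvalRingHom_genericOrdinate hV0 hroot hφ hunit, ρ]
      _ = _ := by rw [PowerSeries.coeff_map, coe_evalEvalRingHom]

end HasseDerivative

/-! ### Substitution of Frobenius powers -/

section Elimination

lemma dvd_map_C_resultant {R S : Type*} [CommRing R] [CommRing S] (Θ : R[X] →+* S) (f g : R[X])
    {m n : ℕ} (hm : m ≠ 0) (hf : f.natDegree ≤ m) (hg : g.natDegree ≤ n) (x : S)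
    (hxf : x ∣ Θ f) (hxg : x ∣ Θ g) : x ∣ Θ (C (resultant f g m n)) := by
  obtain ⟨P, Q, -, -, hPQ⟩ := exists_mul_add_mul_eq_C_resultant f g hf hg (Or.inl hm)
  rw [← hPQ, map_add, map_mul, map_mul]
  exact dvd_add (hxf.mul_right _) (hxg.mul_right _)

lemma eq_zero_of_sum_mul_X_pow_eq_zero {R : Type*} [CommRing R] {q N : ℕ} {g : ℕ → R[X]}
    (hg : ∀ k, (g k).degree < q) (hsum : ∑ k ∈ Finset.range N, g k * (X ^ q) ^ k = 0) :
    ∀ k < N, g k = 0 := by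
  induction N generalizing g with
  | zero => simp
  | succ N ih =>
    have hfactor : (∑ k ∈ Finset.range N, g (k + 1) * (X ^ q) ^ k) * X ^ q + g 0 = 0 := by
      rw [← hsum, Finset.sum_range_succ', Finset.sum_mul]
      simp [pow_succ, mul_assoc]
    have hdvd : X ^ q ∣ g 0 := (dvd_add_right (dvd_mul_left _ _)).1 (hfactor ▸ dvd_zero _)
    have h0 : g 0 = 0 := by
      ext i
      by_cases hi : i < q
      · exact X_pow_dvd_iff.1 hdvd i hi
      · exact coeff_eq_zero_of_degree_lt ((hg 0).trans_le (by exact_mod_cast not_lt.1 hi))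
    rw [h0, add_zero] at hfactor
    have hsum' := (isRegular_X_pow q).right.eq_iff.1 (hfactor.trans (zero_mul _).symm)
    rintro (_ | k) hk
    · exact h0
    · exact ih (fun k => hg (k + 1)) hsum' k (by omega)

end Elimination

section FrobeniusSubstitution

variable {L : Type*} [Field L] {F : L[X][X]} {q : ℕ}

lemma dvd_coeff_of_dvd_eval (hF : F.Monic) (hFdeg : F ∈ totalDegreeFiltration L F.natDegree)
    {N : ℕ} (hN : N < q) {ρ : L[X][X][X]} (hρ : ∀ n, ρ.coeff n ∈ totalDegreeFiltration L N)
    (hdvd : F ∣ ρ.eval (C X ^ q)) (n : ℕ) : F ∣ ρ.coeff n := by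
  by_cases hn : n < ρ.natDegree + 1
  swap
  · rw [coeff_eq_zero_of_natDegree_lt (by omega)]
    exact dvd_zero _
  have hmem : ∀ n, ρ.coeff n %ₘ F ∈ totalDegreeFiltration L N := fun n =>
    RingFiltration.modByMonic_mem hF (by simpa using hFdeg) (hρ n)
  have hsum : ∑ n ∈ Finset.range (ρ.natDegree + 1),
      ((X : L[X]) ^ q) ^ n • modByMonicHom F (ρ.coeff n) = 0 := by
    simp only [← map_smul, ← map_sum]
    rw [modByMonicHom, LinearMap.coe_mk, AddHom.coe_mk, modByMonic_eq_zero_iff_dvd hF]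
    simpa [eval_eq_sum_range, smul_eq_C_mul, mul_comm] using hdvd
  rw [← modByMonic_eq_zero_iff_dvd hF]
  ext1 j
  refine eq_zero_of_sum_mul_X_pow_eq_zero (q := q) (g := fun n => (ρ.coeff n %ₘ F).coeff j)
    (fun n => ?_) ?_ n (by omega)
  · have hj := RingFiltration.mono (RingFiltration.mem_polynomial.1 (hmem n) j)
      (show (N : ℤ) - 1 * j ≤ N by omega)
    exact degree_le_natDegree.trans_lt
      (by exact_mod_cast (mem_polynomial_const_iff_natDegree_le.1 hj).trans_lt hN)
  · have := congr(coeff $hsum j)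
    simpa [finsetSum_coeff, modByMonicHom, mul_comm] using this

lemma exists_evalEval_eq_zero_and_ne_zero [IsAlgClosed L] (hF : F.Monic) (hirr : Irreducible F)
    {g : L[X][X]} (hg : ¬ F ∣ g) : ∃ x y, F.evalEval x y = 0 ∧ g.evalEval x y ≠ 0 := by
  have hpos : F.natDegree ≠ 0 := fun h => hirr.not_isUnit (by
    rw [hF.natDegree_eq_zero.1 h]; exact isUnit_one)
  have hres := resultant_ne_zero_of_irreducible hF hirr hg le_rfl
  obtain ⟨x, hx⟩ : ∃ x, (resultant F g F.natDegree g.natDegree).eval x ≠ 0 := by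
    by_contra! h
    exact hres (Polynomial.funext (by simpa using h))
  obtain ⟨y, hy⟩ : ∃ y, F.evalEval x y = 0 := by
    obtain ⟨y, hy⟩ := IsAlgClosed.exists_root (F.map (evalRingHom x)) (by
      rw [hF.degree_map, degree_eq_natDegree hF.ne_zero]
      exact_mod_cast hpos)
    exact ⟨y, by rwa [← map_evalRingHom_eval]⟩
  refine ⟨x, y, hy, fun hgxy => hx ?_⟩
  have := dvd_map_C_resultant (evalEvalRingHom x y) F g hpos le_rfl le_rfl 0
    (by simp [hy]) (by simp [hgxy])
  simpa using zero_dvd_iff.1 this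

/-- The polynomial `b(X, Y, X ^ q, Y ^ q)` for `b(X, Y, Z, W)`, where `Z` is the inner and `W` the
outer variable of `b`. -/
noncomputable def frobeniusSubst (q : ℕ) (b : L[X][X][X][X]) : L[X][X] :=
  b.evalEval (C X ^ q) (X ^ q)

/-- `F(Z, W)` as a polynomial over `L[X][Y]`. -/
noncomputable def baseChangeBivariate (F : L[X][X]) : L[X][X][X][X] :=
  F.map (mapRingHom (algebraMap L L[X][X]))

variable (F q) in
lemma frobeniusSubst_baseChangeBivariate :
    frobeniusSubst q (baseChangeBivariate F) = aevalAeval (C X ^ q : L[X][X]) (X ^ q) F := by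
  rw [← aevalAeval_map_mapRingHom (A := L[X][X]), frobeniusSubst, coe_aevalAeval_eq_evalEval]
  rfl

variable (F) in
lemma baseChangeBivariate_coeff_mem (j : ℕ) :
    (baseChangeBivariate F).coeff j ∈ (totalDegreeFiltration L).polynomial 0 0 := by
  refine RingFiltration.mem_polynomial.2 fun i => ?_
  simpa [baseChangeBivariate, coeff_map] using C_C_mem_totalDegreeFiltration ((F.coeff j).coeff i)

variable (F) in
lemma baseChangeBivariate_map_evalEvalRingHom (x y : L) :
    (baseChangeBivariate F).map (mapRingHom (evalEvalRingHom x y)) = F := by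
  have : (evalEvalRingHom x y).comp (algebraMap L L[X][X]) = RingHom.id L := by
    ext a; simp
  rw [baseChangeBivariate, Polynomial.map_map, mapRingHom_comp, this, mapRingHom_id,
    Polynomial.map_id]

lemma dvd_eval_resultant_baseChangeBivariate (hF : F.natDegree ≠ 0)
    (hfrob : F ∣ aevalAeval (C X ^ q : L[X][X]) (X ^ q) F) {b : L[X][X][X][X]} {n : ℕ}
    (hb : b.natDegree ≤ n) (hdvd : F ∣ frobeniusSubst q b) :
    F ∣ (resultant (R := L[X][X][X]) (baseChangeBivariate F) b F.natDegree n).eval (C X ^ q) := by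
  have h := dvd_map_C_resultant (R := L[X][X][X])
    (evalEvalRingHom (C X ^ q : L[X][X]) (X ^ q : L[X][X])) (baseChangeBivariate F) b hF
    natDegree_map_le hb F (hfrob.trans (frobeniusSubst_baseChangeBivariate F q).symm.dvd) hdvd
  rwa [coe_evalEvalRingHom, evalEval_C] at h

lemma resultant_baseChangeBivariate_mem {b : L[X][X][X][X]} {m n N : ℕ}
    (hb : ∀ l k, (b.coeff l).coeff k ∈ totalDegreeFiltration L N) (k : ℕ) :
    (resultant (R := L[X][X][X]) (baseChangeBivariate F) b m n).coeff k ∈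
      totalDegreeFiltration L (m * N : ℕ) := by
  have h := RingFiltration.resultant_mem (𝒮 := (totalDegreeFiltration L).polynomial 0) (b := N)
    (baseChangeBivariate_coeff_mem F)
    (fun l => RingFiltration.mem_polynomial.2 fun k => by simpa using hb l k) m n
  simpa using RingFiltration.mem_polynomial.1 h k

-- If `F` divided `b(X, Y, X ^ q, Y ^ q)`, then it would divide the resultant `ρ` of `F(Z, W)` and
-- `b` with respect to `W` at `Z = X ^ q`, and hence all coefficients of `ρ`, whose degrees are less
-- than `q`. But `ρ` is nonzero at any point of the curve where some coefficient of `b` is nonzero.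
theorem not_dvd_frobeniusSubst [IsAlgClosed L] (hF : F.Monic) (hirr : Irreducible F)
    (hFdeg : F ∈ totalDegreeFiltration L F.natDegree)
    (hfrob : F ∣ aevalAeval (C X ^ q : L[X][X]) (X ^ q) F) {b : L[X][X][X][X]} (hb : b ≠ 0)
    (hW : b.degree < F.natDegree) (hY : ∀ l k, ((b.coeff l).coeff k).degree < F.natDegree) {N : ℕ}
    (hXY : ∀ l k, (b.coeff l).coeff k ∈ totalDegreeFiltration L N) (hN : F.natDegree * N < q) :
    ¬ F ∣ frobeniusSubst q b := by
  intro hdvd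
  have hdegF : F.degree = F.natDegree := degree_eq_natDegree hF.ne_zero
  have hpos : F.natDegree ≠ 0 := fun h => by simp [h, hb] at hW
  obtain ⟨l, hl⟩ : ∃ l, b.coeff l ≠ 0 := by simpa [Polynomial.ext_iff] using hb
  obtain ⟨k, hk⟩ : ∃ k, (b.coeff l).coeff k ≠ 0 := by simpa [Polynomial.ext_iff] using hl
  obtain ⟨x, y, hFxy, hbxy⟩ := exists_evalEval_eq_zero_and_ne_zero hF hirr
    (hF.not_dvd_of_degree_lt hk (hdegF ▸ hY l k))
  have hdeg : b.natDegree ≤ F.natDegree := natDegree_le_of_degree_le hW.le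
  have hb' : ¬ F ∣ b.map (mapRingHom (evalEvalRingHom x y)) := by
    refine hF.not_dvd_of_degree_lt (fun h0 => hbxy ?_) (hdegF ▸ degree_map_le.trans_lt hW)
    simpa using congr((coeff $h0 l).coeff k)
  have hρ := dvd_coeff_of_dvd_eval hF hFdeg hN (resultant_baseChangeBivariate_mem hXY)
    (dvd_eval_resultant_baseChangeBivariate hpos hfrob hdeg hdvd)
  refine resultant_ne_zero_of_irreducible hF hirr hb' (natDegree_map_le.trans hdeg) ?_
  have hmap := resultant_map_map (R := L[X][X][X]) (baseChangeBivariate F) b F.natDegree F.natDegree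
    (mapRingHom (evalEvalRingHom x y))
  rw [baseChangeBivariate_map_evalEvalRingHom] at hmap
  rw [hmap]
  ext1 n
  simpa [hFxy] using map_dvd (evalEvalRingHom x y) (hρ n)

end FrobeniusSubstitution

/-! ### Orders of vanishing -/

section Zeros

variable {L : Type*} [Field L]

lemma aeval_C_add_X (x : L) (n : L[X]) :
    aeval (PowerSeries.C x + PowerSeries.X) n = ((taylor x n : L[X]) : L⟦X⟧) := by
  have h : (aeval (PowerSeries.C x + PowerSeries.X) : L[X] →ₐ[L] L⟦X⟧).toRingHom =
      coeToPowerSeries.ringHom.comp (taylorAlgHom x).toRingHom :=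
    ringHom_ext' (by ext1 a; simp) (by simp [add_comm])
  exact DFunLike.congr_fun h n

lemma le_rootMultiplicity_of_X_pow_dvd_aeval {x : L} {n : L[X]} (hn : n ≠ 0) {m : ℕ}
    (h : PowerSeries.X ^ m ∣ aeval (PowerSeries.C x + PowerSeries.X) n) :
    m ≤ n.rootMultiplicity x := by
  rw [aeval_C_add_X, PowerSeries.X_pow_dvd_iff] at h
  have hX : X ^ m ∣ taylor x n := X_pow_dvd_iff.2 fun i hi => by simpa using h i hi
  rw [le_rootMultiplicity_iff hn]
  simpa [taylor_taylor, sub_eq_add_neg] using map_dvd (taylorAlgHom (-x)) hX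

lemma sum_rootMultiplicity_le_natDegree (n : L[X]) (s : Finset L) :
    ∑ x ∈ s, n.rootMultiplicity x ≤ n.natDegree := by
  classical
  refine le_trans ?_ (card_roots' n)
  simp only [← count_roots]
  rw [← Multiset.sum_count_eq_card (s := s ∪ n.roots.toFinset)
    (fun a ha => Finset.mem_union_right _ (Multiset.mem_toFinset.2 ha))]
  exact Finset.sum_le_sum_of_subset Finset.subset_union_left

lemma derivative_evalEval_ne_zero_of_separable {F : L[X][X]} {x y : L}
    (hsep : (F.map (evalRingHom x)).Separable) (hF : F.evalEval x y = 0) :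
    (derivative F).evalEval x y ≠ 0 := by
  rw [← map_evalRingHom_eval] at hF ⊢
  rw [← derivative_map]
  exact hsep.eval₂_derivative_ne_zero (RingHom.id L) (by simpa using hF)

/-- `β` vanishes to order at least `M` on every branch `(x + t, φ(t))` through `(x, y)` of the
curve `F = 0`. -/
def VanishesToOrder (F β : L[X][X]) (M : ℕ) (x y : L) : Prop :=
  ∀ φ : L⟦X⟧, PowerSeries.constantCoeff φ = y →
    aevalAeval (PowerSeries.C x + PowerSeries.X) φ F = 0 →
      PowerSeries.X ^ M ∣ aevalAeval (PowerSeries.C x + PowerSeries.X) φ β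

variable [IsAlgClosed L] {F β : L[X][X]} {m M : ℕ}

lemma exists_prod_X_sub_C_branches [DecidableEq L] (hF : F.Monic) {x : L}
    (hsep : (F.map (evalRingHom x)).Separable) :
    ∃ Φ : L → L⟦X⟧,
      (∀ y ∈ (F.map (evalRingHom x)).roots.toFinset,
        aevalAeval (PowerSeries.C x + PowerSeries.X) (Φ y) F = 0 ∧
          PowerSeries.constantCoeff (Φ y) = y) ∧
      F.map (aeval (PowerSeries.C x + PowerSeries.X) : L[X] →ₐ[L] L⟦X⟧) =
        ∏ y ∈ (F.map (evalRingHom x)).roots.toFinset, (X - C (Φ y)) := by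
  set f := F.map ((aeval (PowerSeries.C x + PowerSeries.X) : L[X] →ₐ[L] L⟦X⟧) : L[X] →+* L⟦X⟧)
  have hf : f.map PowerSeries.constantCoeff = F.map (evalRingHom x) := by
    rw [Polynomial.map_map]
    exact congr(F.map $(ringHom_ext' (by ext a; simp) (by simp)))
  have hcard : (F.map (evalRingHom x)).natDegree =
      (F.map (evalRingHom x)).roots.toFinset.card := by
    rw [Multiset.toFinset_card_of_nodup (nodup_roots hsep),
      (IsAlgClosed.splits _).natDegree_eq_card_roots]
  have hroot : ∀ y ∈ (F.map (evalRingHom x)).roots.toFinset,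
      (F.map (evalRingHom x)).eval y = 0 := fun y hy => by
    simpa [(hF.map _).ne_zero] using hy
  obtain ⟨Φ, hΦ, hprod⟩ := exists_prod_X_sub_C_of_simple_roots (hF.map _ : f.Monic)
    (s := (F.map (evalRingHom x)).roots.toFinset)
    (by rw [← hcard, hF.natDegree_map, hF.natDegree_map])
    (fun y hy => by rw [hf, hroot y hy])
    (fun y hy => by
      have := derivative_evalEval_ne_zero_of_separable hsep
        ((map_evalRingHom_eval x y F).symm.trans (hroot y hy))
      rwa [hf, derivative_map, map_evalRingHom_eval, isUnit_iff_ne_zero])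
  exact ⟨Φ, fun y hy => ⟨(aevalAeval_eq_eval_map _ _ F).trans (hΦ y hy).1, (hΦ y hy).2⟩, hprod⟩

lemma X_pow_dvd_aeval_resultant (hF : F.Monic) {x : L}
    (hsep : (F.map (evalRingHom x)).Separable) (hm : β.natDegree ≤ m) {T : Finset L}
    (hT : ∀ y ∈ T, F.evalEval x y = 0 ∧ VanishesToOrder F β M x y) :
    PowerSeries.X ^ (M * T.card) ∣
      aeval (PowerSeries.C x + PowerSeries.X) (resultant F β F.natDegree m) := by
  classical
  obtain ⟨Φ, hΦ, hprod⟩ := exists_prod_X_sub_C_branches hF hsep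
  set τ := ((aeval (PowerSeries.C x + PowerSeries.X) : L[X] →ₐ[L] L⟦X⟧) : L[X] →+* L⟦X⟧)
  have hres : τ (resultant F β F.natDegree m) =
      ∏ y ∈ (F.map (evalRingHom x)).roots.toFinset, (β.map τ).eval (Φ y) := by
    rw [← resultant_map_map, ← resultant_eq_prod_eval_of_eq_prod (β.map τ) hprod
      (natDegree_map_le.trans hm), hF.natDegree_map]
  have hsub : T ⊆ (F.map (evalRingHom x)).roots.toFinset := fun y hy => by
    simpa [(hF.map _).ne_zero, map_evalRingHom_eval] using (hT y hy).1
  change _ ∣ τ _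
  rw [hres, pow_mul, ← Finset.prod_const]
  refine (Finset.prod_dvd_prod_of_dvd _ (fun y => (β.map τ).eval (Φ y)) fun y hy => ?_).trans
    (Finset.prod_dvd_prod_of_subset _ _ _ hsub)
  obtain ⟨hzero, hconst⟩ := hΦ y (hsub hy)
  simpa only [aevalAeval_eq_eval_map] using (hT y hy).2 (Φ y) hconst hzero

theorem mul_card_le_of_vanishesToOrder (hF : F.Monic) (hirr : Irreducible F) (hβ : ¬ F ∣ β)
    {a b : ℕ} (hm : β.natDegree ≤ m) (ha : ∀ j, (F.coeff j).natDegree ≤ a)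
    (hb : ∀ j, (β.coeff j).natDegree ≤ b) {S : Finset (L × L)}
    (hS : ∀ P ∈ S, F.evalEval P.1 P.2 = 0 ∧ (F.map (evalRingHom P.1)).Separable ∧
      VanishesToOrder F β M P.1 P.2) :
    M * S.card ≤ F.natDegree * b + m * a := by
  classical
  set n := resultant F β F.natDegree m
  have hn : n ≠ 0 := resultant_ne_zero_of_irreducible hF hirr hβ hm
  have hdeg : n.natDegree ≤ F.natDegree * b + m * a := by
    rw [← mem_polynomial_const_iff_natDegree_le]
    exact_mod_cast RingFiltration.resultant_mem
      (fun j => mem_polynomial_const_iff_natDegree_le.2 (ha j))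
      (fun j => mem_polynomial_const_iff_natDegree_le.2 (hb j)) F.natDegree m
  have hmult : ∀ x ∈ S.image Prod.fst, M * {P ∈ S | P.1 = x}.card ≤ n.rootMultiplicity x := by
    intro x hx
    obtain ⟨P₀, hP₀, rfl⟩ := Finset.mem_image.1 hx
    have hcard : ({P ∈ S | P.1 = P₀.1}.image Prod.snd).card = {P ∈ S | P.1 = P₀.1}.card :=
      Finset.card_image_of_injOn fun P hP Q hQ h =>
        Prod.ext ((Finset.mem_filter.1 hP).2.trans (Finset.mem_filter.1 hQ).2.symm) h
    rw [← hcard]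
    refine le_rootMultiplicity_of_X_pow_dvd_aeval hn
      (X_pow_dvd_aeval_resultant hF (hS P₀ hP₀).2.1 hm fun y hy => ?_)
    obtain ⟨P, hP, rfl⟩ := Finset.mem_image.1 hy
    obtain ⟨hPS, hPx⟩ := Finset.mem_filter.1 hP
    exact hPx ▸ ⟨(hS P hPS).1, (hS P hPS).2.2⟩
  calc M * S.card = ∑ x ∈ S.image Prod.fst, M * {P ∈ S | P.1 = x}.card := by
        rw [← Finset.mul_sum, ← Finset.card_eq_sum_card_image]
    _ ≤ ∑ x ∈ S.image Prod.fst, n.rootMultiplicity x := Finset.sum_le_sum hmult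
    _ ≤ n.natDegree := sum_rootMultiplicity_le_natDegree n _
    _ ≤ _ := hdeg

end Zeros

/-! ### Stepanov's auxiliary polynomial -/

section Stepanov

variable {L : Type*} [Field L] {F : L[X][X]}

lemma exists_ne_zero_forall_sum_mul_eq_zero {ι κ : Type*} [Fintype ι] [Fintype κ] (a : κ → ι → L)
    (h : Fintype.card κ < Fintype.card ι) : ∃ c : ι → L, c ≠ 0 ∧ ∀ k, ∑ i, c i * a k i = 0 := by
  obtain ⟨c, hc, hc0⟩ := Submodule.exists_mem_ne_zero_of_ne_bot
    (LinearMap.ker_ne_bot_of_finrank_lt (f := (Matrix.of a).mulVecLin) (by simpa using h))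
  refine ⟨c, hc0, fun k => ?_⟩
  simpa [Matrix.mulVec, dotProduct, mul_comm] using congrFun (LinearMap.mem_ker.1 hc) k

lemma exists_ne_zero_forall_dvd_sum {ι κ : Type*} [Fintype ι] [Fintype κ] (hF : F.Monic)
    (hFdeg : F ∈ totalDegreeFiltration L F.natDegree) {N : ℕ} {Q : κ → ι → L[X][X]}
    (hQ : ∀ k i, Q k i ∈ totalDegreeFiltration L N)
    (hcard : Fintype.card κ * (F.natDegree * (N + 1)) < Fintype.card ι) :
    ∃ c : ι → L, c ≠ 0 ∧ ∀ k, F ∣ ∑ i, C (C (c i)) * Q k i := by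
  have hrem : ∀ k i, Q k i %ₘ F ∈ totalDegreeFiltration L N := fun k i =>
    RingFiltration.modByMonic_mem hF (by simpa using hFdeg) (hQ k i)
  obtain ⟨c, hc0, hc⟩ := exists_ne_zero_forall_sum_mul_eq_zero
    (fun (k : κ × Fin F.natDegree × Fin (N + 1)) i => ((Q k.1 i %ₘ F).coeff k.2.1).coeff k.2.2)
    (by simpa using hcard)
  refine ⟨c, hc0, fun k => ?_⟩
  have hsum : (∑ i, C (C (c i)) * Q k i) %ₘ F = ∑ i, C (C (c i)) * (Q k i %ₘ F) := by
    change modByMonicHom F _ = ∑ i, _ * modByMonicHom F (Q k i)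
    simp only [← smul_eq_C_mul, map_sum, map_smul]
  rw [← modByMonic_eq_zero_iff_dvd hF, hsum]
  ext j m
  simp only [finsetSum_coeff, coeff_C_mul, coeff_zero]
  by_cases hjm : j < F.natDegree ∧ m < N + 1
  · exact hc (k, ⟨j, hjm.1⟩, ⟨m, hjm.2⟩)
  · refine Finset.sum_eq_zero fun i _ => mul_eq_zero_of_right _ (by_contra fun hne => hjm ⟨?_, ?_⟩)
    · have hdeg := degree_modByMonic_lt (Q k i) hF
      rw [degree_eq_natDegree hF.ne_zero, degree_lt_iff_coeff_zero] at hdeg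
      exact lt_of_not_ge fun hj => hne (by rw [hdeg j hj, coeff_zero])
    · have := mem_totalDegreeFiltration.1 (hrem k i) m j hne
      omega

/-- The indices `(i, j, k, l)` of the monomials `X ^ i Y ^ j Z ^ k W ^ l` with `i < A`, `k < B` and
`j, l < d`. -/
abbrev AuxIndex (A d B : ℕ) := Fin A × Fin d × Fin B × Fin d

variable {A d B q : ℕ}

/-- The auxiliary polynomial with coefficients `c`, in the variables `X`, `Y`, `Z`, `W` from the
innermost to the outermost. -/
noncomputable def auxPolynomial (c : AuxIndex A d B → L) : L[X][X][X][X] :=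
  ∑ ι, monomial (ι.2.2.2 : ℕ) (monomial (ι.2.2.1 : ℕ)
    (monomial (ι.2.1 : ℕ) (monomial (ι.1 : ℕ) (c ι))))

lemma coeff_auxPolynomial_summand {i j k l i' j' k' l' : ℕ} (a : L) :
    ((((monomial l (monomial k (monomial j (monomial i a)))).coeff l').coeff k').coeff j').coeff
      i' = if i = i' ∧ j = j' ∧ k = k' ∧ l = l' then a else 0 := by
  by_cases hl : l = l' <;> by_cases hk : k = k' <;> by_cases hj : j = j' <;>
    simp [coeff_monomial, hl, hk, hj]

lemma coeff_auxPolynomial (c : AuxIndex A d B → L) (ι : AuxIndex A d B) :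
    ((((auxPolynomial c).coeff ι.2.2.2).coeff ι.2.2.1).coeff ι.2.1).coeff ι.1 = c ι := by
  simp only [auxPolynomial, finsetSum_coeff, coeff_auxPolynomial_summand, Fin.val_inj,
    ← Prod.ext_iff, Finset.sum_ite_eq', Finset.mem_univ, if_true]

lemma auxPolynomial_ne_zero {c : AuxIndex A d B → L} (hc : c ≠ 0) : auxPolynomial c ≠ 0 := by
  obtain ⟨ι, hι⟩ := Function.ne_iff.1 hc
  intro h0
  exact hι (by simp [← coeff_auxPolynomial c ι, h0])

lemma lt_of_coeff_auxPolynomial_ne_zero {c : AuxIndex A d B → L} {i j k l : ℕ}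
    (h : ((((auxPolynomial c).coeff l).coeff k).coeff j).coeff i ≠ 0) :
    i < A ∧ j < d ∧ k < B ∧ l < d := by
  simp only [auxPolynomial, finsetSum_coeff, coeff_auxPolynomial_summand] at h
  obtain ⟨ι, -, hι⟩ := Finset.exists_ne_zero_of_sum_ne_zero h
  obtain ⟨⟨rfl, rfl, rfl, rfl⟩, -⟩ := ite_ne_right_iff.1 hι
  exact ⟨Fin.is_lt _, Fin.is_lt _, Fin.is_lt _, Fin.is_lt _⟩

lemma degree_auxPolynomial_lt (c : AuxIndex A d B → L) : (auxPolynomial c).degree < d := by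
  rw [degree_lt_iff_coeff_zero]
  intro l hl
  ext k j i
  by_contra h
  exact hl.not_gt (lt_of_coeff_auxPolynomial_ne_zero h).2.2.2

lemma degree_coeff_coeff_auxPolynomial_lt (c : AuxIndex A d B → L) (l k : ℕ) :
    (((auxPolynomial c).coeff l).coeff k).degree < d := by
  rw [degree_lt_iff_coeff_zero]
  intro j hj
  ext i
  by_contra h
  exact hj.not_gt (lt_of_coeff_auxPolynomial_ne_zero h).2.1

lemma coeff_coeff_auxPolynomial_mem (c : AuxIndex A d B → L) (l k : ℕ) :
    ((auxPolynomial c).coeff l).coeff k ∈ totalDegreeFiltration L (A + d : ℕ) := by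
  refine mem_totalDegreeFiltration.2 fun i j h => ?_
  have := lt_of_coeff_auxPolynomial_ne_zero h
  omega

lemma frobeniusSubst_auxPolynomial (c : AuxIndex A d B → L) :
    frobeniusSubst q (auxPolynomial c) =
      ∑ ι, monomial (ι.2.1 + q * ι.2.2.2 : ℕ) (monomial (ι.1 + q * ι.2.2.1 : ℕ) (c ι)) := by
  rw [frobeniusSubst, ← coe_evalEvalRingHom, auxPolynomial, map_sum]
  refine Finset.sum_congr rfl fun ι _ => ?_
  simp only [← C_mul_X_pow_eq_monomial, map_mul, map_pow, pow_add, pow_mul, coe_evalEvalRingHom,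
    evalEval_C, eval_C, eval_X, evalEval_X]
  ring

lemma natDegree_frobeniusSubst_auxPolynomial_le (c : AuxIndex A d B → L) :
    (frobeniusSubst q (auxPolynomial c)).natDegree ≤ d + q * d := by
  rw [frobeniusSubst_auxPolynomial]
  refine natDegree_sum_le_of_forall_le _ _ fun ι _ => (natDegree_monomial_le _).trans ?_
  gcongr <;> exact Fin.is_le'

lemma natDegree_coeff_frobeniusSubst_auxPolynomial_le (c : AuxIndex A d B → L) (j : ℕ) :
    ((frobeniusSubst q (auxPolynomial c)).coeff j).natDegree ≤ A + q * B := by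
  rw [frobeniusSubst_auxPolynomial, finsetSum_coeff]
  refine natDegree_sum_le_of_forall_le _ _ fun ι _ => ?_
  rw [coeff_monomial]
  split_ifs
  · refine (natDegree_monomial_le _).trans ?_
    gcongr <;> exact Fin.is_le'
  · simp

lemma aevalAeval_frobeniusSubst_auxPolynomial {S : Type*} [CommRing S] [Algebra L S] (u v : S)
    (c : AuxIndex A d B → L) :
    aevalAeval u v (frobeniusSubst q (auxPolynomial c)) =
      ∑ ι, algebraMap L S (c ι) * u ^ (ι.1 : ℕ) * v ^ (ι.2.1 : ℕ) *
        (u ^ q) ^ (ι.2.2.1 : ℕ) * (v ^ q) ^ (ι.2.2.2 : ℕ) := by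
  rw [frobeniusSubst_auxPolynomial, map_sum]
  refine Finset.sum_congr rfl fun ι _ => ?_
  simp only [aevalAeval_eq_eval_map, map_monomial, eval_monomial, RingHom.coe_coe, aeval_monomial,
    pow_add, pow_mul]
  ring

section Vanishing

variable {K : Type*} [Field K] [Finite K] [Algebra K L]

lemma X_pow_dvd_aevalAeval_frobeniusSubst_auxPolynomial_sub (c : AuxIndex A d B → L) {M : ℕ}
    (hM : M ≤ Nat.card K) {x : L} (hx : x ^ Nat.card K = x) (φ : L⟦X⟧) :
    PowerSeries.X ^ M ∣
      aevalAeval (PowerSeries.C x + PowerSeries.X) φ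
          (frobeniusSubst (Nat.card K) (auxPolynomial c)) -
        ∑ ι, PowerSeries.C (c ι * x ^ (ι.2.2.1 : ℕ) *
            (PowerSeries.constantCoeff φ ^ Nat.card K) ^ (ι.2.2.2 : ℕ)) *
          ((PowerSeries.C x + PowerSeries.X) ^ (ι.1 : ℕ) * φ ^ (ι.2.1 : ℕ)) := by
  have hfrob (ψ : L⟦X⟧) : PowerSeries.X ^ M ∣
      ψ ^ Nat.card K - PowerSeries.C (PowerSeries.constantCoeff ψ ^ Nat.card K) :=
    (pow_dvd_pow _ hM).trans (X_pow_natCard_dvd_sub ψ)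
  have hU := hfrob (PowerSeries.C x + PowerSeries.X)
  rw [map_add, PowerSeries.constantCoeff_C, PowerSeries.constantCoeff_X, add_zero, hx] at hU
  rw [aevalAeval_frobeniusSubst_auxPolynomial, ← Finset.sum_sub_distrib]
  refine Finset.dvd_sum fun ι _ => ?_
  have hsplit (a u v : L) (s : L⟦X⟧) : PowerSeries.C (a * u * v) * s =
      PowerSeries.C a * s * PowerSeries.C u * PowerSeries.C v := by
    simp only [map_mul]
    ring
  rw [hsplit, ← mul_assoc, map_pow PowerSeries.C, map_pow PowerSeries.C (_ ^ _)]
  exact dvd_mul_sub_mul (dvd_mul_sub_mul (by simp) (hU.trans (sub_dvd_pow_sub_pow _ _ _)))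
    ((hfrob φ).trans (sub_dvd_pow_sub_pow _ _ _))

lemma vanishesToOrder_frobeniusSubst_auxPolynomial {c : AuxIndex A d B → L} {M e : ℕ}
    (hM : M ≤ Nat.card K) {x y : L} (hx : x ^ Nat.card K = x) (hFxy : F.evalEval x y = 0)
    (hδ : (derivative F).evalEval x y ≠ 0) {P : ℕ → ℕ → ℕ → L[X][X]}
    (hP : ∀ φ : L⟦X⟧, aevalAeval (PowerSeries.C x + PowerSeries.X) φ F = 0 →
      IsUnit ((derivative F).evalEval x (PowerSeries.constantCoeff φ)) → ∀ m i j,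
        PowerSeries.coeff m ((PowerSeries.C x + PowerSeries.X) ^ i * φ ^ j) *
            (derivative F).evalEval x (PowerSeries.constantCoeff φ) ^ (2 * m) =
          (P m i j).evalEval x (PowerSeries.constantCoeff φ))
    {h : Fin d → Fin e → L[X][X]}
    (hh : ∀ l : Fin d, (y ^ Nat.card K) ^ (l : ℕ) =
      ∑ r, (h l r).evalEval x y * (y ^ Nat.card K) ^ (r : ℕ))
    (hdvd : ∀ m < M, ∀ r : Fin e, F ∣ ∑ ι : AuxIndex A d B,
      C (C (c ι)) * (P m ι.1 ι.2.1 * C X ^ (ι.2.2.1 : ℕ) * h ι.2.2.2 r)) :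
    VanishesToOrder F (frobeniusSubst (Nat.card K) (auxPolynomial c)) M x y := by
  rintro φ rfl hφ
  refine (dvd_iff_dvd_of_dvd_sub
    (X_pow_dvd_aevalAeval_frobeniusSubst_auxPolynomial_sub c hM hx φ)).2
    (PowerSeries.X_pow_dvd_iff.2 fun m hm => ?_)
  set y := PowerSeries.constantCoeff φ
  refine (mul_eq_zero.1 ?_).resolve_right (pow_ne_zero (2 * m) hδ)
  calc _ = ∑ ι : AuxIndex A d B, ∑ r : Fin e, (y ^ Nat.card K) ^ (r : ℕ) *
        (C (C (c ι)) * (P m ι.1 ι.2.1 * C X ^ (ι.2.2.1 : ℕ) * h ι.2.2.2 r)).evalEval x y := by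
        rw [map_sum, Finset.sum_mul]
        refine Finset.sum_congr rfl fun ι _ => ?_
        rw [PowerSeries.coeff_C_mul, mul_assoc, hP φ hφ hδ.isUnit, hh ι.2.2.2, Finset.mul_sum,
          Finset.sum_mul]
        refine Finset.sum_congr rfl fun r _ => ?_
        simp only [evalEval_mul, evalEval_pow, evalEval_C, eval_C, eval_X]
        ring
    _ = 0 := by
        rw [Finset.sum_comm]
        refine Finset.sum_eq_zero fun r _ => ?_
        obtain ⟨z, hz⟩ := hdvd m hm r
        rw [← Finset.mul_sum, ← evalEval_finsetSum, hz, evalEval_mul, hFxy, zero_mul, mul_zero]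

theorem mul_card_le_of_pow_eq_sum [IsAlgClosed L] (hF : F.Monic) (hirr : Irreducible F)
    (hFdeg : F ∈ totalDegreeFiltration L F.natDegree)
    (hfrob : F ∣ aevalAeval (C X ^ Nat.card K : L[X][X]) (X ^ Nat.card K) F) {M e A B : ℕ}
    {h : Fin F.natDegree → Fin e → L[X][X]}
    (hh : ∀ l r, h l r ∈ totalDegreeFiltration L F.natDegree) {S : Finset (L × L)}
    (hS : ∀ P ∈ S, F.evalEval P.1 P.2 = 0 ∧ (F.map (evalRingHom P.1)).Separable ∧
      P.1 ^ Nat.card K = P.1 ∧ ∀ l : Fin F.natDegree, (P.2 ^ Nat.card K) ^ (l : ℕ) =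
        ∑ r, (h l r).evalEval P.1 P.2 * (P.2 ^ Nat.card K) ^ (r : ℕ))
    (hM : M ≤ Nat.card K) (hA : F.natDegree * (A + F.natDegree) < Nat.card K)
    (hcount : M * e * (F.natDegree * (A + B + 2 * F.natDegree * M + 2 * F.natDegree + 1)) <
      A * (F.natDegree * (B * F.natDegree))) :
    M * S.card ≤ F.natDegree * (A + Nat.card K * B) +
      (F.natDegree + Nat.card K * F.natDegree) * F.natDegree := by
  obtain ⟨P, hPmem, hP⟩ := exists_hasse_numerator hFdeg
  have hQ (κ : Fin M × Fin e) (ι : AuxIndex A F.natDegree B) :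
      P κ.1 ι.1 ι.2.1 * C X ^ (ι.2.2.1 : ℕ) * h ι.2.2.2 κ.2 ∈
        totalDegreeFiltration L (A + B + 2 * F.natDegree * M + 2 * F.natDegree : ℕ) := by
    refine RingFiltration.mono (RingFiltration.mul_mem (RingFiltration.mul_mem (hPmem _ _ _)
      (RingFiltration.pow_mem C_X_mem_totalDegreeFiltration _)) (hh ι.2.2.2 κ.2)) ?_
    have hκ := Nat.mul_le_mul_left (2 * F.natDegree) κ.1.2.le
    zify at hκ
    push_cast
    linarith [ι.1.is_lt, ι.2.1.is_lt, ι.2.2.1.is_lt]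
  obtain ⟨c, hc, hdvd⟩ := exists_ne_zero_forall_dvd_sum hF hFdeg hQ (by simpa using hcount)
  have hβ : ¬ F ∣ frobeniusSubst (Nat.card K) (auxPolynomial c) :=
    not_dvd_frobeniusSubst hF hirr hFdeg hfrob (auxPolynomial_ne_zero hc)
      (degree_auxPolynomial_lt c) (degree_coeff_coeff_auxPolynomial_lt c)
      (coeff_coeff_auxPolynomial_mem c) hA
  refine mul_card_le_of_vanishesToOrder hF hirr hβ
    (natDegree_frobeniusSubst_auxPolynomial_le c) (a := F.natDegree) (fun j => ?_)
    (natDegree_coeff_frobeniusSubst_auxPolynomial_le c) fun Q hQS => ?_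
  · exact mem_polynomial_const_iff_natDegree_le.1
      (RingFiltration.mono (RingFiltration.mem_polynomial.1 hFdeg j) (by omega))
  · obtain ⟨hFQ, hsep, hx, hy⟩ := hS Q hQS
    exact ⟨hFQ, hsep, vanishesToOrder_frobeniusSubst_auxPolynomial hM hx hFQ
      (derivative_evalEval_ne_zero_of_separable hsep hFQ) (hP Q.1) hy
      fun m hm r => hdvd (⟨m, hm⟩, r)⟩

end Vanishing

end Stepanov

section Parameters

variable {d e q M A B : ℕ}

lemma stepanov_count_lt (hd : 1 ≤ d) (he : e ≤ d) (hM : 100 * d ^ 3 ≤ M)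
    (hA : M * M < 4 * d * A) (hB : e * M + d * (12 * d ^ 2 + 1) < d * B)
    (hB' : B ≤ M + (12 * d ^ 2 + 2)) :
    M * e * (d * (A + B + 2 * d * M + 2 * d + 1)) < A * (d * (B * d)) := by
  have hd2 : d ≤ d ^ 2 := by nlinarith
  have hd3 : d ^ 2 ≤ d ^ 3 := by nlinarith
  have hMpos : 0 < M := by omega
  have hlin : 4 * d * e * (B + 2 * d * M + 2 * d + 1) < M * (d * (12 * d ^ 2 + 1)) := by
    calc 4 * d * e * (B + 2 * d * M + 2 * d + 1)
        ≤ 4 * d * d * (M + (12 * d ^ 2 + 2) + 2 * d * M + 2 * d + 1) := by gcongr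
      _ = M * (4 * d ^ 2 + 8 * d ^ 3) + d * (48 * d ^ 3 + 8 * d ^ 2 + 12 * d) := by ring
      _ < M * (12 * d ^ 3) + d * M := by
        refine add_lt_add_of_le_of_lt ?_ ?_
        · gcongr
          omega
        · gcongr
          omega
      _ = M * (d * (12 * d ^ 2 + 1)) := by ring
  have hmul : M * e * (B + 2 * d * M + 2 * d + 1) < A * (d * (12 * d ^ 2 + 1)) := by
    refine lt_of_mul_lt_mul_right (a := 4 * d) ?_ (Nat.zero_le _)
    calc M * e * (B + 2 * d * M + 2 * d + 1) * (4 * d)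
        = M * (4 * d * e * (B + 2 * d * M + 2 * d + 1)) := by ring
      _ < M * (M * (d * (12 * d ^ 2 + 1))) := by gcongr
      _ = M * M * (d * (12 * d ^ 2 + 1)) := by ring
      _ ≤ 4 * d * A * (d * (12 * d ^ 2 + 1)) := by gcongr
      _ = A * (d * (12 * d ^ 2 + 1)) * (4 * d) := by ring
  calc M * e * (d * (A + B + 2 * d * M + 2 * d + 1))
      = d * (A * (e * M) + M * e * (B + 2 * d * M + 2 * d + 1)) := by ring
    _ < d * (A * (e * M) + A * (d * (12 * d ^ 2 + 1))) := by gcongr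
    _ = d * (A * (e * M + d * (12 * d ^ 2 + 1))) := by ring
    _ ≤ d * (A * (d * B)) := by gcongr
    _ = A * (d * (B * d)) := by ring

lemma stepanov_degree_le (hd : 1 ≤ d) (hM : 100 * d ^ 3 ≤ M) (hq : M * M ≤ q)
    (hA : 4 * d * A ≤ M * M + 4 * d) (hB : d * B ≤ e * M + d * (12 * d ^ 2 + 2)) :
    d * (A + q * B) + (d + q * d) * d ≤ M * (e * q) + 17 * d ^ 3 * q := by
  have hd2 : d ≤ d ^ 2 := by nlinarith
  have hd3 : d ^ 2 ≤ d ^ 3 := by nlinarith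
  have hMM : 100 * d ^ 3 * M ≤ M * M := by gcongr
  calc d * (A + q * B) + (d + q * d) * d = d * A + q * (d * B) + d * d + q * d ^ 2 := by ring
    _ ≤ q + q * (e * M + d * (12 * d ^ 2 + 2)) + q + q * d ^ 2 := by
      gcongr
      · nlinarith
      · nlinarith
    _ = M * (e * q) + (2 + 12 * d ^ 3 + 2 * d + d ^ 2) * q := by ring
    _ ≤ M * (e * q) + 17 * d ^ 3 * q := by
      gcongr
      omega

-- `A ≈ M ^ 2 / 4d` and `B ≈ eM / d` balance the number `A B d ^ 2` of coefficients of the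
-- auxiliary polynomial against the number of vanishing conditions.
lemma exists_stepanov_parameters (hd : 1 ≤ d) (he : e ≤ d) (hM : 100 * d ^ 3 ≤ M)
    (hq : M * M ≤ q) :
    ∃ A B, d * (A + d) < q ∧
      M * e * (d * (A + B + 2 * d * M + 2 * d + 1)) < A * (d * (B * d)) ∧
      d * (A + q * B) + (d + q * d) * d ≤ M * (e * q) + 17 * d ^ 3 * q := by
  have hdiv (a : ℕ) {b : ℕ} (hb : 0 < b) : a < b * (a / b + 1) ∧ b * (a / b + 1) ≤ a + b :=
    ⟨Nat.lt_mul_div_succ a hb, by rw [mul_add_one]; gcongr; exact Nat.mul_div_le a b⟩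
  obtain ⟨hA, hA'⟩ := hdiv (M * M) (b := 4 * d) (by omega)
  obtain ⟨hB, hB'⟩ := hdiv (e * M) (b := d) hd
  have hBM : e * M / d ≤ M := Nat.div_le_of_le_mul (by gcongr)
  generalize M * M / (4 * d) + 1 = A at hA hA'
  generalize e * M / d = B at hB hB' hBM
  refine ⟨A, B + (12 * d ^ 2 + 2), ?_, ?_, ?_⟩
  · have hMM : 100 * d ^ 3 * M ≤ M * M := by gcongr
    have hd2 : d ≤ d ^ 2 := by nlinarith
    have hd3 : d ^ 2 ≤ d ^ 3 := by nlinarith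
    nlinarith
  · exact stepanov_count_lt hd he hM hA (by linarith) (by omega)
  · exact stepanov_degree_le hd hM hq hA' (by linarith)

end Parameters

section Discriminant

lemma separable_map_of_resultant_derivative_ne_zero {R K : Type*} [CommRing R] [Field K]
    (ψ : R →+* K) {F : R[X]} (hF : F.natDegree ≠ 0)
    (h : ψ (resultant F (derivative F) F.natDegree F.natDegree) ≠ 0) : (F.map ψ).Separable := by
  obtain ⟨P, Q, -, -, hPQ⟩ := exists_mul_add_mul_eq_C_resultant F (derivative F) le_rfl
    ((natDegree_derivative_le F).trans (Nat.sub_le _ 1)) (Or.inl hF)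
  have hmap := congrArg (Polynomial.map ψ) hPQ
  simp only [Polynomial.map_add, Polynomial.map_mul, map_C, ← derivative_map] at hmap
  set r := ψ (resultant F (derivative F) F.natDegree F.natDegree)
  refine ⟨C r⁻¹ * P.map ψ, C r⁻¹ * Q.map ψ, ?_⟩
  have hr : (C r⁻¹ * C r : K[X]) = 1 := by rw [← C_mul, inv_mul_cancel₀ h, C_1]
  linear_combination hr + C r⁻¹ * hmap

variable {L : Type*} [Field L] {F : L[X][X]}

lemma exists_separable_of_eval_ne_zero (hF : F.Monic) (hirr : Irreducible F)
    (hFdeg : F ∈ totalDegreeFiltration L F.natDegree) (hder : derivative F ≠ 0) :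
    ∃ Δ : L[X], Δ ≠ 0 ∧ Δ.natDegree ≤ 2 * F.natDegree ^ 2 ∧
      ∀ x, Δ.eval x ≠ 0 → (F.map (evalRingHom x)).Separable := by
  have hdeg : (derivative F).natDegree ≤ F.natDegree :=
    (natDegree_derivative_le F).trans (Nat.sub_le _ 1)
  refine ⟨resultant F (derivative F) F.natDegree F.natDegree,
    resultant_ne_zero_of_irreducible hF hirr
      (hF.not_dvd_of_degree_lt hder (degree_derivative_lt hF.ne_zero)) hdeg, ?_,
    fun x hx => separable_map_of_resultant_derivative_ne_zero (evalRingHom x) ?_ hx⟩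
  · have hcoeff {p : L[X][X]} (hp : p ∈ totalDegreeFiltration L F.natDegree) (i : ℕ) :
        p.coeff i ∈ (RingFiltration.const L).polynomial 1 (F.natDegree : ℤ) :=
      RingFiltration.mono (RingFiltration.mem_polynomial.1 hp i) (by omega)
    rw [← mem_polynomial_const_iff_natDegree_le]
    refine RingFiltration.mono (RingFiltration.resultant_mem (hcoeff hFdeg) (hcoeff
      (RingFiltration.mono (derivative_mem_totalDegreeFiltration hFdeg) (by omega))) _ _) ?_
    push_cast
    linarith
  · exact fun h0 => hder (derivative_of_natDegree_zero h0)

end Discriminant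

section FrobeniusFixed

variable {K L : Type*} [Field K] [Finite K] [Field L] [Algebra K L]

lemma pow_natCard_eq_self_iff {y : L} : y ^ Nat.card K = y ↔ ∃ a, algebraMap K L a = y := by
  cases nonempty_fintype K
  rw [Nat.card_eq_fintype_card]
  refine ⟨fun hy => ?_, ?_⟩
  · have hne := FiniteField.X_pow_card_sub_X_ne_zero K (Fintype.one_lt_card (α := K))
    have hsplit : Splits (X ^ Fintype.card K - X : K[X]) := by
      rw [splits_iff_card_roots, FiniteField.roots_X_pow_card_sub_X, ← Finset.card_def,
        Finset.card_univ, FiniteField.X_pow_card_sub_X_natDegree_eq K Fintype.one_lt_card]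
    have hmem : y ∈ ((X ^ Fintype.card K - X : K[X]).map (algebraMap K L)).roots := by
      rw [mem_roots (Polynomial.map_ne_zero hne)]
      simp [hy]
    rw [hsplit.roots_map, FiniteField.roots_X_pow_card_sub_X] at hmem
    simpa using hmem
  · rintro ⟨a, rfl⟩
    rw [← map_pow, FiniteField.pow_card]

end FrobeniusFixed

section DifferenceQuotient

variable {R : Type*} [CommRing R]

lemma coeff_iterate_divX (p : R[X]) (n j : ℕ) : (divX^[n] p).coeff j = p.coeff (j + n) := by
  induction n generalizing p with
  | zero => rfl
  | succ n ih => rw [Function.iterate_succ_apply, ih, coeff_divX, add_assoc]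

lemma iterate_divX_natDegree (p : R[X]) : divX^[p.natDegree] p = C p.leadingCoeff := by
  ext j
  rw [coeff_iterate_divX, coeff_C]
  split_ifs with hj
  · rw [hj, zero_add, coeff_natDegree]
  · exact coeff_eq_zero_of_natDegree_lt (by omega)

lemma sub_mul_sum_eval_iterate_divX (p : R[X]) (y z : R) :
    (z - y) * ∑ r ∈ Finset.range p.natDegree, (divX^[r + 1] p).eval y * z ^ r =
      p.eval z - p.eval y := by
  have hpartial (n : ℕ) : p.eval z - p.eval y =
      (z - y) * ∑ r ∈ Finset.range n, (divX^[r + 1] p).eval y * z ^ r +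
        ((divX^[n] p).eval z - (divX^[n] p).eval y) * z ^ n := by
    induction n with
    | zero => simp
    | succ n ih =>
      have hdiv (w : R) : (divX^[n] p).eval w =
          (divX^[n + 1] p).eval w * w + (divX^[n] p).coeff 0 := by
        rw [Function.iterate_succ_apply']
        conv_lhs => rw [← divX_mul_X_add (divX^[n] p)]
        simp
      rw [ih, Finset.sum_range_succ, hdiv z, hdiv y]
      ring
  rw [hpartial p.natDegree, iterate_divX_natDegree, eval_C, eval_C, sub_self, zero_mul, add_zero]

lemma sub_mul_sum_evalEval_iterate_divX (F : R[X][X]) (x y z : R) :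
    (z - y) * ∑ r ∈ Finset.range F.natDegree, (divX^[r + 1] F).evalEval x y * z ^ r =
      F.evalEval x z - F.evalEval x y := by
  simpa [evalEval, eval_finsetSum] using
    congrArg (eval x) (sub_mul_sum_eval_iterate_divX F (C y) (C z))

lemma iterate_divX_mem_totalDegreeFiltration {F : R[X][X]} {T : ℤ}
    (hF : F ∈ totalDegreeFiltration R T) (n : ℕ) : divX^[n] F ∈ totalDegreeFiltration R T := by
  rw [mem_totalDegreeFiltration] at hF ⊢
  intro i j hij
  rw [coeff_iterate_divX] at hij
  have := hF i _ hij
  omega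

end DifferenceQuotient

/-! ### Rational points of plane curves -/

section CurvePoints

variable {L : Type*} [Field L] [DecidableEq L] {F : L[X][X]} {s : Finset L}

/-- The points of the curve `F = 0` with abscissa in `s`. -/
noncomputable def curvePoints (F : L[X][X]) (s : Finset L) : Finset (L × L) :=
  (s.sigma fun x => (F.map (evalRingHom x)).roots.toFinset).map
    (Equiv.sigmaEquivProd L L).toEmbedding

lemma mem_curvePoints (hF : F.Monic) {P : L × L} :
    P ∈ curvePoints F s ↔ P.1 ∈ s ∧ F.evalEval P.1 P.2 = 0 := by
  simp [curvePoints, Finset.mem_map_equiv, (hF.map _).ne_zero, map_evalRingHom_eval]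

lemma card_curvePoints_le (hF : F.Monic) : (curvePoints F s).card ≤ s.card * F.natDegree := by
  rw [curvePoints, Finset.card_map, Finset.card_sigma]
  refine Finset.sum_le_card_nsmul _ _ _ fun x _ => ?_
  rw [← hF.natDegree_map (evalRingHom x)]
  exact (Multiset.toFinset_card_le _).trans (card_roots' _)

lemma card_curvePoints_of_separable [IsAlgClosed L] (hF : F.Monic)
    (hsep : ∀ x ∈ s, (F.map (evalRingHom x)).Separable) :
    (curvePoints F s).card = s.card * F.natDegree := by
  rw [curvePoints, Finset.card_map, Finset.card_sigma]
  refine Finset.sum_const_nat fun x hx => ?_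
  rw [Multiset.toFinset_card_of_nodup (nodup_roots (hsep x hx)),
    ← (IsAlgClosed.splits _).natDegree_eq_card_roots, hF.natDegree_map]

end CurvePoints

section RationalPoints

variable {K L : Type*} [Field K] [Finite K] [Field L] [Algebra K L]

lemma map_mapRingHom_dvd_aevalAeval_pow_natCard (F : K[X][X]) :
    F.map (mapRingHom (algebraMap K L)) ∣ aevalAeval (C X ^ Nat.card K : L[X][X])
      (X ^ Nat.card K) (F.map (mapRingHom (algebraMap K L))) := by
  rw [aevalAeval_map_mapRingHom, ← aevalAeval_pow_natCard, ← aevalAeval_map_mapRingHom (A := L),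
    aevalAeval_C_X_X]
  exact dvd_pow_self _ Nat.card_pos.ne'

lemma natCard_evalEval_eq_zero [DecidableEq L] {F : K[X][X]} (hF : F.Monic) {𝒦 : Finset L}
    (h𝒦 : ∀ x, x ∈ 𝒦 ↔ x ^ Nat.card K = x) :
    Nat.card {P : K × K // F.evalEval P.1 P.2 = 0} =
      ((curvePoints (F.map (mapRingHom (algebraMap K L))) 𝒦).filter
        fun P => P.2 ^ Nat.card K = P.2).card := by
  classical
  cases nonempty_fintype K
  have hinj := (algebraMap K L).injective
  rw [Nat.card_eq_fintype_card, Fintype.card_subtype,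
    ← Finset.card_map ⟨Prod.map (algebraMap K L) (algebraMap K L), hinj.prodMap hinj⟩]
  congr 1
  ext ⟨x, y⟩
  simp only [Finset.mem_map, Finset.mem_filter, Finset.mem_univ, true_and,
    mem_curvePoints (hF.map _), h𝒦, Function.Embedding.coeFn_mk, Prod.exists, Prod.map_apply,
    Prod.mk.injEq, pow_natCard_eq_self_iff]
  constructor
  · rintro ⟨a, b, hab, rfl, rfl⟩
    exact ⟨⟨⟨a, rfl⟩, by rw [map_mapRingHom_evalEval, hab, map_zero]⟩, b, rfl⟩
  · rintro ⟨⟨⟨a, rfl⟩, hab⟩, b, rfl⟩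
    rw [map_mapRingHom_evalEval, map_eq_zero] at hab
    exact ⟨a, b, hab, rfl, rfl⟩

end RationalPoints

section PlaneCurves

variable {K L : Type*} [Field K] [Finite K] [Field L] [IsAlgClosed L] [Algebra K L] {F : L[X][X]}

theorem card_le_of_pow_eq_sum (hF : F.Monic) (hirr : Irreducible F)
    (hFdeg : F ∈ totalDegreeFiltration L F.natDegree)
    (hfrob : F ∣ aevalAeval (C X ^ Nat.card K : L[X][X]) (X ^ Nat.card K) F)
    (hd : F.natDegree ≠ 0) (hq : 100 * F.natDegree ^ 3 ≤ (Nat.card K).sqrt) {e : ℕ}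
    (he : e ≤ F.natDegree) {h : Fin F.natDegree → Fin e → L[X][X]}
    (hh : ∀ l r, h l r ∈ totalDegreeFiltration L F.natDegree) {S : Finset (L × L)}
    (hS : ∀ P ∈ S, F.evalEval P.1 P.2 = 0 ∧ (F.map (evalRingHom P.1)).Separable ∧
      P.1 ^ Nat.card K = P.1 ∧ ∀ l : Fin F.natDegree, (P.2 ^ Nat.card K) ^ (l : ℕ) =
        ∑ r, (h l r).evalEval P.1 P.2 * (P.2 ^ Nat.card K) ^ (r : ℕ)) :
    S.card ≤ e * Nat.card K + 51 * F.natDegree ^ 3 * (Nat.card K).sqrt := by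
  have hsqrt := Nat.sqrt_le (Nat.card K)
  have hsqrt' := Nat.sqrt_le_add (Nat.card K)
  have hd3 : 0 < F.natDegree ^ 3 := by positivity
  set M := (Nat.card K).sqrt
  obtain ⟨A, B, hA, hcount, hdeg⟩ :=
    exists_stepanov_parameters (Nat.one_le_iff_ne_zero.2 hd) he hq hsqrt
  refine le_of_mul_le_mul_left (a := M) ?_ (by omega)
  calc M * S.card ≤ M * (e * Nat.card K) + 17 * F.natDegree ^ 3 * Nat.card K :=
        (mul_card_le_of_pow_eq_sum hF hirr hFdeg hfrob hh hS (by nlinarith) hA hcount).trans hdeg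
    _ ≤ M * (e * Nat.card K) + 17 * F.natDegree ^ 3 * (3 * (M * M)) := by
        gcongr
        nlinarith
    _ = M * (e * Nat.card K + 51 * F.natDegree ^ 3 * M) := by ring

lemma card_le_of_forall_pow_eq_self (hF : F.Monic) (hirr : Irreducible F)
    (hFdeg : F ∈ totalDegreeFiltration L F.natDegree)
    (hfrob : F ∣ aevalAeval (C X ^ Nat.card K : L[X][X]) (X ^ Nat.card K) F)
    (hd : F.natDegree ≠ 0) (hq : 100 * F.natDegree ^ 3 ≤ (Nat.card K).sqrt) {S : Finset (L × L)}
    (hS : ∀ P ∈ S, F.evalEval P.1 P.2 = 0 ∧ (F.map (evalRingHom P.1)).Separable ∧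
      P.1 ^ Nat.card K = P.1 ∧ P.2 ^ Nat.card K = P.2) :
    S.card ≤ Nat.card K + 51 * F.natDegree ^ 3 * (Nat.card K).sqrt := by
  refine (card_le_of_pow_eq_sum hF hirr hFdeg hfrob hd hq (Nat.one_le_iff_ne_zero.2 hd)
    (h := fun l _ => X ^ (l : ℕ)) (fun l _ => ?_) fun P hP => ?_).trans_eq (by rw [one_mul])
  · exact RingFiltration.mono (RingFiltration.pow_mem X_mem_totalDegreeFiltration _)
      (by have := l.is_lt; omega)
  · obtain ⟨hFP, hsep, hx, hy⟩ := hS P hP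
    exact ⟨hFP, hsep, hx, fun l => by simp [hy]⟩

-- Where `Y ^ q ≠ Y`, dividing `F (X, Y ^ q) - F (X, Y) = 0` by `Y ^ q - Y` shows that `Y ^ q`
-- satisfies an equation of degree one less than `F`.
lemma card_le_of_forall_pow_ne_self (hF : F.Monic) (hirr : Irreducible F)
    (hFdeg : F ∈ totalDegreeFiltration L F.natDegree)
    (hfrob : F ∣ aevalAeval (C X ^ Nat.card K : L[X][X]) (X ^ Nat.card K) F)
    (hq : 100 * F.natDegree ^ 3 ≤ (Nat.card K).sqrt) {e : ℕ} (he : F.natDegree = e + 1)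
    {S : Finset (L × L)}
    (hS : ∀ P ∈ S, F.evalEval P.1 P.2 = 0 ∧ (F.map (evalRingHom P.1)).Separable ∧
      P.1 ^ Nat.card K = P.1 ∧ P.2 ^ Nat.card K ≠ P.2) :
    S.card ≤ e * Nat.card K + 51 * F.natDegree ^ 3 * (Nat.card K).sqrt := by
  refine card_le_of_pow_eq_sum hF hirr hFdeg hfrob (by omega) hq (by omega)
    (h := fun l r => if (l : ℕ) = e then -divX^[(r : ℕ) + 1] F else if (l : ℕ) = r then 1 else 0)
    (fun l r => ?_) fun P hP => ?_
  · split_ifs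
    · exact neg_mem (iterate_divX_mem_totalDegreeFiltration hFdeg _)
    · exact RingFiltration.mono (RingFiltration.one_mem _) (by positivity)
    · exact zero_mem _
  obtain ⟨hFP, hsep, hx, hy⟩ := hS P hP
  refine ⟨hFP, hsep, hx, fun l => ?_⟩
  split_ifs with hl
  · have hquot := sub_mul_sum_evalEval_iterate_divX F P.1 P.2 (P.2 ^ Nat.card K)
    have hFq : F.evalEval P.1 (P.2 ^ Nat.card K) = 0 := by
      have := map_dvd (aevalAeval P.1 P.2 : L[X][X] →ₐ[L] L) hfrob
      simpa only [map_aevalAeval, map_pow, coe_aevalAeval_eq_evalEval, hFP, zero_dvd_iff,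
        evalEval_C, eval_X, evalEval_X, hx] using this
    have htop : divX^[e + 1] F = 1 := by
      rw [← he, iterate_divX_natDegree, hF.leadingCoeff, C_1]
    rw [hFq, hFP, sub_self, he, Finset.sum_range_succ, htop, evalEval_one, one_mul] at hquot
    have := (mul_eq_zero.1 hquot).resolve_left (sub_ne_zero.2 hy)
    simp only [evalEval_neg, neg_mul, Finset.sum_neg_distrib]
    rw [hl, ← Finset.sum_range (f := fun r => (divX^[r + 1] F).evalEval P.1 P.2 * _ ^ r)]
    exact eq_neg_of_add_eq_zero_right this
  · rw [Finset.sum_eq_single (⟨l, by omega⟩ : Fin e)]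
    · simp
    · intro r _ hr
      rw [if_neg (fun h => hr (Fin.ext h.symm)), evalEval_zero, zero_mul]
    · simp

lemma card_filter_curvePoints_bounds_of_separable [DecidableEq L] (hF : F.Monic)
    (hirr : Irreducible F) (hFdeg : F ∈ totalDegreeFiltration L F.natDegree)
    (hfrob : F ∣ aevalAeval (C X ^ Nat.card K : L[X][X]) (X ^ Nat.card K) F)
    (hd : F.natDegree ≠ 0) (hq : 100 * F.natDegree ^ 3 ≤ (Nat.card K).sqrt) {s : Finset L}
    (hfix : ∀ x ∈ s, x ^ Nat.card K = x) (hsep : ∀ x ∈ s, (F.map (evalRingHom x)).Separable) :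
    ((curvePoints F s).filter fun P => P.2 ^ Nat.card K = P.2).card ≤
        Nat.card K + 51 * F.natDegree ^ 3 * (Nat.card K).sqrt ∧
      s.card * F.natDegree + Nat.card K ≤
        ((curvePoints F s).filter fun P => P.2 ^ Nat.card K = P.2).card +
          F.natDegree * Nat.card K + 51 * F.natDegree ^ 3 * (Nat.card K).sqrt := by
  obtain ⟨e, he⟩ := Nat.exists_eq_succ_of_ne_zero hd
  have hs (P) (hP : P ∈ curvePoints F s) : F.evalEval P.1 P.2 = 0 ∧
      (F.map (evalRingHom P.1)).Separable ∧ P.1 ^ Nat.card K = P.1 := by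
    rw [mem_curvePoints hF] at hP
    exact ⟨hP.2, hsep _ hP.1, hfix _ hP.1⟩
  have hfixed := card_le_of_forall_pow_eq_self hF hirr hFdeg hfrob hd hq
    (S := (curvePoints F s).filter fun P => P.2 ^ Nat.card K = P.2) fun P hP => by
      simpa only [and_assoc] using (Finset.mem_filter.1 hP).imp_left (hs P)
  have hmoved := card_le_of_forall_pow_ne_self hF hirr hFdeg hfrob hq he
    (S := (curvePoints F s).filter fun P => ¬ P.2 ^ Nat.card K = P.2) fun P hP => by
      simpa only [and_assoc] using (Finset.mem_filter.1 hP).imp_left (hs P)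
  have hsplit := Finset.card_filter_add_card_filter_not (s := curvePoints F s)
    fun P => P.2 ^ Nat.card K = P.2
  rw [card_curvePoints_of_separable hF hsep] at hsplit
  have hmul : F.natDegree * Nat.card K = e * Nat.card K + Nat.card K := by
    rw [he, Nat.succ_mul]
  exact ⟨hfixed, by omega⟩

lemma card_filter_curvePoints_bounds [DecidableEq L] (hF : F.Monic) (hirr : Irreducible F)
    (hFdeg : F ∈ totalDegreeFiltration L F.natDegree)
    (hfrob : F ∣ aevalAeval (C X ^ Nat.card K : L[X][X]) (X ^ Nat.card K) F)
    (hder : derivative F ≠ 0) (hq : 100 * F.natDegree ^ 3 ≤ (Nat.card K).sqrt) {𝒦 : Finset L}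
    (h𝒦 : ∀ x, x ∈ 𝒦 ↔ x ^ Nat.card K = x) (hcard : 𝒦.card = Nat.card K) :
    ((curvePoints F 𝒦).filter fun P => P.2 ^ Nat.card K = P.2).card ≤
        Nat.card K + 53 * F.natDegree ^ 3 * (Nat.card K).sqrt ∧
      Nat.card K ≤ ((curvePoints F 𝒦).filter fun P => P.2 ^ Nat.card K = P.2).card +
        53 * F.natDegree ^ 3 * (Nat.card K).sqrt := by
  obtain ⟨Δ, hΔ, hΔdeg, hΔsep⟩ := exists_separable_of_eval_ne_zero hF hirr hFdeg hder
  set good := 𝒦.filter fun x => ¬ Δ.eval x = 0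
  set bad := 𝒦.filter fun x => Δ.eval x = 0
  obtain ⟨hupper, hlower⟩ := card_filter_curvePoints_bounds_of_separable hF hirr hFdeg hfrob
    (fun h0 => hder (derivative_of_natDegree_zero h0)) hq (s := good)
    (fun x hx => (h𝒦 x).1 (Finset.mem_filter.1 hx).1)
    fun x hx => hΔsep x (Finset.mem_filter.1 hx).2
  have hbad : bad.card * F.natDegree ≤ 2 * F.natDegree ^ 3 := by
    have : bad.card ≤ 2 * F.natDegree ^ 2 := (card_le_degree_of_subset_roots fun x hx => by
      simpa [hΔ] using (Finset.mem_filter.1 hx).2).trans hΔdeg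
    nlinarith
  have hsum : bad.card * F.natDegree + good.card * F.natDegree = F.natDegree * Nat.card K := by
    rw [← add_mul, Finset.card_filter_add_card_filter_not, hcard, mul_comm]
  have hcurve : ((curvePoints F 𝒦).filter fun P => P.2 ^ Nat.card K = P.2).card ≤
      ((curvePoints F good).filter fun P => P.2 ^ Nat.card K = P.2).card +
        bad.card * F.natDegree := by
    refine (Finset.card_le_card fun P hP => ?_).trans ((Finset.card_union_le _ _).trans
      (Nat.add_le_add_left (card_curvePoints_le hF) _))
    simp only [Finset.mem_union, Finset.mem_filter, mem_curvePoints hF, good, bad] at hP ⊢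
    tauto
  have hmono : ((curvePoints F good).filter fun P => P.2 ^ Nat.card K = P.2).card ≤
      ((curvePoints F 𝒦).filter fun P => P.2 ^ Nat.card K = P.2).card := by
    refine Finset.card_le_card fun P hP => ?_
    simp only [Finset.mem_filter, mem_curvePoints hF, good] at hP ⊢
    tauto
  have hone : F.natDegree ^ 3 ≤ F.natDegree ^ 3 * (Nat.card K).sqrt :=
    Nat.le_mul_of_pos_right _ (Nat.sqrt_pos.2 Nat.card_pos)
  constructor <;> linarith

theorem natCard_curve_bounds {F : K[X][X]} (hF : F.Monic)
    (hirr : Irreducible (F.map (mapRingHom (algebraMap K L))))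
    (hFdeg : F ∈ totalDegreeFiltration K F.natDegree) (hder : derivative F ≠ 0)
    (hq : 100 * F.natDegree ^ 3 ≤ (Nat.card K).sqrt) :
    Nat.card {P : K × K // F.evalEval P.1 P.2 = 0} ≤
        Nat.card K + 53 * F.natDegree ^ 3 * (Nat.card K).sqrt ∧
      Nat.card K ≤ Nat.card {P : K × K // F.evalEval P.1 P.2 = 0} +
        53 * F.natDegree ^ 3 * (Nat.card K).sqrt := by
  classical
  have : Fintype K := Fintype.ofFinite K
  let 𝒦 : Finset L := Finset.univ.map ⟨algebraMap K L, (algebraMap K L).injective⟩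
  have h𝒦 (x : L) : x ∈ 𝒦 ↔ x ^ Nat.card K = x := by
    simp only [𝒦, pow_natCard_eq_self_iff, Finset.mem_map, Finset.mem_univ, true_and,
      Function.Embedding.coeFn_mk]
  have hinj : Function.Injective (mapRingHom (algebraMap K L)) :=
    map_injective _ (algebraMap K L).injective
  have hdeg : (F.map (mapRingHom (algebraMap K L))).natDegree = F.natDegree := hF.natDegree_map _
  rw [natCard_evalEval_eq_zero hF h𝒦, ← hdeg]
  refine card_filter_curvePoints_bounds (hF.map _) hirr ?_
    (map_mapRingHom_dvd_aevalAeval_pow_natCard F) ?_ (by rwa [hdeg]) h𝒦 ?_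
  · rw [mem_totalDegreeFiltration, hdeg]
    intro i j hij
    refine mem_totalDegreeFiltration.1 hFdeg i j fun h0 => hij ?_
    simp [h0]
  · rwa [derivative_map, (map_injective _ hinj).ne_iff' (Polynomial.map_zero _)]
  · rw [Finset.card_map, Finset.card_univ, ← Nat.card_eq_fintype_card]

end PlaneCurves

/-! ### Restriction to lines -/

section MvTotalDegree

variable {σ R A : Type*} [CommRing R] [CommRing A] [Algebra R A]

variable (σ R) in
/-- The filtration of `R[X_i | i : σ]` by total degree. -/
noncomputable def mvTotalDegreeFiltration : RingFiltration (MvPolynomial σ R) where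
  level T := (MvPolynomial.restrictSupport R {s | (s.degree : ℤ) ≤ T}).toAddSubgroup
  one_mem' := by
    rw [Submodule.mem_toAddSubgroup, MvPolynomial.one_def,
      MvPolynomial.monomial_mem_restrictSupport]
    simp
  mul_mem' {a b x y} hx hy := by
    rw [Submodule.mem_toAddSubgroup] at *
    refine MvPolynomial.restrictSupport_mono R ?_
      ((MvPolynomial.restrictSupport_add R _ _).ge (Submodule.mul_mem_mul hx hy))
    rintro _ ⟨s, hs, t, ht, rfl⟩
    simpa using add_le_add hs ht
  mono' hab := MvPolynomial.restrictSupport_mono R fun _ hs => hs.trans hab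

lemma mem_mvTotalDegreeFiltration {p : MvPolynomial σ R} {T : ℤ} :
    p ∈ mvTotalDegreeFiltration σ R T ↔ ∀ s ∈ p.support, (s.degree : ℤ) ≤ T := Iff.rfl

lemma mem_mvTotalDegreeFiltration_natCast {p : MvPolynomial σ R} {n : ℕ} :
    p ∈ mvTotalDegreeFiltration σ R n ↔ p.totalDegree ≤ n := by
  simp only [mem_mvTotalDegreeFiltration, Nat.cast_le, MvPolynomial.totalDegree, Finset.sup_le_iff]
  rfl

lemma mvC_mem_mvTotalDegreeFiltration (c : R) :
    MvPolynomial.C c ∈ mvTotalDegreeFiltration σ R 0 :=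
  mem_mvTotalDegreeFiltration_natCast.2 (MvPolynomial.totalDegree_C c).le

lemma mvX_mem_mvTotalDegreeFiltration (i : σ) :
    MvPolynomial.X i ∈ mvTotalDegreeFiltration σ R 1 :=
  mem_mvTotalDegreeFiltration_natCast.2 ((MvPolynomial.totalDegree_monomial_le _ _).trans (by simp))

lemma aeval_mem {𝒮 : RingFiltration A} (hc : ∀ c : R, algebraMap R A c ∈ 𝒮 0) {g : σ → A} {w : ℕ}
    (hg : ∀ i, g i ∈ 𝒮 w) {p : MvPolynomial σ R} {T : ℤ} (hp : p ∈ mvTotalDegreeFiltration σ R T) :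
    MvPolynomial.aeval g p ∈ 𝒮 (w * T) := by
  rw [MvPolynomial.aeval_def, MvPolynomial.eval₂_eq]
  refine sum_mem fun s hs => ?_
  refine RingFiltration.mono (RingFiltration.mul_mem (hc _)
    (RingFiltration.prod_mem fun i _ => RingFiltration.pow_mem (hg i) (s i))) ?_
  rw [zero_add, ← Finset.sum_mul, mul_comm]
  refine mul_le_mul_of_nonneg_left ?_ w.cast_nonneg
  simpa [Finsupp.degree_apply] using mem_mvTotalDegreeFiltration.1 hp s hs

end MvTotalDegree

section LineRestriction

variable {σ R A B : Type*} [CommRing R] [CommRing A] [Algebra R A] [CommRing B] [Algebra R B]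

/-- The restriction `X_i ↦ a_i + b_i t` of polynomials to the line through `a` with direction `b`.
The coordinates of `a` and `b` may lie in any algebra, so as to allow generic lines. -/
noncomputable def lineRestriction (a b : σ → A) : MvPolynomial σ R →ₐ[R] A[X] :=
  MvPolynomial.aeval fun i => C (a i) + C (b i) * X

lemma lineRestriction_X (a b : σ → A) (i : σ) :
    lineRestriction a b (MvPolynomial.X i : MvPolynomial σ R) = C (a i) + C (b i) * X :=
  MvPolynomial.aeval_X _ i

lemma map_lineRestriction (φ : A →ₐ[R] B) (a b : σ → A) (p : MvPolynomial σ R) :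
    (lineRestriction a b p).map (φ : A →+* B) = lineRestriction (φ ∘ a) (φ ∘ b) p :=
  DFunLike.congr_fun (show (mapAlgHom φ).comp (lineRestriction a b) = _ from
    MvPolynomial.algHom_ext fun i => by simp [lineRestriction_X]) p

lemma lineRestriction_map [Algebra A B] [IsScalarTower R A B] (a b : σ → B)
    (p : MvPolynomial σ R) :
    lineRestriction a b (MvPolynomial.map (algebraMap R A) p) = lineRestriction a b p :=
  MvPolynomial.aeval_map_algebraMap A _ p

lemma eval_lineRestriction (a b : σ → A) (t : A) (p : MvPolynomial σ R) :
    (lineRestriction a b p).eval t = MvPolynomial.aeval (a + t • b) p :=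
  DFunLike.congr_fun (show ((aeval t : A[X] →ₐ[A] A).restrictScalars R).comp
      (lineRestriction a b) = MvPolynomial.aeval (a + t • b) from
    MvPolynomial.algHom_ext fun i => by simp [lineRestriction_X, mul_comm t]) p

lemma derivative_lineRestriction [Fintype σ] (a b : σ → A) (p : MvPolynomial σ R) :
    derivative (lineRestriction a b p) =
      ∑ i, C (b i) * lineRestriction a b (MvPolynomial.pderiv i p) := by
  classical
  induction p using MvPolynomial.induction_on with
  | C c => simp
  | add p q hp hq => simp only [map_add, hp, hq, mul_add, Finset.sum_add_distrib]
  | mul_X p j hp =>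
    have hj : ∑ i, C (b i) * (lineRestriction a b p * lineRestriction a b
        (Pi.single (M := fun _ => MvPolynomial σ R) i 1 j)) = lineRestriction a b p * C (b j) := by
      rw [Finset.sum_eq_single j (fun i _ hi => by simp [Pi.single_eq_of_ne hi.symm]) (by simp),
        Pi.single_eq_same, map_one, mul_one, mul_comm]
    have hX : derivative (C (a j) + C (b j) * X) = C (b j) := by simp
    rw [map_mul, derivative_mul, hp, lineRestriction_X, hX]
    simp only [map_mul, MvPolynomial.pderiv_mul, map_add, mul_add (C _), Finset.sum_add_distrib,
      MvPolynomial.pderiv_X, hj, lineRestriction_X, Finset.sum_mul, mul_assoc]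

lemma coeff_lineRestriction_zero (b : σ → A) (p : MvPolynomial σ R) (n : ℕ) :
    (lineRestriction 0 b p).coeff n =
      MvPolynomial.aeval b (MvPolynomial.homogeneousComponent n p) := by
  classical
  have hprod (s : σ →₀ ℕ) : ∏ i ∈ s.support, (C (b i) * X) ^ s i =
      C (∏ i ∈ s.support, b i ^ s i) * X ^ s.degree := by
    simp [mul_pow, Finset.prod_mul_distrib, Finset.prod_pow_eq_pow_sum, Finsupp.degree_apply]
  rw [lineRestriction, MvPolynomial.aeval_def, MvPolynomial.eval₂_eq, MvPolynomial.aeval_def,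
    MvPolynomial.eval₂_eq, MvPolynomial.support_homogeneousComponent, Finset.sum_filter,
    finsetSum_coeff]
  refine Finset.sum_congr rfl fun s _ => ?_
  simp only [Pi.zero_apply, map_zero, zero_add, MvPolynomial.coeff_homogeneousComponent]
  rw [hprod, Polynomial.algebraMap_apply, ← mul_assoc, ← C_mul, coeff_C_mul_X_pow]
  simp only [eq_comm (a := n)]
  split_ifs <;> rfl

lemma lineRestriction_mem {𝒮 : RingFiltration A[X]} {a b : σ → A} {w : ℕ}
    (hc : ∀ c : R, C (algebraMap R A c) ∈ 𝒮 0) (hab : ∀ i, C (a i) + C (b i) * X ∈ 𝒮 w)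
    {p : MvPolynomial σ R} {T : ℤ} (hp : p ∈ mvTotalDegreeFiltration σ R T) :
    lineRestriction a b p ∈ 𝒮 (w * T) :=
  aeval_mem hc hab hp

lemma natDegree_lineRestriction_le (a b : σ → A) (p : MvPolynomial σ R) :
    (lineRestriction a b p).natDegree ≤ p.totalDegree := by
  have hC (c : A) : C c ∈ (RingFiltration.const A).polynomial 1 0 :=
    RingFiltration.polynomial_C_mem (RingFiltration.mem_const.2 (Or.inr le_rfl))
  have hab (i : σ) : C (a i) + C (b i) * X ∈ (RingFiltration.const A).polynomial 1 (1 : ℕ) := by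
    refine mem_polynomial_const_iff_natDegree_le.2 ?_
    compute_degree
  rw [← mem_polynomial_const_iff_natDegree_le]
  simpa only [Nat.cast_one, one_mul] using lineRestriction_mem (fun c : R => hC _) hab
    (mem_mvTotalDegreeFiltration_natCast.2 (le_refl p.totalDegree))

end LineRestriction

section GenericLine

variable {σ R : Type*} [CommRing R]

/-- The restriction to the generic line through `a`, whose direction is the point with
indeterminate coordinates. -/
noncomputable abbrev genericLineRestriction (a : σ → R) :
    MvPolynomial σ R →ₐ[R] (MvPolynomial σ R)[X] :=
  lineRestriction (MvPolynomial.C ∘ a) MvPolynomial.X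

lemma map_eval_genericLineRestriction (a b : σ → R) (p : MvPolynomial σ R) :
    (genericLineRestriction a p).map (MvPolynomial.eval b) = lineRestriction a b p := by
  have h := map_lineRestriction (MvPolynomial.aeval b) (MvPolynomial.C ∘ a) MvPolynomial.X p
  have ha : (MvPolynomial.aeval b : _ →ₐ[R] R) ∘ MvPolynomial.C ∘ a = a := by ext; simp
  have hb : (MvPolynomial.aeval b : _ →ₐ[R] R) ∘ MvPolynomial.X = b := by ext; simp
  rw [ha, hb] at h
  exact h

lemma genericLineRestriction_mem (a : σ → R) (p : MvPolynomial σ R) :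
    genericLineRestriction a p ∈ (mvTotalDegreeFiltration σ R).polynomial (-1) 0 := by
  have hp : p ∈ mvTotalDegreeFiltration σ R p.totalDegree :=
    mem_mvTotalDegreeFiltration_natCast.2 le_rfl
  have hC (c : R) : C (MvPolynomial.C c) ∈ (mvTotalDegreeFiltration σ R).polynomial (-1) 0 :=
    RingFiltration.polynomial_C_mem (mvC_mem_mvTotalDegreeFiltration c)
  have hX (i : σ) :
      C (MvPolynomial.X i) * X ∈ (mvTotalDegreeFiltration σ R).polynomial (-1) (1 + -1) :=
    RingFiltration.mul_mem (RingFiltration.polynomial_C_mem (mvX_mem_mvTotalDegreeFiltration i))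
      RingFiltration.polynomial_X_mem
  have hline (i : σ) : C ((MvPolynomial.C ∘ a) i) + C (MvPolynomial.X i) * X ∈
      (mvTotalDegreeFiltration σ R).polynomial (-1) (0 : ℕ) :=
    add_mem (hC (a i)) (by rw [Nat.cast_zero, ← add_neg_cancel (1 : ℤ)]; exact hX i)
  have h := lineRestriction_mem hC hline hp
  rwa [Nat.cast_zero, zero_mul] at h

/-- The translation `X_i ↦ a_i + X_i`. -/
noncomputable def translation (a : σ → R) : MvPolynomial σ R ≃ₐ[R] MvPolynomial σ R :=
  AlgEquiv.ofAlgHom (MvPolynomial.aeval fun i => MvPolynomial.C (a i) + MvPolynomial.X i)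
    (MvPolynomial.aeval fun i => MvPolynomial.C (-a i) + MvPolynomial.X i)
    (MvPolynomial.algHom_ext fun i => by simp [MvPolynomial.algebraMap_eq])
    (MvPolynomial.algHom_ext fun i => by simp [MvPolynomial.algebraMap_eq])

lemma eval_one_genericLineRestriction (a : σ → R) (p : MvPolynomial σ R) :
    (genericLineRestriction a p).eval 1 = translation a p := by
  rw [eval_lineRestriction, one_smul]
  rfl

lemma eval_zero_genericLineRestriction (a : σ → R) (p : MvPolynomial σ R) :
    (genericLineRestriction a p).eval 0 = MvPolynomial.C (MvPolynomial.eval a p) := by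
  rw [eval_lineRestriction, zero_smul, add_zero]
  exact MvPolynomial.aeval_algebraMap_apply (MvPolynomial σ R) a p

end GenericLine

section Factors

variable {R ι : Type*} [CommRing R]

lemma exists_eq_prod_X_sub_C_of_dvd [IsDomain R] {s : Finset ι} {φ : ι → R} {g : R[X]}
    (hg : g.Monic) (h : g ∣ ∏ i ∈ s, (X - C (φ i))) : ∃ t ⊆ s, g = ∏ i ∈ t, (X - C (φ i)) := by
  classical
  obtain ⟨k, hk⟩ := h
  rw [eq_comm, ← one_mul (∏ i ∈ s, _)] at hk
  obtain ⟨t, u, b, c, rfl, -, hbc, rfl, -⟩ :=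
    mul_eq_mul_prime_prod (fun i _ => prime_X_sub_C (φ i)) hk
  refine ⟨t, Finset.subset_union_left, ?_⟩
  have hb : b.Monic := Monic.of_mul_monic_right (monic_prod_of_monic _ _ fun i _ =>
    monic_X_sub_C _) hg
  rw [hb.eq_one_of_isUnit (.of_mul_eq_one c hbc.symm), one_mul]

lemma coeff_coeff_swap (f : R[X][X]) (i j : ℕ) :
    ((Bivariate.swap f).coeff i).coeff j = (f.coeff j).coeff i := by
  induction f using Polynomial.induction_on' with
  | add p q hp hq => simp only [map_add, coeff_add, hp, hq]
  | monomial n a =>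
    induction a using Polynomial.induction_on' with
    | add p q hp hq => simp only [map_add, coeff_add, hp, hq]
    | monomial m r =>
      rw [Bivariate.swap_monomial_monomial]
      simp only [coeff_monomial]
      split_ifs <;> simp_all [coeff_monomial]

lemma natDegree_swap_le_iff {f : R[X][X]} {n : ℕ} :
    (Bivariate.swap f).natDegree ≤ n ↔ ∀ j, (f.coeff j).natDegree ≤ n := by
  simp only [natDegree_le_iff_coeff_eq_zero, Polynomial.ext_iff, coeff_coeff_swap, coeff_zero]
  exact ⟨fun h j i hi => h i hi j, fun h i hi j => h j i hi⟩

lemma natDegree_coeff_le_of_dvd [IsDomain R] {f g : R[X][X]} (hf : f ≠ 0) (hg : g ∣ f) {n : ℕ}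
    (h : ∀ j, (f.coeff j).natDegree ≤ n) (j : ℕ) : (g.coeff j).natDegree ≤ n := by
  rw [← natDegree_swap_le_iff] at h
  obtain ⟨k, rfl⟩ := hg
  obtain ⟨hg, hk⟩ := mul_ne_zero_iff.1 hf
  rw [map_mul, natDegree_mul (by simpa using hg) (by simpa using hk)] at h
  exact natDegree_swap_le_iff.1 (by omega) j

end Factors

/-! ### Irreducibility of plane sections -/

section Truncation

variable {R S ι : Type*} [CommRing R] [CommRing S] [IsDomain S] {F : R[X][X]} {n : ℕ}
  {s t : Finset ι} {Φ : ι → R⟦X⟧}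

lemma exists_coeff_eq_trunc (G : R⟦X⟧[X]) (n : ℕ) :
    ∃ g : R[X][X], ∀ j, g.coeff j = PowerSeries.trunc n (G.coeff j) := by
  refine ⟨∑ j ∈ Finset.range (G.natDegree + 1), C (PowerSeries.trunc n (G.coeff j)) * X ^ j,
    fun j => ?_⟩
  simp only [finsetSum_coeff, coeff_C_mul_X_pow, Finset.sum_ite_eq, Finset.mem_range]
  split_ifs with h
  · rfl
  · rw [coeff_eq_zero_of_natDegree_lt (by omega), map_zero]

lemma exists_monic_X_pow_dvd_map_sub [Nontrivial R] {G : R⟦X⟧[X]} (hG : G.Monic) {N : ℕ}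
    (hvan : ∀ j k, n < k → k ≤ N → PowerSeries.coeff k (G.coeff j) = 0) :
    ∃ g : R[X][X], g.Monic ∧ g.natDegree = G.natDegree ∧ (∀ j, (g.coeff j).natDegree ≤ n) ∧
      C (PowerSeries.X ^ (N + 1)) ∣ g.map coeToPowerSeries.ringHom - G := by
  obtain ⟨g, hg⟩ := exists_coeff_eq_trunc G (n + 1)
  have hgdeg : g.natDegree ≤ G.natDegree := natDegree_le_iff_coeff_eq_zero.2 fun j hj => by
    rw [hg, coeff_eq_zero_of_natDegree_lt hj, map_zero]
  have hg1 : g.coeff G.natDegree = 1 := by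
    rw [hg, hG.coeff_natDegree, PowerSeries.trunc_one]
  refine ⟨g, monic_of_natDegree_le_of_coeff_eq_one _ hgdeg hg1, le_antisymm hgdeg
    (le_natDegree_of_ne_zero (hg1 ▸ one_ne_zero)), fun j => ?_, ?_⟩
  · exact hg j ▸ Nat.lt_succ_iff.1 (PowerSeries.natDegree_trunc_lt (G.coeff j) n)
  refine (C_dvd_iff_dvd_coeff _ _).2 fun j => PowerSeries.X_pow_dvd_iff.2 fun k hk => ?_
  rw [coeff_sub, coeff_map, hg, coeToPowerSeries.ringHom_apply, map_sub, coeff_coe,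
    PowerSeries.coeff_trunc]
  split_ifs with hkn
  · exact sub_self _
  · rw [hvan j k (by omega) (by omega), sub_zero]

lemma eq_zero_of_X_pow_dvd_coe {r : R[X]} {N : ℕ} (hr : r.natDegree ≤ N)
    (h : PowerSeries.X ^ (N + 1) ∣ (r : R⟦X⟧)) : r = 0 := by
  ext k
  obtain hk | hk := lt_or_ge N k
  · exact coeff_eq_zero_of_natDegree_lt (hr.trans_lt hk)
  · simpa using PowerSeries.X_pow_dvd_iff.1 h k (by omega)

lemma monic_of_map_eq_prod_X_sub_C
    (hF : F.map coeToPowerSeries.ringHom = ∏ i ∈ s, (X - C (Φ i))) : F.Monic := by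
  rw [(coe_injective R).monic_map_iff (f := coeToPowerSeries.ringHom), hF]
  exact monic_prod_of_monic _ _ fun i _ => monic_X_sub_C _

-- If the partial product over `t` is a polynomial up to high order, then its truncation `g` meets
-- `F` along a branch to such a high order that the resultant must vanish identically.
lemma exists_resultant_eq_zero_of_coeff_eq_zero [IsDomain R]
    (hF : F.map coeToPowerSeries.ringHom = ∏ i ∈ s, (X - C (Φ i)))
    (hdeg : ∀ j, (F.coeff j).natDegree ≤ n) (hts : t ⊆ s) (ht : t.Nonempty)
    (hvan : ∀ j k, n < k → k ≤ (F.natDegree + t.card) * n →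
      PowerSeries.coeff k ((∏ i ∈ t, (X - C (Φ i))).coeff j) = 0) :
    ∃ g : R[X][X], g.Monic ∧ g.natDegree = t.card ∧ resultant F g F.natDegree t.card = 0 := by
  obtain ⟨g, hg, hgdeg, hgn, hdvd⟩ := exists_monic_X_pow_dvd_map_sub
    (monic_prod_of_monic _ _ fun i _ => monic_X_sub_C (Φ i)) hvan
  rw [natDegree_finsetProd_X_sub_C_eq_card] at hgdeg
  refine ⟨g, hg, hgdeg, eq_zero_of_X_pow_dvd_coe (N := (F.natDegree + t.card) * n) ?_ ?_⟩
  · rw [← mem_polynomial_const_iff_natDegree_le]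
    convert RingFiltration.resultant_mem (𝒮 := (RingFiltration.const R).polynomial 1)
      (fun j => mem_polynomial_const_iff_natDegree_le.2 (hdeg j))
      (fun j => mem_polynomial_const_iff_natDegree_le.2 (hgn j)) F.natDegree t.card using 2
    push_cast
    ring
  · obtain ⟨i, hi⟩ := ht
    have hres := resultant_eq_prod_eval_of_eq_prod (g.map coeToPowerSeries.ringHom) hF
      (natDegree_map_le.trans hgdeg.le)
    rw [(monic_of_map_eq_prod_X_sub_C hF).natDegree_map, resultant_map_map,
      coeToPowerSeries.ringHom_apply] at hres
    have heval := eval_dvd (x := Φ i) hdvd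
    rw [eval_C, eval_sub, eval_prod, Finset.prod_eq_zero hi (by simp), sub_zero] at heval
    rw [hres]
    exact heval.trans (Finset.dvd_prod_of_mem _ (hts hi))

lemma exists_coeff_prod_eq_zero_of_dvd_map
    (hF : F.map coeToPowerSeries.ringHom = ∏ i ∈ s, (X - C (Φ i)))
    (hdeg : ∀ j, (F.coeff j).natDegree ≤ n) (φ : R →+* S) {g : S[X][X]} (hg : g.Monic)
    (hdvd : g ∣ F.map (mapRingHom φ)) :
    ∃ t ⊆ s, t.card = g.natDegree ∧
      ∀ j k, n < k → φ (PowerSeries.coeff k ((∏ i ∈ t, (X - C (Φ i))).coeff j)) = 0 := by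
  have hprod : (F.map (mapRingHom φ)).map coeToPowerSeries.ringHom =
      ∏ i ∈ s, (X - C (PowerSeries.map φ (Φ i))) := by
    have hcomp : coeToPowerSeries.ringHom.comp (mapRingHom φ) =
        (PowerSeries.map φ).comp coeToPowerSeries.ringHom := by
      ext <;> simp
    rw [map_map, hcomp, ← map_map, hF, Polynomial.map_prod]
    simp only [Polynomial.map_sub, map_X, map_C]
  obtain ⟨t, hts, ht⟩ := exists_eq_prod_X_sub_C_of_dvd (hg.map coeToPowerSeries.ringHom)
    (hprod ▸ Polynomial.map_dvd coeToPowerSeries.ringHom hdvd)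
  refine ⟨t, hts, ?_, fun j k hk => ?_⟩
  · rw [← hg.natDegree_map coeToPowerSeries.ringHom, ht, natDegree_finsetProd_X_sub_C_eq_card]
  have hgdeg : (g.coeff j).natDegree ≤ n :=
    natDegree_coeff_le_of_dvd ((monic_of_map_eq_prod_X_sub_C hF).map _).ne_zero hdvd
      (fun i => by rw [coeff_map]; exact natDegree_map_le.trans (hdeg i)) j
  have hmap : (∏ i ∈ t, (X - C (Φ i))).map (PowerSeries.map φ) =
      g.map coeToPowerSeries.ringHom := by
    rw [ht, Polynomial.map_prod]
    simp only [Polynomial.map_sub, map_X, map_C]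
  rw [← PowerSeries.coeff_map, ← coeff_map, hmap, coeff_map, coeToPowerSeries.ringHom_apply,
    coeff_coe, coeff_eq_zero_of_natDegree_lt (hgdeg.trans_lt hk)]

end Truncation

section Bertini

variable {σ L ι : Type*} [Field L] {f : (MvPolynomial σ L)[X]} {a : σ → L} {s t : Finset ι}
  {Φ : ι → (MvPolynomial σ L)⟦X⟧}

/-- The restriction of the hypersurface `f = 0` to the plane spanned by the generic line through
`a` and the direction of the distinguished variable. -/
noncomputable abbrev genericSection (f : (MvPolynomial σ L)[X]) (a : σ → L) :
    (MvPolynomial σ L)[X][X] :=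
  f.map (genericLineRestriction a : MvPolynomial σ L →+* (MvPolynomial σ L)[X])

lemma map_eval_genericSection (f : (MvPolynomial σ L)[X]) (a b : σ → L) :
    (genericSection f a).map (mapRingHom (MvPolynomial.eval b)) =
      f.map (lineRestriction (R := L) a b : MvPolynomial σ L →+* L[X]) := by
  rw [genericSection, map_map]
  congr 1
  exact RingHom.ext (map_eval_genericLineRestriction a b)

lemma map_eval_one_genericSection (f : (MvPolynomial σ L)[X]) (a : σ → L) :
    (genericSection f a).map (evalRingHom 1) =
      mapEquiv (translation a : MvPolynomial σ L ≃+* MvPolynomial σ L) f := by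
  rw [genericSection, map_map, mapEquiv_apply]
  congr 1
  exact RingHom.ext (eval_one_genericLineRestriction a)

lemma map_constantCoeff_genericSection (f : (MvPolynomial σ L)[X]) (a : σ → L) :
    ((genericSection f a).map coeToPowerSeries.ringHom).map PowerSeries.constantCoeff =
      (f.map (MvPolynomial.eval a)).map MvPolynomial.C := by
  rw [genericSection, map_map, map_map, map_map]
  congr 1
  refine RingHom.ext fun p => ?_
  rw [RingHom.comp_apply, RingHom.comp_apply, RingHom.comp_apply, coeToPowerSeries.ringHom_apply,
    constantCoeff_coe, coeff_zero_eq_eval_zero]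
  exact eval_zero_genericLineRestriction a p

lemma natDegree_coeff_genericSection_le {n : ℕ} (hn : ∀ j, (f.coeff j).totalDegree ≤ n) (j : ℕ) :
    ((genericSection f a).coeff j).natDegree ≤ n := by
  rw [coeff_map]
  exact (natDegree_lineRestriction_le _ _ _).trans (hn j)

lemma eval_genericSection_mem {ψ : (MvPolynomial σ L)⟦X⟧}
    (hψ : ψ ∈ (mvTotalDegreeFiltration σ L).powerSeries (-1) 0) :
    ((genericSection f a).map coeToPowerSeries.ringHom).eval ψ ∈
      (mvTotalDegreeFiltration σ L).powerSeries (-1) 0 := by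
  rw [eval_eq_sum_range]
  refine AddSubgroup.sum_mem _ fun i _ => ?_
  have hcoeff : ((genericSection f a).map coeToPowerSeries.ringHom).coeff i ∈
      (mvTotalDegreeFiltration σ L).powerSeries (-1) 0 := fun n => by
    rw [coeff_map, coeff_map, coeToPowerSeries.ringHom_apply, coeff_coe]
    exact RingFiltration.mem_polynomial.1 (genericLineRestriction_mem a (f.coeff i)) n
  simpa using RingFiltration.mul_mem hcoeff (RingFiltration.pow_mem hψ i)

lemma exists_branches [IsAlgClosed L] (hf : f.Monic)
    (hsep : (f.map (MvPolynomial.eval a)).Separable) :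
    ∃ (s : Finset (MvPolynomial σ L)) (Φ : MvPolynomial σ L → (MvPolynomial σ L)⟦X⟧),
      (∀ α ∈ s, Φ α ∈ (mvTotalDegreeFiltration σ L).powerSeries (-1) 0) ∧
      (genericSection f a).map coeToPowerSeries.ringHom = ∏ α ∈ s, (X - C (Φ α)) := by
  classical
  set f₀ := f.map (MvPolynomial.eval a)
  set F := (genericSection f a).map coeToPowerSeries.ringHom
  have hF : F.map PowerSeries.constantCoeff = f₀.map MvPolynomial.C :=
    map_constantCoeff_genericSection f a
  have hroot : ∀ x ∈ f₀.roots.toFinset, f₀.eval x = 0 := fun x hx =>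
    isRoot_of_mem_roots (Multiset.mem_toFinset.1 hx)
  have hunit : ∀ x ∈ f₀.roots.toFinset, MvPolynomial.C (σ := σ) (f₀.derivative.eval x)⁻¹ *
      (F.map PowerSeries.constantCoeff).derivative.eval (MvPolynomial.C x) = 1 := fun x hx => by
    rw [hF, derivative_map f₀, eval_map, eval₂_at_apply, ← map_mul, inv_mul_cancel₀, map_one]
    exact hsep.eval₂_derivative_ne_zero (RingHom.id L) (hroot x hx)
  obtain ⟨Φ, hΦ, hprod⟩ := exists_prod_X_sub_C_of_simple_roots (f := F)
    ((hf.map _).map _) (s := f₀.roots.toFinset.image MvPolynomial.C) (by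
      rw [Finset.card_image_of_injective _ (MvPolynomial.C_injective σ L),
        Multiset.toFinset_card_of_nodup (nodup_roots hsep),
        ← (IsAlgClosed.splits f₀).natDegree_eq_card_roots, hf.natDegree_map,
        (hf.map _).natDegree_map, hf.natDegree_map])
    (Finset.forall_mem_image.2 fun x hx => by
      rw [hF, eval_map, eval₂_at_apply, hroot x hx, map_zero])
    (Finset.forall_mem_image.2 fun x hx => .of_mul_eq_one_right _ (hunit x hx))
  refine ⟨_, Φ, Finset.forall_mem_image.2 fun x hx => ?_, hprod⟩
  obtain ⟨h0, hc⟩ := hΦ _ (Finset.mem_image_of_mem _ hx)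
  refine mem_powerSeries_of_eval_eq_zero h0 hc (hunit x hx) (mvC_mem_mvTotalDegreeFiltration x)
    fun ψ hψ => ?_
  simpa using RingFiltration.mul_mem (RingFiltration.powerSeries_C_mem
    (mvC_mem_mvTotalDegreeFiltration _)) (eval_genericSection_mem hψ)

lemma exists_coeff_prod_ne_zero_of_irreducible {n : ℕ} (hf : f.Monic) (hirr : Irreducible f)
    (hn : ∀ j, (f.coeff j).totalDegree ≤ n)
    (hΦ : (genericSection f a).map coeToPowerSeries.ringHom = ∏ i ∈ s, (X - C (Φ i)))
    (hts : t ⊆ s) (ht : t.Nonempty) (hcard : t.card < f.natDegree) :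
    ∃ j k, n < k ∧ k ≤ (f.natDegree + t.card) * n ∧
      PowerSeries.coeff k ((∏ i ∈ t, (X - C (Φ i))).coeff j) ≠ 0 := by
  by_contra! hvan
  have hdeg : (genericSection f a).natDegree = f.natDegree := hf.natDegree_map _
  obtain ⟨g, hg, hgdeg, hres⟩ := exists_resultant_eq_zero_of_coeff_eq_zero hΦ
    (natDegree_coeff_genericSection_le hn) hts ht (hdeg.symm ▸ hvan)
  set τ := mapEquiv (translation a : MvPolynomial σ L ≃+* MvPolynomial σ L)
  have hτ : (τ f).Monic := hf.map _
  have hτdeg : (τ f).natDegree = f.natDegree := hf.natDegree_map _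
  have hg₁ : (g.map (evalRingHom 1)).natDegree = t.card := by rw [hg.natDegree_map, hgdeg]
  have hnd : ¬ τ f ∣ g.map (evalRingHom 1) := hτ.not_dvd_of_natDegree_lt (hg.map _).ne_zero (by
    rwa [hg₁, hτdeg])
  refine resultant_ne_zero_of_irreducible hτ ((MulEquiv.irreducible_iff τ).2 hirr) hnd hg₁.le ?_
  rw [hτdeg, ← map_eval_one_genericSection, ← hdeg, resultant_map_map, hres, map_zero]

lemma totalDegree_coeff_prod_X_sub_C_le
    (hΦ : ∀ i ∈ s, Φ i ∈ (mvTotalDegreeFiltration σ L).powerSeries (-1) 0) (j k : ℕ) :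
    (PowerSeries.coeff k ((∏ i ∈ s, (X - C (Φ i))).coeff j)).totalDegree ≤ k := by
  have h : ∏ i ∈ s, (X - C (Φ i)) ∈
      ((mvTotalDegreeFiltration σ L).powerSeries (-1)).polynomial 0 0 := by
    simpa using RingFiltration.prod_mem (w := fun _ => 0) fun i hi => AddSubgroup.sub_mem _
      (RingFiltration.polynomial_X_mem (w := 0)) (RingFiltration.polynomial_C_mem (hΦ i hi))
  rw [← mem_mvTotalDegreeFiltration_natCast]
  convert RingFiltration.mem_polynomial.1 h j k using 2
  ring

-- The conditions on `b` are that no proper partial product of the branches over `a` becomes a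
-- polynomial of small degree on the line through `a` in the direction `b`.
theorem exists_ne_zero_forall_irreducible_map_lineRestriction [IsAlgClosed L] {n : ℕ}
    (hf : f.Monic) (hirr : Irreducible f) (hn : ∀ j, (f.coeff j).totalDegree ≤ n)
    (hsep : (f.map (MvPolynomial.eval a)).Separable) :
    ∃ P : MvPolynomial σ L, P ≠ 0 ∧
      P.totalDegree ≤ 2 ^ f.natDegree * (2 * f.natDegree * n) ∧
      ∀ b, MvPolynomial.eval b P ≠ 0 →
        Irreducible (f.map (lineRestriction (R := L) a b : MvPolynomial σ L →+* L[X])) := by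
  classical
  obtain ⟨s, Φ, hΦ, hprod⟩ := exists_branches hf hsep
  have hs : s.card = f.natDegree := by
    rw [← natDegree_finsetProd_X_sub_C_eq_card s Φ, ← hprod, (hf.map _).natDegree_map,
      hf.natDegree_map]
  have key : ∀ t ∈ s.powerset, ∃ Q : MvPolynomial σ L, Q ≠ 0 ∧
      Q.totalDegree ≤ 2 * f.natDegree * n ∧ (t.Nonempty → t.card < f.natDegree →
        ∃ j k, n < k ∧ PowerSeries.coeff k ((∏ α ∈ t, (X - C (Φ α))).coeff j) = Q) := by
    intro t hts
    rw [Finset.mem_powerset] at hts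
    by_cases ht : t.Nonempty ∧ t.card < f.natDegree
    · obtain ⟨j, k, hnk, hk, hne⟩ :=
        exists_coeff_prod_ne_zero_of_irreducible hf hirr hn hprod hts ht.1 ht.2
      refine ⟨_, hne, ?_, fun _ _ => ⟨j, k, hnk, rfl⟩⟩
      refine (totalDegree_coeff_prod_X_sub_C_le (fun α hα => hΦ α (hts hα)) j k).trans
        (hk.trans (Nat.mul_le_mul_right n (by omega)))
    · exact ⟨1, one_ne_zero, by simp, fun h₁ h₂ => absurd ⟨h₁, h₂⟩ ht⟩
  choose! Q hQ0 hQdeg hQ using key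
  refine ⟨∏ t ∈ s.powerset, Q t, Finset.prod_ne_zero_iff.2 hQ0, ?_, fun b hb => ?_⟩
  · refine (MvPolynomial.totalDegree_finsetProd _ _).trans ?_
    simpa [hs] using Finset.sum_le_card_nsmul s.powerset _ _ hQdeg
  have hfb := hf.map (lineRestriction (R := L) a b : MvPolynomial σ L →+* L[X])
  have hne : f.map (lineRestriction (R := L) a b : MvPolynomial σ L →+* L[X]) ≠ 1 := fun h => by
    have hdeg : f.natDegree = 0 := by
      rw [← hf.natDegree_map (lineRestriction (R := L) a b : MvPolynomial σ L →+* L[X]), h,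
        natDegree_one]
    exact hirr.not_isUnit (hf.natDegree_eq_zero.1 hdeg ▸ isUnit_one)
  refine (hfb.irreducible_iff_lt_natDegree_lt hne).2 fun g hg hgdeg hdvd => ?_
  rw [← map_eval_genericSection] at hdvd
  obtain ⟨t, hts, htcard, hvan⟩ := exists_coeff_prod_eq_zero_of_dvd_map hprod
    (natDegree_coeff_genericSection_le hn) (MvPolynomial.eval b) hg hdvd
  rw [hf.natDegree_map, Finset.mem_Ioc] at hgdeg
  obtain ⟨j, k, hnk, hjk⟩ := hQ t (Finset.mem_powerset.2 hts) (Finset.card_pos.1 (by omega))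
    (by omega)
  refine hb ?_
  rw [map_prod, Finset.prod_eq_zero (Finset.mem_powerset.2 hts)]
  rw [← hjk, hvan j k hnk]

end Bertini

/-! ### Averaging over lines -/

section SchwartzZippel

variable {K L : Type*} [Field K] [Field L] [Algebra K L] {m : ℕ}
  {P : MvPolynomial (Fin m) L}

lemma natCard_eval_eq_zero_mul_le [Finite K] (hP : P ≠ 0) :
    Nat.card {x : Fin m → K // MvPolynomial.eval (algebraMap K L ∘ x) P = 0} * Nat.card K ≤
      P.totalDegree * Nat.card K ^ m := by
  classical
  have := Fintype.ofFinite K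
  set S : Finset L := (Finset.univ : Finset K).map ⟨algebraMap K L, (algebraMap K L).injective⟩
  have hS : S.card = Nat.card K := by
    rw [Finset.card_map, Finset.card_univ, Nat.card_eq_fintype_card]
  have hpos : 0 < Nat.card K := Nat.card_pos
  have hle : Nat.card {x : Fin m → K // MvPolynomial.eval (algebraMap K L ∘ x) P = 0} ≤
      {x ∈ Fintype.piFinset fun _ : Fin m => S | MvPolynomial.eval x P = 0}.card := by
    rw [Nat.subtype_card {x | MvPolynomial.eval (algebraMap K L ∘ x) P = 0} (by simp)]
    refine Finset.card_le_card_of_injOn (algebraMap K L ∘ ·) (fun x hx => ?_)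
      ((algebraMap K L).injective.comp_left.injOn)
    simpa [S] using hx
  have h := MvPolynomial.schwartz_zippel_totalDegree hP S
  rw [hS, div_le_div_iff₀ (by positivity) (by positivity)] at h
  exact (Nat.mul_le_mul_right _ hle).trans (by exact_mod_cast h)

lemma sum_le_of_forall_eval_ne_zero [Fintype K] (hP : P ≠ 0) {h : (Fin m → K) → ℝ} {B c : ℝ}
    (hB : 0 ≤ B) (hc : 0 ≤ c) (h₁ : ∀ x, MvPolynomial.eval (algebraMap K L ∘ x) P ≠ 0 → h x ≤ B)
    (h₂ : ∀ x, h x ≤ c * Nat.card K) :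
    ∑ x, h x ≤ (Nat.card K : ℝ) ^ m * (B + P.totalDegree * c) := by
  classical
  have hcard : (Nat.card {x : Fin m → K // MvPolynomial.eval (algebraMap K L ∘ x) P = 0} : ℝ) *
      Nat.card K ≤ P.totalDegree * (Nat.card K : ℝ) ^ m := by
    exact_mod_cast natCard_eval_eq_zero_mul_le hP
  have hx (x) : h x ≤
      B + if MvPolynomial.eval (algebraMap K L ∘ x) P = 0 then c * Nat.card K else 0 := by
    split_ifs with hx
    · linarith [h₂ x]
    · simpa using h₁ x hx
  calc ∑ x, h x ≤ ∑ x : Fin m → K,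
        (B + if MvPolynomial.eval (algebraMap K L ∘ x) P = 0 then c * Nat.card K else 0) :=
        Finset.sum_le_sum fun x _ => hx x
    _ = (Nat.card K : ℝ) ^ m * B + c * (Nat.card
          {x : Fin m → K // MvPolynomial.eval (algebraMap K L ∘ x) P = 0} * Nat.card K) := by
        rw [Finset.sum_add_distrib, ← Finset.sum_filter, Finset.sum_const, Finset.sum_const,
          Nat.card_eq_fintype_card (α := {x : Fin m → K // _}), Fintype.card_subtype,
          Finset.card_univ, Fintype.card_fun, Fintype.card_fin, Nat.card_eq_fintype_card]
        simp only [nsmul_eq_mul, Nat.cast_pow]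
        ring
    _ ≤ (Nat.card K : ℝ) ^ m * B + c * (P.totalDegree * (Nat.card K : ℝ) ^ m) := by gcongr
    _ = (Nat.card K : ℝ) ^ m * (B + P.totalDegree * c) := by ring

end SchwartzZippel

section SeparableFibers

variable {σ L : Type*} [Field L] {f : (MvPolynomial σ L)[X]}

lemma exists_ne_zero_forall_separable_map_eval {n : ℕ} (hf : f.Monic) (hirr : Irreducible f)
    (hder : derivative f ≠ 0) (hn : ∀ j, (f.coeff j).totalDegree ≤ n) :
    ∃ Δ : MvPolynomial σ L, Δ ≠ 0 ∧ Δ.totalDegree ≤ 2 * f.natDegree * n ∧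
      ∀ a, MvPolynomial.eval a Δ ≠ 0 → (f.map (MvPolynomial.eval a)).Separable := by
  have hdeg : (derivative f).natDegree ≤ f.natDegree :=
    (natDegree_derivative_le f).trans (Nat.sub_le _ 1)
  have hpos : f.natDegree ≠ 0 := fun h => hder (derivative_of_natDegree_zero h)
  refine ⟨resultant f (derivative f) f.natDegree f.natDegree, ?_, ?_, fun a ha =>
    separable_map_of_resultant_derivative_ne_zero _ hpos ha⟩
  · exact resultant_ne_zero_of_irreducible hf hirr
      (hf.not_dvd_of_natDegree_lt hder (natDegree_derivative_lt hpos)) hdeg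
  · have hmem (i) : f.coeff i ∈ mvTotalDegreeFiltration σ L n :=
      mem_mvTotalDegreeFiltration_natCast.2 (hn i)
    have hder_mem (i) : (derivative f).coeff i ∈ mvTotalDegreeFiltration σ L n := by
      rw [coeff_derivative]
      simpa using RingFiltration.mul_mem (hmem (i + 1))
        (mvC_mem_mvTotalDegreeFiltration ((i : L) + 1))
    rw [← mem_mvTotalDegreeFiltration_natCast]
    convert RingFiltration.resultant_mem hmem hder_mem f.natDegree f.natDegree using 2
    push_cast
    ring

end SeparableFibers

section Counting

lemma sum_sum_sum_add_smul {K V M : Type*} [Fintype K] [Fintype V] [AddGroup V] [SMul K V]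
    [AddCommMonoid M] (ν : V → M) :
    ∑ a, ∑ b, ∑ t : K, ν (a + t • b) = (Fintype.card V * Fintype.card K) • ∑ a, ν a := by
  have h (b : V) : ∑ a, ∑ t : K, ν (a + t • b) = Fintype.card K • ∑ a, ν a := by
    rw [Finset.sum_comm, ← Finset.card_univ]
    exact Finset.sum_eq_card_nsmul fun t _ =>
      Fintype.sum_equiv (Equiv.addRight (t • b)) _ _ fun _ => rfl
  rw [Finset.sum_comm, mul_smul, ← Finset.card_univ]
  exact Finset.sum_eq_card_nsmul fun b _ => h b

variable {K σ : Type*} [Field K] {f : (MvPolynomial σ K)[X]}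

/-- The number of points of the hypersurface `f = 0` above `a`. -/
noncomputable def fiberCard (f : (MvPolynomial σ K)[X]) (a : σ → K) : ℕ :=
  Nat.card {y : K // (f.map (MvPolynomial.eval a)).eval y = 0}

/-- The number of points of the plane curve in which the hypersurface `f = 0` meets the plane
spanned by the line `t ↦ a + t • b` and the direction of the distinguished variable; it depends on
the parametrised line `(a, b)`, and `b = 0` is allowed. -/
noncomputable def sectionCard (f : (MvPolynomial σ K)[X]) (a b : σ → K) : ℕ :=
  Nat.card {P : K × K //
    (f.map (lineRestriction (R := K) a b : MvPolynomial σ K →+* K[X])).evalEval P.1 P.2 = 0}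

lemma natCard_subtype_prod_eq_sum {α β : Type*} [Fintype α] [Finite β] (p : α → β → Prop) :
    Nat.card {x : α × β // p x.1 x.2} = ∑ a, Nat.card {b : β // p a b} := by
  rw [Nat.card_congr (Equiv.subtypeProdEquivSigmaSubtype p), Nat.card_sigma]

lemma evalEval_map_lineRestriction (f : (MvPolynomial σ K)[X]) (a b : σ → K) (t y : K) :
    (f.map (lineRestriction (R := K) a b : MvPolynomial σ K →+* K[X])).evalEval t y =
      (f.map (MvPolynomial.eval (a + t • b))).eval y := by
  rw [← map_evalRingHom_eval, map_map]
  congr 2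
  exact RingHom.ext (eval_lineRestriction a b t)

lemma fiberCard_le (hf : f.Monic) (a : σ → K) : fiberCard f a ≤ f.natDegree := by
  classical
  have hfa := hf.map (MvPolynomial.eval a)
  rw [fiberCard, ← hf.natDegree_map (MvPolynomial.eval a), Nat.card_congr (Equiv.subtypeEquivRight
    (fun y => (show _ ↔ y ∈ (f.map (MvPolynomial.eval a)).roots.toFinset by
      rw [Multiset.mem_toFinset, mem_roots hfa.ne_zero, IsRoot.def]))), Nat.card_eq_fintype_card,
    Fintype.card_coe]
  exact (Multiset.toFinset_card_le _).trans (card_roots' _)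

lemma sectionCard_eq_sum [Fintype K] (f : (MvPolynomial σ K)[X]) (a b : σ → K) :
    sectionCard f a b = ∑ t : K, fiberCard f (a + t • b) := by
  rw [sectionCard, natCard_subtype_prod_eq_sum fun t y =>
    (f.map (lineRestriction (R := K) a b : MvPolynomial σ K →+* K[X])).evalEval t y = 0]
  simp only [evalEval_map_lineRestriction, fiberCard]

lemma abs_sectionCard_sub_le [Finite K] (hf : f.Monic) (hd : f.natDegree ≠ 0) (a b : σ → K) :
    |(sectionCard f a b : ℝ) - Nat.card K| ≤ f.natDegree * Nat.card K := by
  have := Fintype.ofFinite K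
  have hle : sectionCard f a b ≤ f.natDegree * Nat.card K := by
    rw [sectionCard_eq_sum, Nat.card_eq_fintype_card, mul_comm, ← Finset.card_univ]
    exact Finset.sum_le_card_nsmul _ _ _ fun t _ => fiberCard_le hf _
  have hle' : (sectionCard f a b : ℝ) ≤ f.natDegree * Nat.card K := by exact_mod_cast hle
  have hd' : (1 : ℝ) ≤ f.natDegree := by exact_mod_cast Nat.one_le_iff_ne_zero.2 hd
  have hq := le_mul_of_one_le_left (Nat.cast_nonneg (α := ℝ) (Nat.card K)) hd'
  rw [abs_le]
  constructor <;> linarith [(sectionCard f a b).cast_nonneg (α := ℝ)]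

lemma sum_sum_sectionCard_sub [Fintype K] [Fintype σ] [DecidableEq σ] (f : (MvPolynomial σ K)[X]) :
    ∑ a, ∑ b, ((sectionCard f a b : ℝ) - Nat.card K) =
      (Nat.card K : ℝ) ^ Fintype.card σ * Nat.card K *
        (Nat.card {P : (σ → K) × K // (f.map (MvPolynomial.eval P.1)).eval P.2 = 0} -
          (Nat.card K : ℝ) ^ Fintype.card σ) := by
  have hsum := sum_sum_sum_add_smul (K := K) fun a => (fiberCard f a : ℝ)
  have hN := natCard_subtype_prod_eq_sum fun (a : σ → K) y =>
    (f.map (MvPolynomial.eval a)).eval y = 0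
  have hsec (a b : σ → K) : (sectionCard f a b : ℝ) = ∑ t : K, (fiberCard f (a + t • b) : ℝ) := by
    rw [sectionCard_eq_sum, Nat.cast_sum]
  simp only [Finset.sum_sub_distrib, hsec, hsum, hN, Finset.sum_const, Finset.card_univ,
    Fintype.card_fun, Nat.card_eq_fintype_card, nsmul_eq_mul]
  simp only [fiberCard]
  push_cast
  ring

end Counting

section Averaging

variable {K L σ : Type*} [Field K] [Field L] [Algebra K L] {f : (MvPolynomial σ K)[X]}

lemma map_lineRestriction_map_algebraMap (f : (MvPolynomial σ K)[X]) (a b : σ → K) :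
    (f.map (lineRestriction (R := K) a b : MvPolynomial σ K →+* K[X])).map
        (mapRingHom (algebraMap K L)) =
      (f.map (MvPolynomial.map (algebraMap K L))).map
        (lineRestriction (R := L) (algebraMap K L ∘ a) (algebraMap K L ∘ b) :
          MvPolynomial σ L →+* L[X]) := by
  rw [map_map, map_map]
  congr 1
  refine RingHom.ext fun p => ?_
  exact (map_lineRestriction (Algebra.ofId K L) a b p).trans (lineRestriction_map _ _ p).symm

lemma map_lineRestriction_mem_totalDegreeFiltration {T : ℤ}
    (hf : f ∈ (mvTotalDegreeFiltration σ K).polynomial 1 T) (a b : σ → K) :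
    f.map (lineRestriction (R := K) a b : MvPolynomial σ K →+* K[X]) ∈
      totalDegreeFiltration K T := by
  have hC (c : K) : C c ∈ (RingFiltration.const K).polynomial 1 0 :=
    mem_polynomial_const_iff_natDegree_le.2 (natDegree_C c).le
  rw [RingFiltration.mem_polynomial] at hf ⊢
  intro j
  rw [coeff_map]
  simpa using lineRestriction_mem (w := 1) hC (fun i => mem_polynomial_const_iff_natDegree_le.2
    (by compute_degree)) (hf j)

lemma derivative_map_lineRestriction_ne_zero {a : σ → K}
    (hsep : (f.map (MvPolynomial.eval a)).Separable) (hf : f.Monic) (hd : f.natDegree ≠ 0)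
    (b : σ → K) :
    derivative (f.map (lineRestriction (R := K) a b : MvPolynomial σ K →+* K[X])) ≠ 0 := by
  intro h
  have hcomp : (evalRingHom (0 : K)).comp
      (lineRestriction (R := K) a b : MvPolynomial σ K →+* K[X]) = MvPolynomial.eval a :=
    RingHom.ext fun p => by simpa using eval_lineRestriction a b 0 p
  have h₀ := congrArg (Polynomial.map (evalRingHom (0 : K))) h
  rw [← derivative_map, map_map, hcomp, Polynomial.map_zero] at h₀
  rw [Separable, h₀, isCoprime_zero_right] at hsep
  exact hd (by rw [← hf.natDegree_map (MvPolynomial.eval a), natDegree_eq_zero_of_isUnit hsep])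

lemma map_eval_map_algebraMap (f : (MvPolynomial σ K)[X]) (a : σ → K) :
    (f.map (MvPolynomial.map (algebraMap K L))).map (MvPolynomial.eval (algebraMap K L ∘ a)) =
      (f.map (MvPolynomial.eval a)).map (algebraMap K L) := by
  rw [map_map, map_map]
  congr 1
  exact MvPolynomial.ringHom_ext (by simp) (by simp)

lemma abs_sectionCard_sub_le_of_irreducible [Finite K] [IsAlgClosed L] (hf : f.Monic)
    (hdeg : f ∈ (mvTotalDegreeFiltration σ K).polynomial 1 f.natDegree)
    (hq : 100 * f.natDegree ^ 3 ≤ (Nat.card K).sqrt) {a b : σ → K}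
    (hsep : ((f.map (MvPolynomial.map (algebraMap K L))).map
      (MvPolynomial.eval (algebraMap K L ∘ a))).Separable)
    (hirr : Irreducible ((f.map (MvPolynomial.map (algebraMap K L))).map
      (lineRestriction (R := L) (algebraMap K L ∘ a) (algebraMap K L ∘ b) :
        MvPolynomial σ L →+* L[X]))) :
    |(sectionCard f a b : ℝ) - Nat.card K| ≤ 53 * f.natDegree ^ 3 * √(Nat.card K) := by
  rw [map_eval_map_algebraMap, separable_map] at hsep
  rw [← map_lineRestriction_map_algebraMap] at hirr
  set F := f.map (lineRestriction (R := K) a b : MvPolynomial σ K →+* K[X])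
  have hF : F.Monic := hf.map _
  have hFdeg : F.natDegree = f.natDegree := hf.natDegree_map _
  have hd : f.natDegree ≠ 0 := by
    rw [← hFdeg, ← hF.natDegree_map (mapRingHom (algebraMap K L))]
    exact ((hF.map _).natDegree_pos_of_not_isUnit hirr.not_isUnit).ne'
  obtain ⟨hle, hge⟩ := natCard_curve_bounds hF hirr
    (hFdeg ▸ map_lineRestriction_mem_totalDegreeFiltration hdeg a b)
    (derivative_map_lineRestriction_ne_zero hsep hf hd b) (hFdeg ▸ hq)
  rw [hFdeg] at hle hge
  have hle' : (sectionCard f a b : ℝ) ≤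
      Nat.card K + 53 * f.natDegree ^ 3 * (Nat.card K).sqrt := by exact_mod_cast hle
  have hge' : (Nat.card K : ℝ) ≤
      sectionCard f a b + 53 * f.natDegree ^ 3 * (Nat.card K).sqrt := by exact_mod_cast hge
  have hsqrt : 53 * (f.natDegree : ℝ) ^ 3 * (Nat.card K).sqrt ≤
      53 * f.natDegree ^ 3 * √(Nat.card K) := by gcongr; exact Real.nat_sqrt_le_real_sqrt
  rw [abs_le]
  constructor <;> linarith

lemma totalDegree_coeff_map_le {n : ℕ} (hf : f ∈ (mvTotalDegreeFiltration σ K).polynomial 1 n)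
    (j : ℕ) : ((f.map (MvPolynomial.map (algebraMap K L))).coeff j).totalDegree ≤ n := by
  rw [coeff_map]
  refine (Finset.sup_mono (MvPolynomial.support_map_subset _ _)).trans ?_
  refine mem_mvTotalDegreeFiltration_natCast.1 ?_
  exact RingFiltration.mono (RingFiltration.mem_polynomial.1 hf j) (by omega)

section Fin

variable {m : ℕ} {f : (MvPolynomial (Fin m) K)[X]} [IsAlgClosed L]

lemma sum_abs_sectionCard_sub_le [Fintype K] (hf : f.Monic)
    (hirr : Irreducible (f.map (MvPolynomial.map (algebraMap K L))))
    (hdeg : f ∈ (mvTotalDegreeFiltration (Fin m) K).polynomial 1 f.natDegree)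
    (hq : 100 * f.natDegree ^ 3 ≤ (Nat.card K).sqrt) {a : Fin m → K}
    (hsep : ((f.map (MvPolynomial.map (algebraMap K L))).map
      (MvPolynomial.eval (algebraMap K L ∘ a))).Separable) :
    ∑ b, |(sectionCard f a b : ℝ) - Nat.card K| ≤ (Nat.card K : ℝ) ^ m *
      (53 * f.natDegree ^ 3 * √(Nat.card K) +
        2 ^ f.natDegree * (2 * f.natDegree ^ 2) * f.natDegree) := by
  have hd : (f.map (MvPolynomial.map (σ := Fin m) (algebraMap K L))).natDegree = f.natDegree :=
    hf.natDegree_map _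
  obtain ⟨P, hP, hPdeg, hPirr⟩ := exists_ne_zero_forall_irreducible_map_lineRestriction
    (hf.map _) hirr (totalDegree_coeff_map_le hdeg) hsep
  rw [hd] at hPdeg
  have hf0 : f.natDegree ≠ 0 := hd ▸ ((hf.map _).natDegree_pos_of_not_isUnit hirr.not_isUnit).ne'
  refine (sum_le_of_forall_eval_ne_zero hP (by positivity) (Nat.cast_nonneg f.natDegree)
    (fun b hb => abs_sectionCard_sub_le_of_irreducible hf hdeg hq hsep (hPirr _ hb))
    (fun b => abs_sectionCard_sub_le hf hf0 a b)).trans ?_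
  have hPdeg' : (P.totalDegree : ℝ) ≤ 2 ^ f.natDegree * (2 * f.natDegree ^ 2) := by
    rw [pow_two, ← mul_assoc 2]
    exact_mod_cast hPdeg
  gcongr

lemma sum_sum_abs_sectionCard_sub_le [Fintype K] (hf : f.Monic)
    (hirr : Irreducible (f.map (MvPolynomial.map (algebraMap K L))))
    (hdeg : f ∈ (mvTotalDegreeFiltration (Fin m) K).polynomial 1 f.natDegree)
    (hder : derivative f ≠ 0) (hq : 100 * f.natDegree ^ 3 ≤ (Nat.card K).sqrt) :
    ∑ a, ∑ b, |(sectionCard f a b : ℝ) - Nat.card K| ≤ (Nat.card K : ℝ) ^ m *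
      ((Nat.card K : ℝ) ^ m * (53 * f.natDegree ^ 3 * √(Nat.card K) +
        f.natDegree * (2 ^ f.natDegree * (2 * f.natDegree ^ 2) + 2 * f.natDegree ^ 2))) := by
  have hφ := MvPolynomial.map_injective (σ := Fin m) _ (algebraMap K L).injective
  have hd : (f.map (MvPolynomial.map (σ := Fin m) (algebraMap K L))).natDegree = f.natDegree :=
    hf.natDegree_map _
  have hf0 : f.natDegree ≠ 0 := fun h => hder (derivative_of_natDegree_zero h)
  have hder' : derivative (f.map (MvPolynomial.map (σ := Fin m) (algebraMap K L))) ≠ 0 := by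
    rwa [derivative_map, Polynomial.map_ne_zero_iff hφ]
  obtain ⟨Δ, hΔ, hΔdeg, hsep⟩ := exists_ne_zero_forall_separable_map_eval (hf.map _) hirr hder'
    (totalDegree_coeff_map_le hdeg)
  rw [hd] at hΔdeg
  have htriv (a : Fin m → K) : ∑ b, |(sectionCard f a b : ℝ) - Nat.card K| ≤
      (Nat.card K : ℝ) ^ m * f.natDegree * Nat.card K := by
    refine (Finset.sum_le_card_nsmul _ _ _ fun b _ => abs_sectionCard_sub_le hf hf0 a b).trans ?_
    simp [mul_assoc]
  refine (sum_le_of_forall_eval_ne_zero hΔ (by positivity) (by positivity)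
    (fun a ha => sum_abs_sectionCard_sub_le hf hirr hdeg hq (hsep _ ha)) htriv).trans ?_
  have hΔdeg' : (Δ.totalDegree : ℝ) ≤ 2 * f.natDegree ^ 2 := by
    rw [pow_two, ← mul_assoc]
    exact_mod_cast hΔdeg
  calc _ ≤ (Nat.card K : ℝ) ^ m * ((Nat.card K : ℝ) ^ m * (53 * f.natDegree ^ 3 * √(Nat.card K) +
          2 ^ f.natDegree * (2 * f.natDegree ^ 2) * f.natDegree) +
        2 * f.natDegree ^ 2 * ((Nat.card K : ℝ) ^ m * f.natDegree)) := by gcongr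
    _ = _ := by ring

-- Average over all lines: the sections by lines in general position satisfy the bound for plane
-- curves, and the other ones are few enough for the trivial bound.
theorem abs_natCard_sub_pow_le_of_monic [Finite K] (hf : f.Monic)
    (hirr : Irreducible (f.map (MvPolynomial.map (algebraMap K L))))
    (hdeg : f ∈ (mvTotalDegreeFiltration (Fin m) K).polynomial 1 f.natDegree)
    (hder : derivative f ≠ 0) (hq : 100 * f.natDegree ^ 3 ≤ (Nat.card K).sqrt) :
    |(Nat.card {P : (Fin m → K) × K // (f.map (MvPolynomial.eval P.1)).eval P.2 = 0} : ℝ) -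
        (Nat.card K : ℝ) ^ m| ≤
      (53 * f.natDegree ^ 3 +
        f.natDegree * (2 ^ f.natDegree * (2 * f.natDegree ^ 2) + 2 * f.natDegree ^ 2)) *
        (Nat.card K : ℝ) ^ m / √(Nat.card K) := by
  have := Fintype.ofFinite K
  set q : ℝ := (Nat.card K : ℝ)
  set d : ℝ := (f.natDegree : ℝ)
  set N : ℝ :=
    (Nat.card {P : (Fin m → K) × K // (f.map (MvPolynomial.eval P.1)).eval P.2 = 0} : ℝ)
  set B : ℝ := d * (2 ^ f.natDegree * (2 * d ^ 2) + 2 * d ^ 2)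
  have hq1 : 1 ≤ q := Nat.one_le_cast.2 Nat.card_pos
  have hq0 : 0 < q := one_pos.trans_le hq1
  have hqm : 0 < q ^ m := pow_pos hq0 m
  have hB : 0 ≤ B := by positivity
  have hsum : q ^ m * (q * |N - q ^ m|) ≤ q ^ m * (q ^ m * (53 * d ^ 3 * √q + B)) :=
    calc q ^ m * (q * |N - q ^ m|)
      _ = |∑ a, ∑ b, ((sectionCard f a b : ℝ) - q)| := by
        rw [sum_sum_sectionCard_sub, Fintype.card_fin, abs_mul, abs_of_pos (mul_pos hqm hq0),
          mul_assoc]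
      _ ≤ ∑ a, ∑ b, |(sectionCard f a b : ℝ) - q| :=
        (Finset.abs_sum_le_sum_abs _ _).trans
          (Finset.sum_le_sum fun a _ => Finset.abs_sum_le_sum_abs _ _)
      _ ≤ _ := sum_sum_abs_sectionCard_sub_le hf hirr hdeg hder hq
  have hmul := le_of_mul_le_mul_left hsum hqm
  have hs : 1 ≤ √q := Real.one_le_sqrt.2 hq1
  rw [le_div_iff₀ (by positivity)]
  refine le_of_mul_le_mul_left ?_ (one_pos.trans_le hs)
  calc √q * (|N - q ^ m| * √q) = q * |N - q ^ m| := by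
        rw [mul_left_comm, Real.mul_self_sqrt hq0.le, mul_comm]
    _ ≤ q ^ m * (53 * d ^ 3 * √q + B) := hmul
    _ ≤ q ^ m * (53 * d ^ 3 * √q + B * √q) := by
        gcongr
        exact le_mul_of_one_le_right hB hs
    _ = √q * ((53 * d ^ 3 + B) * q ^ m) := by ring

end Fin
end Averaging

/-! ### Linear changes of coordinates -/

section Direction

variable {σ R : Type*} [CommRing R] [IsDomain R] {f : MvPolynomial σ R}

lemma exists_pow_eq_of_forall_pderiv_eq_zero (p : ℕ) [Fact p.Prime] [CharP R p] [PerfectRing R p]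
    (h : ∀ i, MvPolynomial.pderiv i f = 0) : ∃ g, g ^ p = f := by
  have hdvd (s) (hs : s ∈ f.support) (i) : p ∣ s i := by
    by_cases hi : s i = 0
    · simp [hi]
    have hle : Finsupp.single i 1 ≤ s := Finsupp.single_le_iff.2 (Nat.one_le_iff_ne_zero.2 hi)
    have hcoeff := MvPolynomial.coeff_pderiv (i := i) f (s - Finsupp.single i 1)
    rw [h i, MvPolynomial.coeff_zero, tsub_add_cancel_of_le hle, Finsupp.tsub_apply,
      Finsupp.single_eq_same, Nat.cast_pred (Nat.pos_of_ne_zero hi), sub_add_cancel] at hcoeff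
    exact (CharP.cast_eq_zero_iff R p _).1
      ((mul_eq_zero.1 hcoeff.symm).resolve_left (MvPolynomial.mem_support_iff.1 hs))
  refine ⟨∑ s ∈ f.support, MvPolynomial.monomial (s.mapRange (· / p) (Nat.zero_div p))
    ((frobeniusEquiv R p).symm (f.coeff s)), ?_⟩
  conv_rhs => rw [f.as_sum]
  rw [sum_pow_char p]
  refine Finset.sum_congr rfl fun s hs => ?_
  have hs' : p • s.mapRange (· / p) (Nat.zero_div p) = s :=
    Finsupp.ext fun i => Nat.mul_div_cancel' (hdvd s hs i)
  rw [MvPolynomial.monomial_pow, frobeniusEquiv_symm_pow_p, hs']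

lemma homogeneousComponent_totalDegree_ne_zero {σ R : Type*} [CommSemiring R]
    {f : MvPolynomial σ R} (hf : f ≠ 0) :
    MvPolynomial.homogeneousComponent f.totalDegree f ≠ 0 := by
  classical
  obtain ⟨s, hs, hdeg⟩ := Finset.exists_mem_eq_sup f.support
    (MvPolynomial.support_nonempty.2 hf) Finsupp.degree
  have hs' : s ∈ (MvPolynomial.homogeneousComponent f.totalDegree f).support := by
    rw [MvPolynomial.support_homogeneousComponent, Finset.mem_filter]
    exact ⟨hs, hdeg.symm⟩
  exact MvPolynomial.support_nonempty.1 ⟨s, hs'⟩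

-- The three conditions are implied by the nonvanishing of a single form of degree `deg f + 2`.
lemma exists_eval_homogeneousComponent_ne_zero [Fintype σ] (j : σ) {i : σ}
    (hi : MvPolynomial.pderiv i f ≠ 0) (hR : ((f.totalDegree + 2 : ℕ) : Cardinal) ≤ Cardinal.mk R) :
    ∃ v : σ → R, v j ≠ 0 ∧
      MvPolynomial.eval v (MvPolynomial.homogeneousComponent f.totalDegree f) ≠ 0 ∧
      ∑ i, MvPolynomial.C (v i) * MvPolynomial.pderiv i f ≠ 0 := by
  classical
  have hf : f ≠ 0 := fun h => hi (by rw [h, map_zero])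
  obtain ⟨s, hs⟩ := MvPolynomial.ne_zero_iff.1 hi
  set l : MvPolynomial σ R :=
    ∑ i, MvPolynomial.C ((MvPolynomial.pderiv i f).coeff s) * MvPolynomial.X i with hl
  have heval (v : σ → R) : MvPolynomial.eval v l =
      (∑ i, MvPolynomial.C (v i) * MvPolynomial.pderiv i f).coeff s := by
    simp [hl, MvPolynomial.coeff_sum, MvPolynomial.coeff_C_mul, mul_comm]
  have hl0 : l ≠ 0 := fun h => hs <| by
    have h₁ := heval (Pi.single i 1)
    rwa [h, map_zero, Finset.sum_eq_single i (fun k _ hk => by simp [Pi.single_eq_of_ne hk])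
      (by simp), Pi.single_eq_same, map_one, one_mul, eq_comm] at h₁
  have hlhom : l.IsHomogeneous 1 := MvPolynomial.IsHomogeneous.sum _ _ _ fun k _ => by
    simpa using (MvPolynomial.isHomogeneous_C σ _).mul (MvPolynomial.isHomogeneous_X R k)
  have hhom := ((MvPolynomial.homogeneousComponent_isHomogeneous f.totalDegree f).mul
    (MvPolynomial.isHomogeneous_X R j)).mul hlhom
  obtain ⟨v, hv⟩ : ∃ v, MvPolynomial.eval v (MvPolynomial.homogeneousComponent f.totalDegree f *
      MvPolynomial.X j * l) ≠ 0 := by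
    by_contra! h
    exact mul_ne_zero (mul_ne_zero (homogeneousComponent_totalDegree_ne_zero hf)
      (MvPolynomial.X_ne_zero j)) hl0 (hhom.eq_zero_of_forall_eval_eq_zero_of_le_card h hR)
  rw [map_mul, map_mul, MvPolynomial.eval_X, heval, mul_ne_zero_iff, mul_ne_zero_iff] at hv
  exact ⟨v, hv.1.2, hv.1.1, fun h => hv.2 (by rw [h, MvPolynomial.coeff_zero])⟩

end Direction

section Shear

variable {K L : Type*} [Field K] [Field L] [Algebra K L] {m : ℕ}

/-- The substitution `X₀ ↦ v₀ Y`, `X_{i+1} ↦ X_i + v_{i+1} Y`, that is, the restriction to the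
generic line with direction `v`, whose point on the hyperplane `X₀ = 0` is generic. When `v₀ ≠ 0`
it is a linear change of coordinates. -/
noncomputable abbrev shear (v : Fin (m + 1) → K) :
    MvPolynomial (Fin (m + 1)) K →ₐ[K] (MvPolynomial (Fin m) K)[X] :=
  lineRestriction (Fin.cons 0 MvPolynomial.X) (MvPolynomial.C ∘ v)

/-- The substitution inverse to `shear v` when `v₀ ≠ 0`. -/
noncomputable def shearInv (v : Fin (m + 1) → K) :
    (MvPolynomial (Fin m) K)[X] →ₐ[K] MvPolynomial (Fin (m + 1)) K :=
  aevalTower (MvPolynomial.aeval fun i =>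
      MvPolynomial.X i.succ - MvPolynomial.C (v i.succ * (v 0)⁻¹) * MvPolynomial.X 0)
    (MvPolynomial.C (v 0)⁻¹ * MvPolynomial.X 0)

lemma shear_comp_shearInv {v : Fin (m + 1) → K} (hv : v 0 ≠ 0) :
    (shear v).comp (shearInv v) = AlgHom.id K _ := by
  have hX : C (MvPolynomial.C (v 0)⁻¹) * (C (MvPolynomial.C (v 0)) * X) =
      (X : (MvPolynomial (Fin m) K)[X]) := by
    rw [← mul_assoc, ← C_mul, ← MvPolynomial.C_mul, inv_mul_cancel₀ hv, map_one, map_one, one_mul]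
  refine algHom_ext' (MvPolynomial.algHom_ext fun i => ?_) ?_
  · suffices C (MvPolynomial.X i) + C (MvPolynomial.C (v i.succ)) * X -
        C (MvPolynomial.C (v i.succ)) * C (MvPolynomial.C (v 0)⁻¹) *
          (C (MvPolynomial.C (v 0)) * X) = C (MvPolynomial.X i) by
      simpa [shearInv, lineRestriction_X]
    rw [mul_assoc, hX, add_sub_cancel_right]
  · simpa [shearInv, lineRestriction_X]

lemma shearInv_comp_shear {v : Fin (m + 1) → K} (hv : v 0 ≠ 0) :
    (shearInv v).comp (shear v) = AlgHom.id K _ := by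
  refine MvPolynomial.algHom_ext (Fin.cases ?_ fun i => ?_)
  · suffices MvPolynomial.C (v 0) * (MvPolynomial.C (v 0)⁻¹ * MvPolynomial.X 0) =
        (MvPolynomial.X 0 : MvPolynomial (Fin (m + 1)) K) by
      simpa [shearInv, lineRestriction_X]
    rw [← mul_assoc, ← MvPolynomial.C_mul, mul_inv_cancel₀ hv, map_one, one_mul]
  · simp [shearInv, lineRestriction_X, mul_assoc]

/-- The linear change of coordinates `shear v` when `v₀ ≠ 0`. -/
noncomputable def shearEquiv (v : Fin (m + 1) → K) (hv : v 0 ≠ 0) :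
    MvPolynomial (Fin (m + 1)) K ≃ₐ[K] (MvPolynomial (Fin m) K)[X] :=
  AlgEquiv.ofAlgHom (shear v) (shearInv v) (shear_comp_shearInv hv) (shearInv_comp_shear hv)

lemma shear_injective {v : Fin (m + 1) → K} (hv : v 0 ≠ 0) : Function.Injective (shear v) :=
  (shearEquiv v hv).injective

lemma irreducible_shear {v : Fin (m + 1) → K} (hv : v 0 ≠ 0) {f : MvPolynomial (Fin (m + 1)) K} :
    Irreducible (shear v f) ↔ Irreducible f :=
  MulEquiv.irreducible_iff (shearEquiv v hv)

lemma map_shear (v : Fin (m + 1) → K) (f : MvPolynomial (Fin (m + 1)) K) :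
    (shear v f).map (MvPolynomial.map (algebraMap K L)) =
      shear (algebraMap K L ∘ v) (MvPolynomial.map (algebraMap K L) f) := by
  induction f using MvPolynomial.induction_on with
  | C c => simp
  | add p q hp hq => simp only [map_add, Polynomial.map_add, hp, hq]
  | mul_X p i hp =>
    rw [map_mul, Polynomial.map_mul, hp, map_mul, map_mul]
    congr 1
    cases i using Fin.cases <;> simp [lineRestriction_X]

lemma map_eval_shear (v : Fin (m + 1) → K) (a : Fin m → K) (f : MvPolynomial (Fin (m + 1)) K) :
    (shear v f).map (MvPolynomial.eval a) = lineRestriction (Fin.cons 0 a) v f := by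
  refine (map_lineRestriction (MvPolynomial.aeval a) _ _ f).trans ?_
  congr 2
  · exact funext (Fin.cases (map_zero _) fun i => MvPolynomial.aeval_X a i)
  · exact funext fun i => MvPolynomial.aeval_C a (v i)

lemma shear_mem (v : Fin (m + 1) → K) {f : MvPolynomial (Fin (m + 1)) K} {T : ℤ}
    (hf : f ∈ mvTotalDegreeFiltration (Fin (m + 1)) K T) :
    shear v f ∈ (mvTotalDegreeFiltration (Fin m) K).polynomial 1 T := by
  have hC (c : K) : C (MvPolynomial.C c) ∈ (mvTotalDegreeFiltration (Fin m) K).polynomial 1 0 :=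
    RingFiltration.polynomial_C_mem (mvC_mem_mvTotalDegreeFiltration c)
  have hX (i : Fin (m + 1)) : C ((MvPolynomial.C ∘ v) i) * X ∈
      (mvTotalDegreeFiltration (Fin m) K).polynomial 1 (0 + 1) :=
    RingFiltration.mul_mem (hC (v i)) RingFiltration.polynomial_X_mem
  have hbase (i : Fin (m + 1)) : C ((Fin.cons 0 MvPolynomial.X : _ → MvPolynomial (Fin m) K) i) ∈
      (mvTotalDegreeFiltration (Fin m) K).polynomial 1 1 :=
    RingFiltration.polynomial_C_mem <| Fin.cases (zero_mem _) mvX_mem_mvTotalDegreeFiltration i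
  have h := lineRestriction_mem (w := 1) hC (fun i => add_mem (hbase i) (hX i)) hf
  rwa [Nat.cast_one, one_mul] at h

lemma coeff_shear_totalDegree (v : Fin (m + 1) → K) (f : MvPolynomial (Fin (m + 1)) K) :
    (shear v f).coeff f.totalDegree = MvPolynomial.C
      (MvPolynomial.eval v (MvPolynomial.homogeneousComponent f.totalDegree f)) := by
  have hmem := RingFiltration.mem_polynomial.1
    (shear_mem v (mem_mvTotalDegreeFiltration_natCast.2 (le_refl f.totalDegree))) f.totalDegree
  have hdeg : ((shear v f).coeff f.totalDegree).totalDegree ≤ 0 :=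
    mem_mvTotalDegreeFiltration_natCast.1 (by simpa using hmem)
  obtain ⟨c, hc⟩ : ∃ c, (shear v f).coeff f.totalDegree = MvPolynomial.C c :=
    ⟨_, MvPolynomial.totalDegree_eq_zero_iff_eq_C.1 (Nat.le_zero.1 hdeg)⟩
  have hzero : (Fin.cons 0 0 : Fin (m + 1) → K) = 0 := funext (Fin.cases rfl fun _ => rfl)
  have hcoeff := coeff_lineRestriction_zero v f f.totalDegree
  rw [← hzero, ← map_eval_shear, coeff_map, hc, MvPolynomial.eval_C] at hcoeff
  rw [hc, hcoeff]
  rfl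

lemma derivative_shear (v : Fin (m + 1) → K) (f : MvPolynomial (Fin (m + 1)) K) :
    derivative (shear v f) =
      shear v (∑ i, MvPolynomial.C (v i) * MvPolynomial.pderiv i f) := by
  simp [derivative_lineRestriction]

/-- Points of the affine space of dimension `m + 1` as points `a + y v` with `a` on the hyperplane
`X₀ = 0`, in accordance with `shear v`. -/
def shearPoints (v : Fin (m + 1) → K) (hv : v 0 ≠ 0) : (Fin m → K) × K ≃ (Fin (m + 1) → K) where
  toFun P := Fin.cons 0 P.1 + P.2 • v
  invFun x := (fun i => x i.succ - x 0 / v 0 * v i.succ, x 0 / v 0)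
  left_inv P := by
    ext <;> simp [hv]
  right_inv x := by
    ext i
    cases i using Fin.cases <;> simp [hv]

lemma natCard_shear_eq {v : Fin (m + 1) → K} (hv : v 0 ≠ 0) (f : MvPolynomial (Fin (m + 1)) K) :
    Nat.card {P : (Fin m → K) × K // ((shear v f).map (MvPolynomial.eval P.1)).eval P.2 = 0} =
      Nat.card {x : Fin (m + 1) → K // MvPolynomial.eval x f = 0} := by
  refine Nat.card_congr ((shearPoints v hv).subtypeEquiv fun P => ?_)
  rw [map_eval_shear, eval_lineRestriction]
  rfl

end Shear

section MonicShear

variable {K L : Type*} [Field K] [Field L] [Algebra K L] {m : ℕ} {v : Fin (m + 1) → K}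
  {f : MvPolynomial (Fin (m + 1)) K}

/-- The polynomial `shear v f`, divided by the value at `v` of the leading form of `f`, which is
its leading coefficient in `Y`. It is monic if that value does not vanish. -/
noncomputable def monicShear (v : Fin (m + 1) → K) (f : MvPolynomial (Fin (m + 1)) K) :
    (MvPolynomial (Fin m) K)[X] :=
  C (MvPolynomial.C
    (MvPolynomial.eval v (MvPolynomial.homogeneousComponent f.totalDegree f))⁻¹) * shear v f

lemma natDegree_monicShear_le (v : Fin (m + 1) → K) (f : MvPolynomial (Fin (m + 1)) K) :
    (monicShear v f).natDegree ≤ f.totalDegree :=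
  (natDegree_C_mul_le _ _).trans (natDegree_lineRestriction_le _ _ f)

lemma coeff_monicShear_totalDegree
    (hf : MvPolynomial.eval v (MvPolynomial.homogeneousComponent f.totalDegree f) ≠ 0) :
    (monicShear v f).coeff f.totalDegree = 1 := by
  rw [monicShear, coeff_C_mul, coeff_shear_totalDegree, ← map_mul, inv_mul_cancel₀ hf, map_one]

lemma monic_monicShear
    (hf : MvPolynomial.eval v (MvPolynomial.homogeneousComponent f.totalDegree f) ≠ 0) :
    (monicShear v f).Monic :=
  monic_of_natDegree_le_of_coeff_eq_one _ (natDegree_monicShear_le v f)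
    (coeff_monicShear_totalDegree hf)

lemma natDegree_monicShear
    (hf : MvPolynomial.eval v (MvPolynomial.homogeneousComponent f.totalDegree f) ≠ 0) :
    (monicShear v f).natDegree = f.totalDegree :=
  natDegree_eq_of_le_of_coeff_ne_zero (natDegree_monicShear_le v f)
    (by rw [coeff_monicShear_totalDegree hf]; exact one_ne_zero)

lemma monicShear_mem (v : Fin (m + 1) → K) (f : MvPolynomial (Fin (m + 1)) K) :
    monicShear v f ∈ (mvTotalDegreeFiltration (Fin m) K).polynomial 1 f.totalDegree := by
  have h := RingFiltration.mul_mem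
    (RingFiltration.polynomial_C_mem (w := 1) (mvC_mem_mvTotalDegreeFiltration
      (MvPolynomial.eval v (MvPolynomial.homogeneousComponent f.totalDegree f))⁻¹))
    (shear_mem v (mem_mvTotalDegreeFiltration_natCast.2 (le_refl f.totalDegree)))
  rwa [zero_add] at h

lemma irreducible_map_monicShear (hv : v 0 ≠ 0)
    (hf : MvPolynomial.eval v (MvPolynomial.homogeneousComponent f.totalDegree f) ≠ 0)
    (hirr : Irreducible (MvPolynomial.map (algebraMap K L) f)) :
    Irreducible ((monicShear v f).map (MvPolynomial.map (algebraMap K L))) := by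
  have hv' : (algebraMap K L ∘ v) 0 ≠ 0 := (_root_.map_ne_zero (algebraMap K L)).2 hv
  rw [monicShear, Polynomial.map_mul, map_shear, irreducible_isUnit_mul]
  · exact (irreducible_shear hv').2 hirr
  · exact (((inv_ne_zero hf).isUnit.map MvPolynomial.C).map C).map
      (mapRingHom (MvPolynomial.map (algebraMap K L)))

lemma derivative_monicShear_ne_zero (hv : v 0 ≠ 0)
    (hf : MvPolynomial.eval v (MvPolynomial.homogeneousComponent f.totalDegree f) ≠ 0)
    (hder : ∑ i, MvPolynomial.C (v i) * MvPolynomial.pderiv i f ≠ 0) :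
    derivative (monicShear v f) ≠ 0 := by
  rw [monicShear, derivative_C_mul, derivative_shear]
  refine mul_ne_zero (by simpa using hf) ?_
  rwa [map_ne_zero_iff _ (shear_injective hv)]

lemma natCard_monicShear_eq (hv : v 0 ≠ 0)
    (hf : MvPolynomial.eval v (MvPolynomial.homogeneousComponent f.totalDegree f) ≠ 0) :
    Nat.card {P : (Fin m → K) × K // ((monicShear v f).map (MvPolynomial.eval P.1)).eval P.2 = 0} =
      Nat.card {x : Fin (m + 1) → K // MvPolynomial.eval x f = 0} := by
  rw [← natCard_shear_eq hv]
  simp [monicShear, hf]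

end MonicShear

section Hypersurface

variable {K L : Type*} [Field K] [Finite K] [Field L] [Algebra K L]

lemma exists_pderiv_ne_zero_of_irreducible_map {σ S : Type*} [CommRing S] (φ : K →+* S)
    {f : MvPolynomial σ K} (hf : Irreducible (MvPolynomial.map φ f)) :
    ∃ i, MvPolynomial.pderiv i f ≠ 0 := by
  by_contra! h
  obtain ⟨p, _⟩ := CharP.exists K
  have : Fact p.Prime :=
    ⟨(CharP.char_is_prime_or_zero K p).resolve_right (CharP.char_ne_zero_of_finite K p)⟩
  have := PerfectRing.ofFiniteOfIsReduced p K
  obtain ⟨g, rfl⟩ := exists_pow_eq_of_forall_pderiv_eq_zero p h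
  rw [map_pow] at hf
  exact not_irreducible_pow (Fact.out : p.Prime).ne_one hf

variable {m : ℕ} {f : MvPolynomial (Fin (m + 1)) K}

lemma abs_natCard_sub_pow_le_of_le_sqrt [IsAlgClosed L]
    (hirr : Irreducible (MvPolynomial.map (algebraMap K L) f))
    (hq : 100 * f.totalDegree ^ 3 ≤ (Nat.card K).sqrt) :
    |(Nat.card {x : Fin (m + 1) → K // MvPolynomial.eval x f = 0} : ℝ) - (Nat.card K : ℝ) ^ m| ≤
      (53 * f.totalDegree ^ 3 +
        f.totalDegree * (2 ^ f.totalDegree * (2 * f.totalDegree ^ 2) + 2 * f.totalDegree ^ 2)) *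
        (Nat.card K : ℝ) ^ m / √(Nat.card K) := by
  have hcard : ((f.totalDegree + 2 : ℕ) : Cardinal) ≤ Cardinal.mk K := by
    rw [← Nat.cast_card, Nat.cast_le]
    have h₁ : 1 < Nat.card K := Finite.one_lt_card
    have h₂ := Nat.sqrt_le_self (Nat.card K)
    have h₃ : f.totalDegree ≤ f.totalDegree ^ 3 := Nat.le_self_pow (by norm_num) _
    omega
  obtain ⟨i, hi⟩ := exists_pderiv_ne_zero_of_irreducible_map (algebraMap K L) hirr
  obtain ⟨v, hv, hf, hder⟩ := exists_eval_homogeneousComponent_ne_zero 0 hi hcard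
  have hdeg := natDegree_monicShear hf
  have hbound := abs_natCard_sub_pow_le_of_monic (monic_monicShear hf)
    (irreducible_map_monicShear hv hf hirr) (hdeg.symm ▸ monicShear_mem v f)
    (derivative_monicShear_ne_zero hv hf hder) (hdeg.symm ▸ hq)
  rwa [natCard_monicShear_eq hv hf, hdeg] at hbound

variable (f) in
lemma abs_natCard_sub_pow_le_pow :
    |(Nat.card {x : Fin (m + 1) → K // MvPolynomial.eval x f = 0} : ℝ) - (Nat.card K : ℝ) ^ m| ≤
      (Nat.card K : ℝ) ^ (m + 1) := by
  have hcard : (Nat.card {x : Fin (m + 1) → K // MvPolynomial.eval x f = 0} : ℝ) ≤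
      (Nat.card K : ℝ) ^ (m + 1) := by
    rw [← Nat.cast_pow, Nat.cast_le]
    exact (Finite.card_subtype_le _).trans_eq (by rw [Nat.card_fun, Nat.card_fin])
  refine abs_sub_le_of_nonneg_of_le (Nat.cast_nonneg _) hcard (by positivity) ?_
  exact pow_le_pow_right₀ (Nat.one_le_cast.2 Nat.card_pos) m.le_succ

lemma abs_natCard_sub_pow_le_of_sqrt_lt {M : ℕ} (hM : (Nat.card K).sqrt < M) :
    |(Nat.card {x : Fin (m + 1) → K // MvPolynomial.eval x f = 0} : ℝ) - (Nat.card K : ℝ) ^ m| ≤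
      M ^ 4 * (Nat.card K : ℝ) ^ m / √(Nat.card K) := by
  refine (abs_natCard_sub_pow_le_pow f).trans ?_
  have hqM : (Nat.card K : ℝ) ≤ (M : ℝ) ^ 2 := by exact_mod_cast (Nat.sqrt_lt'.1 hM).le
  have hq : (1 : ℝ) ≤ Nat.card K := Nat.one_le_cast.2 Nat.card_pos
  set q : ℝ := (Nat.card K : ℝ)
  have hsqrt : √q ≤ q := (Real.sqrt_le_left (by positivity)).2 (le_self_pow₀ hq two_ne_zero)
  rw [le_div_iff₀ (by positivity)]
  calc q ^ (m + 1) * √q ≤ q ^ (m + 1) * q := by gcongr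
    _ = q ^ 2 * q ^ m := by ring
    _ ≤ (M ^ 2) ^ 2 * q ^ m := by gcongr
    _ = M ^ 4 * q ^ m := by ring

end Hypersurface

end LangWeil

theorem lang_weil_hypersurface_general {K L : Type*} [Field K] [Finite K] [Field L] [Algebra K L]
    [IsAlgClosed L] {m : ℕ} {f : MvPolynomial (Fin (m + 1)) K}
    (hirr : Irreducible (MvPolynomial.map (algebraMap K L) f)) :
    |(Nat.card {x : Fin (m + 1) → K // MvPolynomial.eval x f = 0} : ℝ) - (Nat.card K : ℝ) ^ m| ≤
      (53 * f.totalDegree ^ 3 +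
        f.totalDegree * (2 ^ f.totalDegree * (2 * f.totalDegree ^ 2) + 2 * f.totalDegree ^ 2) +
        (100 * f.totalDegree ^ 3) ^ 4) * (Nat.card K : ℝ) ^ m / √(Nat.card K) := by
  rcases le_or_gt (100 * f.totalDegree ^ 3) (Nat.card K).sqrt with hq | hq
  · refine (LangWeil.abs_natCard_sub_pow_le_of_le_sqrt hirr hq).trans ?_
    gcongr ?_ * _ / _
    exact le_add_of_nonneg_right (by positivity)
  · refine (LangWeil.abs_natCard_sub_pow_le_of_sqrt_lt hq).trans ?_
    push_cast
    gcongr ?_ * _ / _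
    exact le_add_of_nonneg_left (by positivity)

/-- Lang–Weil estimate for absolutely irreducible affine hypersurfaces: for `n ≥ 2`, `d ≥ 1`
there is `C > 0` depending only on `n` and `d` such that for any finite field `K` with
`q = p^k` elements and any `f ∈ K[x₁,…,xₙ]` of total degree `d` that remains irreducible
over the algebraic closure of `K`, the number `N` of zeros of `f` in `K^n` satisfies
`|N − q^{n−1}| ≤ C·q^{n−1}/√q`. -/
theorem lang_weil_hypersurface (n d : ℕ) (hn : 2 ≤ n) (hd : 1 ≤ d) :
    ∃ C : ℝ, 0 < C ∧
      ∀ (p : ℕ) [Fact p.Prime], ∀ k : ℕ, 1 ≤ k →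
        ∀ f : MvPolynomial (Fin n) (GaloisField p k),
          f.totalDegree = d →
          Irreducible (MvPolynomial.map
            (algebraMap (GaloisField p k) (AlgebraicClosure (GaloisField p k))) f) →
          |(Nat.card {x : Fin n → GaloisField p k // MvPolynomial.eval x f = 0} : ℝ) -
              ((p : ℝ) ^ k) ^ (n - 1)| ≤
            C * ((p : ℝ) ^ k) ^ (n - 1) / Real.sqrt ((p : ℝ) ^ k) := by
  obtain ⟨m, rfl⟩ := Nat.exists_eq_add_of_le' (one_le_two.trans hn)
  refine ⟨53 * d ^ 3 + d * (2 ^ d * (2 * d ^ 2) + 2 * d ^ 2) + (100 * d ^ 3) ^ 4, by positivity,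
    fun p _ k hk f hfd hirr => ?_⟩
  simpa only [GaloisField.card p k (Nat.one_le_iff_ne_zero.1 hk), hfd, Nat.cast_pow,
    Nat.add_sub_cancel] using lang_weil_hypersurface_general hirr
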